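/- arXiv:1403.4231 — 3 statements merged into one kernel-verified Lean document; each statement's English description precedes it below -/
import Mathlib

section
/- Let R be a commutative ring, M an R-module, and Λ(M) its exterior algebra. Fix a finite index set I, linear functionals f_i ∈ M* (i ∈ I), and homogeneous degree-2 elements H^{ij} ∈ Λ(M) (i, j ∈ I). For homogeneous ξ, η ∈ Λ(M) define ξ ∧̂ η := (−1)^{|ξ|+1} Σ_{i,j ∈ I} H^{ij} ∧ ι_{f_i}(ξ) ∧ ι_{f_j}(η), where ι_f denotes left interior product (contraction) by f. Then for all homogeneous ξ, η, ζ ∈ Λ(M): (ξ ∧̂ η) ∧ ζ + (ξ ∧ η) ∧̂ ζ = ξ ∧ (η ∧̂ ζ) + ξ ∧̂ (η ∧ ζ). -/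
/-!
A contraction `ι_f` is a Hochschild 1-cocycle with values in `Λ(M)` twisted on the left by the
parity automorphism, and `ξ ↦ (-1)^{|ξ|+1} ι_f(ξ)` is one with the twist on the right. The summand
`(-1)^{|ξ|+1} ι_{f_i}(ξ) ∧ ι_{f_j}(η)` is their cup product, in which the two twists cancel, so it
is an untwisted 2-cocycle. Elements of even degree are central in `Λ(M)`, so multiplying by
`H^{ij}` and summing preserves the cocycle identity.
-/

namespace Stmt7

/-- The degree-`p` part of the exterior algebra, as the `p`-th power of the image of `M`. -/
def Gr (R M : Type) [CommRing R] [AddCommGroup M] [Module R M] (p : ℕ) :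
    Submodule R (ExteriorAlgebra R M) :=
  (LinearMap.range (ExteriorAlgebra.ι R : M →ₗ[R] ExteriorAlgebra R M)) ^ p

/-- The bilinear operation `ξ ∧̂ η = (−1)^{|ξ|+1} Σ_{i,j} H^{ij} ∧ ι_{f_i}(ξ) ∧ ι_{f_j}(η)`
(with `p = |ξ|` passed explicitly). -/
noncomputable def hatWedge {R M : Type} [CommRing R] [AddCommGroup M] [Module R M]
    {I : Type} [Fintype I]
    (ic : Module.Dual R M → ExteriorAlgebra R M → ExteriorAlgebra R M)
    (f : I → Module.Dual R M) (H : I → I → ExteriorAlgebra R M)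
    (p : ℕ) (ξ η : ExteriorAlgebra R M) : ExteriorAlgebra R M :=
  ((-1 : ℤ) ^ (p + 1)) • ∑ i : I, ∑ j : I, H i j * ic (f i) ξ * ic (f j) η

section EvenDegree

variable {R M : Type*} [CommRing R] [AddCommGroup M] [Module R M]

theorem ι_mul_ι_comm (a b : M) :
    ExteriorAlgebra.ι R a * ExteriorAlgebra.ι R b =
      -(ExteriorAlgebra.ι R b * ExteriorAlgebra.ι R a) :=
  eq_neg_of_add_eq_zero_left (ExteriorAlgebra.ι_add_mul_swap a b)

theorem ι_mul_ι_mem_center (a b : M) :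
    ExteriorAlgebra.ι R a * ExteriorAlgebra.ι R b ∈
      Subalgebra.center R (ExteriorAlgebra R M) := by
  refine Subalgebra.mem_center_iff.2 fun x => ?_
  induction x using ExteriorAlgebra.induction with
  | algebraMap r => exact Algebra.commutes r _
  | ι m =>
    rw [← mul_assoc, ι_mul_ι_comm m a, neg_mul, mul_assoc, ι_mul_ι_comm m b, mul_neg, neg_neg,
      mul_assoc]
  | mul y z hy hz => rw [mul_assoc, hz, ← mul_assoc, hy, mul_assoc]
  | add y z hy hz => rw [add_mul, mul_add, hy, hz]

theorem exteriorPower_two_le_center :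
    ⋀[R]^2 M ≤ Subalgebra.toSubmodule (Subalgebra.center R (ExteriorAlgebra R M)) := by
  rw [ExteriorAlgebra.exteriorPower, pow_two, Submodule.mul_le]
  rintro _ ⟨a, rfl⟩ _ ⟨b, rfl⟩
  exact ι_mul_ι_mem_center a b

theorem exteriorPower_le_center_of_even {n : ℕ} (hn : Even n) :
    ⋀[R]^n M ≤ Subalgebra.toSubmodule (Subalgebra.center R (ExteriorAlgebra R M)) := by
  obtain ⟨k, rfl⟩ := hn.two_dvd
  clear hn
  rw [ExteriorAlgebra.exteriorPower, pow_mul]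
  intro x hx
  induction hx using Submodule.pow_induction_on_left' with
  | algebraMap r => exact Subalgebra.algebraMap_mem _ r
  | add x y _ _ _ hx hy => exact add_mem hx hy
  | mem_mul m hm _ x _ hx => exact Subalgebra.mul_mem _ (exteriorPower_two_le_center hm) hx

end EvenDegree

section Cocycle

variable {A S I : Type*} [NonUnitalRing A] [SetLike S A] {𝒜 : ℕ → S}

/-- The graded Leibniz rule `D (x y) = D x y + (-1)^{|x|} x D y` for a map `D` of odd degree on a
ring with homogeneous parts `𝒜 p`, as a condition on a bare function. -/
def GradedLeibniz (𝒜 : ℕ → S) (D : A → A) : Prop :=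
  ∀ ⦃p : ℕ⦄ ⦃x : A⦄ (y : A), x ∈ 𝒜 p → D (x * y) = D x * y + ((-1 : ℤ) ^ p) • (x * D y)

/-- The Hochschild 2-cocycle identity for an operation `B` whose first argument is homogeneous:
`B p ξ η` stands for the value at `ξ` of degree `p`. -/
def IsHochschildCocycle (𝒜 : ℕ → S) (B : ℕ → A → A → A) : Prop :=
  ∀ ⦃p q : ℕ⦄ ⦃ξ η : A⦄ (ζ : A), ξ ∈ 𝒜 p → η ∈ 𝒜 q →
    B p ξ η * ζ + B (p + q) (ξ * η) ζ = ξ * B q η ζ + B p ξ (η * ζ)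

/-- The cup product `(-1)^{|ξ|+1} D ξ E η` of two maps satisfying the graded Leibniz rule, with
`p = |ξ|` passed explicitly. -/
def signedCup (D E : A → A) (p : ℕ) (ξ η : A) : A :=
  ((-1 : ℤ) ^ (p + 1)) • (D ξ * E η)

theorem GradedLeibniz.sign_smul_map_mul {D : A → A} (hD : GradedLeibniz 𝒜 D) {p : ℕ} {ξ : A}
    (hξ : ξ ∈ 𝒜 p) (q : ℕ) (η : A) :
    ((-1 : ℤ) ^ (p + q + 1)) • D (ξ * η) =
      ((-1 : ℤ) ^ (p + q + 1)) • (D ξ * η) + ((-1 : ℤ) ^ (q + 1)) • (ξ * D η) := by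
  have sign_eq : (-1 : ℤ) ^ (p + q + 1) * (-1) ^ p = (-1) ^ (q + 1) := by
    rw [add_assoc, pow_add, mul_right_comm, ← mul_pow, neg_one_mul, neg_neg, one_pow, one_mul]
  rw [hD η hξ, smul_add, smul_smul, sign_eq]

theorem GradedLeibniz.isHochschildCocycle_signedCup {D E : A → A} (hD : GradedLeibniz 𝒜 D)
    (hE : GradedLeibniz 𝒜 E) : IsHochschildCocycle 𝒜 (signedCup D E) := by
  intro p q ξ η ζ hξ hη
  have left_leibniz : signedCup D E (p + q) (ξ * η) ζ =
      ((-1 : ℤ) ^ (p + q + 1)) • (D ξ * η * E ζ) + ξ * signedCup D E q η ζ := by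
    rw [signedCup, ← smul_mul_assoc, hD.sign_smul_map_mul hξ, add_mul, smul_mul_assoc,
      smul_mul_assoc, signedCup, mul_smul_comm, mul_assoc ξ]
  have right_leibniz : signedCup D E p ξ (η * ζ) =
      signedCup D E p ξ η * ζ + ((-1 : ℤ) ^ (p + q + 1)) • (D ξ * η * E ζ) := by
    rw [signedCup, hE ζ hη, mul_add, smul_add, mul_smul_comm, smul_smul, ← pow_add,
      add_right_comm p 1 q, signedCup, smul_mul_assoc, mul_assoc, mul_assoc]
  rw [left_leibniz, right_leibniz]
  abel

theorem IsHochschildCocycle.center_mul {B : ℕ → A → A → A} (hB : IsHochschildCocycle 𝒜 B)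
    {z : A} (hz : z ∈ Set.center A) : IsHochschildCocycle 𝒜 fun p ξ η => z * B p ξ η := by
  intro p q ξ η ζ hξ hη
  have mul_left_comm_z (x : A) : ξ * (z * x) = z * (ξ * x) := by
    rw [← mul_assoc, ← (hz.comm ξ).eq, mul_assoc]
  simp only [mul_left_comm_z, mul_assoc, ← mul_add, hB ζ hξ hη]

theorem IsHochschildCocycle.sum {s : Finset I} {B : I → ℕ → A → A → A}
    (hB : ∀ i ∈ s, IsHochschildCocycle 𝒜 (B i)) :
    IsHochschildCocycle 𝒜 fun p ξ η => ∑ i ∈ s, B i p ξ η := by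
  intro p q ξ η ζ hξ hη
  simp only [Finset.sum_mul, Finset.mul_sum, ← Finset.sum_add_distrib]
  exact Finset.sum_congr rfl fun i hi => hB i hi ζ hξ hη

theorem statement_7_general [Fintype I] {D : I → A → A} (hD : ∀ i, GradedLeibniz 𝒜 (D i))
    {H : I → I → A} (hH : ∀ i j, H i j ∈ Set.center A) :
    IsHochschildCocycle 𝒜 fun p ξ η => ∑ i, ∑ j, H i j * signedCup (D i) (D j) p ξ η :=
  .sum fun i _ => .sum fun j _ => ((hD i).isHochschildCocycle_signedCup (hD j)).center_mul (hH i j)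

end Cocycle

theorem hatWedge_eq_sum_mul_signedCup {R M I : Type} [CommRing R] [AddCommGroup M] [Module R M]
    [Fintype I] (ic : Module.Dual R M → ExteriorAlgebra R M → ExteriorAlgebra R M)
    (f : I → Module.Dual R M) (H : I → I → ExteriorAlgebra R M) :
    hatWedge ic f H =
      fun p ξ η => ∑ i, ∑ j, H i j * signedCup (ic (f i)) (ic (f j)) p ξ η := by
  funext p ξ η
  simp only [hatWedge, signedCup, Finset.smul_sum, mul_smul_comm, mul_assoc]

/-- for degree-2 elements `H^{ij}` and interior products `ι_{f_i}` (graded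
derivations lowering degree by one), the operation `∧̂` satisfies the 'Hochschild cocycle'
identity `(ξ ∧̂ η) ∧ ζ + (ξ ∧ η) ∧̂ ζ = ξ ∧ (η ∧̂ ζ) + ξ ∧̂ (η ∧ ζ)` on homogeneous
elements. -/
theorem statement_7 (R M : Type) [CommRing R] [AddCommGroup M] [Module R M]
    (I : Type) [Fintype I] (f : I → Module.Dual R M)
    (ic : Module.Dual R M → ExteriorAlgebra R M → ExteriorAlgebra R M)
    (ic_add : ∀ g x y, ic g (x + y) = ic g x + ic g y)
    (ic_smul : ∀ g (r : R) x, ic g (r • x) = r • ic g x)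
    (ic_ι : ∀ g (m : M), ic g (ExteriorAlgebra.ι R m) = algebraMap R _ (g m))
    (ic_algebraMap : ∀ g (r : R), ic g (algebraMap R (ExteriorAlgebra R M) r) = 0)
    (ic_grade : ∀ g (p : ℕ) x, x ∈ Gr R M (p + 1) → ic g x ∈ Gr R M p)
    (ic_der : ∀ g (p : ℕ) x y, x ∈ Gr R M p →
      ic g (x * y) = ic g x * y + ((-1 : ℤ) ^ p) • (x * ic g y))
    (H : I → I → ExteriorAlgebra R M) (hH : ∀ i j, H i j ∈ Gr R M 2) :
    ∀ (p q r : ℕ) (ξ η ζ : ExteriorAlgebra R M),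
      ξ ∈ Gr R M p → η ∈ Gr R M q → ζ ∈ Gr R M r →
      hatWedge ic f H p ξ η * ζ + hatWedge ic f H (p + q) (ξ * η) ζ
        = ξ * hatWedge ic f H q η ζ + hatWedge ic f H p ξ (η * ζ) := by
  rw [hatWedge_eq_sum_mul_signedCup]
  exact fun _ _ _ _ _ ζ hξ hη _ => statement_7_general (fun i _ _ y => ic_der (f i) _ _ y)
    (fun i j => exteriorPower_le_center_of_even even_two (hH i j)) ζ hξ hη

end Stmt7
end

section
/- On an open set U ⊆ ℝⁿ, let ω^{ij} be a smooth antisymmetric bivector and Γ^i_{jk} smooth Christoffel symbols such that the pair (ω, ∇) is Poisson-compatible. Over ℝ[λ]/(λ²) define the product ξ ∧_Q η := ξ ∧ η + (λ/2) ω^{ij} ∇_i ξ ∧ ∇_j η on differential forms. Then for every homogeneous smooth p-form ξ and every smooth form η: d(ξ ∧_Q η) − (dξ) ∧_Q η − (−1)^p ξ ∧_Q (dη) = −λ H^{ji} ∧ (∂_i⌟ξ) ∧ ∇_j η + λ (−1)^p H^{ij} ∧ ∇_i ξ ∧ (∂_j⌟η), where H^{ij} := (1/4) ω^{is}(T^j_{nm;s}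 − 2 R^j_{nms}) dx^m ∧ dx^n. -/
namespace Stmt8

variable {n : ℕ}

/-- A point of the coordinate chart. -/
abbrev Pt (n : ℕ) := Fin n → ℝ

/-- The coefficient family of a differential form: a `p`-form is a family
`ξ_{a 0, …, a (p−1)}` of functions (only the first `p` index slots are used). -/
abbrev Form (n : ℕ) := (ℕ → Fin n) → Pt n → ℝ

/-- Partial derivative in the `i`-th coordinate direction. -/
noncomputable def pd (i : Fin n) (f : Pt n → ℝ) (x : Pt n) : ℝ :=
  fderiv ℝ f x (Pi.single i 1)

/-- Wedge product of a `p`-form and a `q`-form (coordinate formula). -/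
noncomputable def wedge (p q : ℕ) (ξ η : Form n) : Form n := fun a x =>
  ((p.factorial * q.factorial : ℕ) : ℝ)⁻¹ *
    ∑ σ : Equiv.Perm (Fin (p + q)),
      ((Equiv.Perm.sign σ : ℤ) : ℝ) *
        ξ (fun t => if h : t < p then a ((σ ⟨t, by omega⟩ : Fin (p + q)) : ℕ) else a t) x *
        η (fun t => if h : t < q then a ((σ ⟨p + t, by omega⟩ : Fin (p + q)) : ℕ) else a t) x

/-- Exterior derivative of a `p`-form:
`(dξ)_{a_0⋯a_p} = Σ_k (−1)^k ∂_{a_k} ξ_{a_0⋯(omit a_k)⋯a_p}`. -/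
noncomputable def extd (p : ℕ) (ξ : Form n) : Form n := fun a x =>
  ∑ k : Fin (p + 1),
    (-1 : ℝ) ^ (k : ℕ) *
      pd (a (k : ℕ)) (ξ (fun t => if t < (k : ℕ) then a t else a (t + 1))) x

/-- Interior product of a `p`-form with the `m`-th coordinate vector field
(zero on `0`-forms). -/
def intr (p : ℕ) (m : Fin n) (ξ : Form n) : Form n :=
  if p = 0 then (fun _ _ => 0)
  else fun a x => ξ (fun t => if t = 0 then m else a (t - 1)) x

/-- Interior product of a `p`-form with a vector field `v` (zero on `0`-forms). -/
noncomputable def iprod (p : ℕ) (v : Fin n → Pt n → ℝ) (ξ : Form n) : Form n :=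
  if p = 0 then (fun _ _ => 0)
  else fun a x => ∑ m, v m x * ξ (fun t => if t = 0 then m else a (t - 1)) x

/-- Covariant derivative of a `p`-form:
`(∇_i ξ)_{a_1⋯a_p} = ∂_i ξ_{a_1⋯a_p} − Σ_k Γ^m_{i a_k} ξ_{⋯ m ⋯}`. -/
noncomputable def nabla (Γ : Fin n → Fin n → Fin n → Pt n → ℝ) (i : Fin n) (p : ℕ)
    (ξ : Form n) : Form n := fun a x =>
  pd i (ξ a) x
    - ∑ k : Fin p, ∑ m, Γ m i (a (k : ℕ)) x * ξ (fun t => if t = (k : ℕ) then m else a t) x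

/-- Multiplication of a form by a scalar function. -/
def fmul (f : Pt n → ℝ) (ξ : Form n) : Form n := fun a x => f x * ξ a x

/-- `ξ` depends only on its first `p` index slots. -/
def DependsOn (p : ℕ) (ξ : Form n) : Prop :=
  ∀ a b : ℕ → Fin n, (∀ t, t < p → a t = b t) → ξ a = ξ b

/-- `ξ` is totally antisymmetric in its first `p` index slots. -/
def IsAnti (p : ℕ) (ξ : Form n) : Prop :=
  ∀ (a : ℕ → Fin n) (i j : ℕ), i < p → j < p → i ≠ j →
    ∀ x, ξ (fun t => a (Equiv.swap i j t)) x = - ξ a x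

/-- `ξ` has smooth coefficients on `U`. -/
def SmoothOn (U : Set (Pt n)) (ξ : Form n) : Prop :=
  ∀ a, ContDiffOn ℝ (⊤ : ℕ∞) (ξ a) U

/-- `ξ` is (the coefficient family of) a smooth `p`-form on `U`. -/
def IsPForm (U : Set (Pt n)) (p : ℕ) (ξ : Form n) : Prop :=
  DependsOn p ξ ∧ IsAnti p ξ ∧ SmoothOn U ξ

/-- Torsion `T^i_{jk} = Γ^i_{jk} - Γ^i_{kj}`. -/
def Tor (Γ : Fin n → Fin n → Fin n → Pt n → ℝ) (i j k : Fin n) (x : Pt n) : ℝ :=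
  Γ i j k x - Γ i k j x

/-- Curvature `R^l_{ijk} = ∂_j Γ^l_{ki} − ∂_k Γ^l_{ji} + Γ^m_{ki} Γ^l_{jm} − Γ^m_{ji} Γ^l_{km}`. -/
noncomputable def Rc (Γ : Fin n → Fin n → Fin n → Pt n → ℝ) (l i j k : Fin n)
    (x : Pt n) : ℝ :=
  pd j (Γ l k i) x - pd k (Γ l j i) x
    + ∑ m, Γ m k i x * Γ l j m x - ∑ m, Γ m j i x * Γ l k m x

/-- Covariant derivative of the torsion:
`T^j_{ab;s} = ∂_s T^j_{ab} + Γ^j_{sp} T^p_{ab} − Γ^p_{sa} T^j_{pb} − Γ^p_{sb} T^j_{ap}`. -/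
noncomputable def covT (Γ : Fin n → Fin n → Fin n → Pt n → ℝ) (j a b s : Fin n)
    (x : Pt n) : ℝ :=
  pd s (Tor Γ j a b) x + ∑ p, Γ j s p x * Tor Γ p a b x
    - ∑ p, Γ p s a x * Tor Γ j p b x - ∑ p, Γ p s b x * Tor Γ j a p x

/-- The pair `(ω, ∇)` is Poisson-compatible on `U`. -/
def PoissonCompat (U : Set (Pt n)) (ω : Fin n → Fin n → Pt n → ℝ)
    (Γ : Fin n → Fin n → Fin n → Pt n → ℝ) : Prop :=
  ∀ i j m, ∀ x ∈ U,
    pd m (ω i j) x + ∑ k, ω k j x * Γ i k m x + ∑ k, ω i k x * Γ j k m x = 0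

/-- The 2-form `H^{ij} = (1/4) ω^{is}(T^j_{nm;s} − 2 R^j_{nms}) dx^m ∧ dx^n`
(as a coefficient family, slots `(a 0, a 1) = (m, n)`). -/
noncomputable def Hform (ω : Fin n → Fin n → Pt n → ℝ)
    (Γ : Fin n → Fin n → Fin n → Pt n → ℝ) (i j : Fin n) : Form n := fun a x =>
  (1 / 4 : ℝ) * ∑ s, ω i s x *
    ((covT Γ j (a 1) (a 0) s x - 2 * Rc Γ j (a 1) (a 0) s x)
      - (covT Γ j (a 0) (a 1) s x - 2 * Rc Γ j (a 0) (a 1) s x))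

/-- The `λ`-correction term `(1/2) ω^{ij} ∇_i ξ ∧ ∇_j η` of the functorial product `∧_Q`. -/
noncomputable def Qcorr (ω : Fin n → Fin n → Pt n → ℝ)
    (Γ : Fin n → Fin n → Fin n → Pt n → ℝ) (p q : ℕ) (ξ η : Form n) : Form n :=
  (2⁻¹ : ℝ) • ∑ i, ∑ j, fmul (ω i j) (wedge p q (nabla Γ i p ξ) (nabla Γ j q η))

/-!
Fix a point `x`. A `p`-form is determined by its value there, an element of the exterior algebra of
`(ℝⁿ)*`, in which the `dx^k` anticommute and `∂_m⌟` is an antiderivation. Put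
`θ_i^m = Γ^m_{ia} dx^a`, so that `∇_i ξ = ∂_i ξ - θ_i^m ∧ (∂_m⌟ξ)`, and
`F_i^m = θ_i^k ∧ θ_k^m - dθ_i^m`. Since `d = dx^c ∧ ∂_c` and partial derivatives commute,
`d ∇_i ξ - ∇_i dξ = θ_i^k ∧ ∇_k ξ + F_i^m ∧ (∂_m⌟ξ)`.
Poisson compatibility says `dω^{ij} = -ω^{kj} θ_k^i - ω^{ik} θ_k^j`, hence in the Leibniz defect of
`½ ω^{ij} ∇_i ξ ∧ ∇_j η` all `θ`-terms cancel and only the `F`-terms remain. Finally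
`H^{ij} = ½ ω^{is} F_s^j`.
-/

section

open ExteriorAlgebra (ι ιMulti ιMulti_apply ιMulti_range ι_add_mul_swap liftAlternating
  liftAlternating_apply_ιMulti)
open scoped Matrix Topology

section ExteriorAlgebra

variable {R M : Type*} [CommRing R] [AddCommGroup M] [Module R M]

theorem ι_mul_ι_eq_neg (u v : M) : ι R u * ι R v = -(ι R v * ι R u) :=
  eq_neg_of_add_eq_zero_left (ι_add_mul_swap u v)

theorem commute_ι_mul_ι (u v : M) (X : ExteriorAlgebra R M) : Commute X (ι R u * ι R v) := by
  induction X using ExteriorAlgebra.induction with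
  | algebraMap r => exact Algebra.commutes r _
  | ι w =>
    rw [commute_iff_eq, ← mul_assoc, ι_mul_ι_eq_neg w u, neg_mul, mul_assoc, ι_mul_ι_eq_neg w v,
      mul_neg, neg_neg, mul_assoc]
  | mul X Y hX hY => exact hX.mul_left hY
  | add X Y hX hY => exact hX.add_left hY

theorem ι_mul_of_mem_exteriorPower {p : ℕ} {X : ExteriorAlgebra R M} (hX : X ∈ ⋀[R]^p M) (v : M) :
    ι R v * X = (-1 : R) ^ p • (X * ι R v) := by
  induction hX using Submodule.pow_induction_on_left' with
  | algebraMap r => rw [pow_zero, one_smul, Algebra.commutes]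
  | add X Y i _ _ hX hY => rw [mul_add, hX, hY, add_mul, smul_add]
  | mem_mul m hm i X _ hX =>
    obtain ⟨u, rfl⟩ := hm
    rw [← mul_assoc, ι_mul_ι_eq_neg v u, neg_mul, mul_assoc, hX, mul_smul_comm, ← mul_assoc,
      pow_succ', neg_one_mul, neg_smul]

end ExteriorAlgebra

section Coordinates

variable {R κ : Type*} [CommRing R]

/-- Contraction `∂_m⌟` with the `m`-th coordinate vector on the exterior algebra. -/
noncomputable def contract (m : κ) : ExteriorAlgebra R (κ → R) →ₗ[R] ExteriorAlgebra R (κ → R) :=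
  CliffordAlgebra.contractLeft (Q := (0 : QuadraticForm R (κ → R))) (LinearMap.proj m)

theorem contract_one (m : κ) : contract m (1 : ExteriorAlgebra R (κ → R)) = 0 :=
  CliffordAlgebra.contractLeft_one _ _

theorem contract_ι_mul (m : κ) (v : κ → R) (X : ExteriorAlgebra R (κ → R)) :
    contract m (ι R v * X) = v m • X - ι R v * contract m X :=
  CliffordAlgebra.contractLeft_ι_mul _ _ _

section Fintype

variable [Fintype κ]

/-- The derivation of the exterior algebra that extends the linear map `v ↦ v ᵥ* G` on one-forms,
written through contractions as `∑ₘ G_m ∧ (∂_m⌟ ·)` with `G_m` the `m`-th row of `G`. -/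
noncomputable def rowDerivation (G : Matrix κ κ R) :
    ExteriorAlgebra R (κ → R) →ₗ[R] ExteriorAlgebra R (κ → R) :=
  ∑ m, LinearMap.mulLeft R (ι R (G.row m)) ∘ₗ contract m

theorem rowDerivation_apply (G : Matrix κ κ R) (X : ExteriorAlgebra R (κ → R)) :
    rowDerivation G X = ∑ m, ι R (G.row m) * contract m X := by
  simp only [rowDerivation, LinearMap.sum_apply, LinearMap.comp_apply, LinearMap.mulLeft_apply]

theorem rowDerivation_ι_mul (G : Matrix κ κ R) (v : κ → R) (X : ExteriorAlgebra R (κ → R)) :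
    rowDerivation G (ι R v * X) = ι R (v ᵥ* G) * X + ι R v * rowDerivation G X := by
  have hv : ι R (v ᵥ* G) = ∑ m, v m • ι R (G.row m) := by
    rw [Matrix.vecMul_eq_sum, map_sum]
    exact Finset.sum_congr rfl fun m _ => map_smul _ _ _
  have hswap (m : κ) : ι R (G.row m) * (ι R v * contract m X) =
      -(ι R v * (ι R (G.row m) * contract m X)) := by
    rw [← mul_assoc, ι_mul_ι_eq_neg, neg_mul, mul_assoc]
  simp only [rowDerivation_apply, contract_ι_mul, mul_sub, hswap, sub_neg_eq_add, hv,
    Finset.sum_mul, Finset.mul_sum, Finset.sum_add_distrib, mul_smul_comm, smul_mul_assoc]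

end Fintype

/-- The component `X_{a 0 ⋯ a (p - 1)}` of the degree-`p` part of `X`, for every `p` at once. -/
noncomputable def coeff (a : ℕ → κ) : ExteriorAlgebra R (κ → R) →ₗ[R] R :=
  liftAlternating fun p =>
    Matrix.detRowAlternating.compLinearMap (LinearMap.funLeft R R fun k : Fin p => a k)

variable [DecidableEq κ]

/-- The coordinate one-form `dx^i`, in the exterior algebra of the coefficient space `κ → R`. -/
noncomputable def dx (i : κ) : ExteriorAlgebra R (κ → R) := ι R (Pi.single i 1)

/-- The monomial `dx^{b 0} ∧ ⋯ ∧ dx^{b (p - 1)}`; the tuple `b` need not be increasing. -/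
noncomputable def dxMulti {p : ℕ} (b : Fin p → κ) : ExteriorAlgebra R (κ → R) :=
  ιMulti R p fun k => Pi.single (b k) 1

theorem dxMulti_eq_prod {p : ℕ} (b : Fin p → κ) :
    (dxMulti b : ExteriorAlgebra R (κ → R)) = (List.ofFn fun k => dx (b k)).prod :=
  ιMulti_apply _

theorem dxMulti_zero (b : Fin 0 → κ) : (dxMulti b : ExteriorAlgebra R (κ → R)) = 1 := by
  rw [dxMulti_eq_prod, List.ofFn_zero, List.prod_nil]

theorem dxMulti_cons {p : ℕ} (c : κ) (b : Fin p → κ) :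
    (dxMulti (Fin.cons c b : Fin (p + 1) → κ) : ExteriorAlgebra R (κ → R)) =
      dx c * dxMulti b := by
  simp only [dxMulti_eq_prod, List.ofFn_succ, List.prod_cons, Fin.cons_zero, Fin.cons_succ]

theorem dxMulti_append {p q : ℕ} (b : Fin p → κ) (c : Fin q → κ) :
    (dxMulti (Fin.append b c) : ExteriorAlgebra R (κ → R)) = dxMulti b * dxMulti c := by
  have h : (fun k => dx (Fin.append b c k) : Fin (p + q) → ExteriorAlgebra R (κ → R)) =
      Fin.append (fun k => dx (b k)) fun k => dx (c k) := by
    funext k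
    refine Fin.addCases (fun i => ?_) (fun i => ?_) k <;> simp
  rw [dxMulti_eq_prod, h, List.ofFn_fin_append, List.prod_append, dxMulti_eq_prod,
    dxMulti_eq_prod]

theorem dxMulti_comp_perm {p : ℕ} (b : Fin p → κ) (σ : Equiv.Perm (Fin p)) :
    (dxMulti (b ∘ σ) : ExteriorAlgebra R (κ → R)) = ((σ.sign : ℤ) : R) • dxMulti b := by
  rw [Int.cast_smul_eq_zsmul]
  exact (ιMulti R p).map_perm (fun k => (Pi.single (b k) 1 : κ → R)) σ

theorem dxMulti_insertNth {p : ℕ} (k : Fin (p + 1)) (c : κ) (b : Fin p → κ) :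
    (dxMulti (k.insertNth c b : Fin (p + 1) → κ) : ExteriorAlgebra R (κ → R)) =
      (-1 : R) ^ (k : ℕ) • (dx c * dxMulti b) := by
  rw [← Fin.cons_comp_cycleRange, dxMulti_comp_perm, dxMulti_cons, Fin.sign_cycleRange]
  push_cast
  rfl

theorem dxMulti_mem_exteriorPower {p : ℕ} (b : Fin p → κ) :
    (dxMulti b : ExteriorAlgebra R (κ → R)) ∈ ⋀[R]^p (κ → R) :=
  ιMulti_range R p ⟨_, rfl⟩

theorem sign_cast_mul_self {p : ℕ} (σ : Equiv.Perm (Fin p)) :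
    ((σ.sign : ℤ) : R) * ((σ.sign : ℤ) : R) = 1 := by
  rw [← Int.cast_mul, Int.units_coe_mul_self, Int.cast_one]

theorem neg_one_pow_mul_self (p : ℕ) : (-1 : R) ^ p * (-1 : R) ^ p = 1 := by
  rw [← mul_pow, neg_one_mul, neg_neg, one_pow]

theorem coeff_dxMulti (a : ℕ → κ) {p : ℕ} (b : Fin p → κ) :
    coeff a (dxMulti b : ExteriorAlgebra R (κ → R)) =
      (Matrix.of fun i j : Fin p => (Pi.single (b i) 1 : κ → R) (a j)).det :=
  liftAlternating_apply_ιMulti _ _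

theorem coeff_dx_mul_dxMulti (a : ℕ → κ) (c : κ) {p : ℕ} (b : Fin p → κ) :
    coeff a (dx c * dxMulti b : ExteriorAlgebra R (κ → R)) =
      ∑ k : Fin (p + 1), (-1 : R) ^ (k : ℕ) * (if a k = c then 1 else 0) *
        coeff (fun t => if t < (k : ℕ) then a t else a (t + 1))
          (dxMulti b : ExteriorAlgebra R (κ → R)) := by
  rw [← dxMulti_cons, coeff_dxMulti, Matrix.det_succ_row_zero]
  refine Finset.sum_congr rfl fun k _ => ?_
  rw [Matrix.of_apply, Fin.cons_zero, Pi.single_apply, coeff_dxMulti]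
  congr 2
  ext i j
  rw [Matrix.submatrix_apply, Matrix.of_apply, Matrix.of_apply, Fin.cons_succ]
  congr 1
  simp only [Fin.succAbove, Fin.lt_def, Fin.val_castSucc]
  split_ifs <;> rfl

theorem contract_dx_mul (m c : κ) (X : ExteriorAlgebra R (κ → R)) :
    contract m (dx c * X) = (if c = m then 1 else 0 : R) • X - dx c * contract m X := by
  rw [dx, contract_ι_mul, Pi.single_apply]
  simp only [eq_comm]

theorem contract_dxMulti (m : κ) {p : ℕ} (b : Fin (p + 1) → κ) :
    contract m (dxMulti b : ExteriorAlgebra R (κ → R)) =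
      ∑ k : Fin (p + 1), ((-1 : R) ^ (k : ℕ) * if b k = m then 1 else 0) •
        dxMulti (k.removeNth b) := by
  induction p with
  | zero =>
    obtain ⟨c, b, rfl⟩ : ∃ c b', b = Fin.cons c b' :=
      ⟨b 0, Fin.tail b, (Fin.cons_self_tail b).symm⟩
    rw [dxMulti_cons, contract_dx_mul, dxMulti_zero, contract_one, mul_zero, sub_zero,
      Fin.sum_univ_one, Fin.val_zero, pow_zero, one_mul, dxMulti_zero, Fin.cons_zero]
  | succ p ih =>
    obtain ⟨c, b, rfl⟩ : ∃ c b', b = Fin.cons c b' :=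
      ⟨b 0, Fin.tail b, (Fin.cons_self_tail b).symm⟩
    have hremove (k : Fin (p + 1)) :
        k.succ.removeNth (Fin.cons c b : Fin (p + 2) → κ) = Fin.cons c (k.removeNth b) :=
      Fin.cons_comp_succ_succAbove c b k
    simp only [contract_dx_mul, Fin.sum_univ_succ (n := p + 1), ih, hremove, dxMulti_cons,
      Fin.cons_zero, Fin.cons_succ, Fin.val_zero, Fin.val_succ, pow_zero, one_mul, pow_succ',
      neg_mul, neg_smul, Finset.mul_sum, mul_smul_comm, Finset.sum_neg_distrib, sub_eq_add_neg,
      Fin.removeNth_zero, Fin.tail_cons]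

variable [Fintype κ]

theorem sum_smul_dx (g : κ → R) : ∑ a, g a • (dx a : ExteriorAlgebra R (κ → R)) = ι R g := by
  conv_rhs => rw [pi_eq_sum_univ' g]
  simp only [map_sum, map_smul, dx]

theorem sum_sub_swap_smul_dx_mul_dx (h : κ → κ → R) :
    ∑ a, ∑ b, (h a b - h b a) • (dx a * dx b : ExteriorAlgebra R (κ → R)) =
      (2 : R) • ∑ a, ∑ b, h a b • (dx a * dx b) := by
  have hswap : ∑ a, ∑ b, h b a • (dx a * dx b : ExteriorAlgebra R (κ → R)) =
      -∑ a, ∑ b, h a b • (dx a * dx b) := by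
    rw [Finset.sum_comm]
    simp only [← Finset.sum_neg_distrib]
    refine Finset.sum_congr rfl fun a _ => Finset.sum_congr rfl fun b _ => ?_
    rw [dx, dx, ι_mul_ι_eq_neg, smul_neg]
  simp only [sub_smul, Finset.sum_sub_distrib]
  rw [hswap, sub_neg_eq_add, two_smul]

theorem sum_smul_dxMulti_comp_perm {p : ℕ} (f : (Fin p → κ) → R) (σ : Equiv.Perm (Fin p)) :
    ∑ b, f (b ∘ σ) • (dxMulti b : ExteriorAlgebra R (κ → R)) =
      ((σ.sign : ℤ) : R) • ∑ b, f b • dxMulti b := by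
  rw [← (σ.symm.arrowCongr (Equiv.refl κ)).sum_comp fun b => f b • dxMulti b, Finset.smul_sum]
  refine Finset.sum_congr rfl fun b _ => ?_
  change _ = ((σ.sign : ℤ) : R) • f (b ∘ σ) • dxMulti (b ∘ σ)
  rw [dxMulti_comp_perm, smul_comm (f _), smul_smul, sign_cast_mul_self, one_smul]

theorem sum_smul_dxMulti_mul {p q : ℕ} (f : (Fin p → κ) → R) (g : (Fin q → κ) → R) :
    (∑ b, f b • (dxMulti b : ExteriorAlgebra R (κ → R))) * ∑ c, g c • dxMulti c =
      ∑ d : Fin (p + q) → κ, (f (d ∘ Fin.castAdd q) * g (d ∘ Fin.natAdd p)) • dxMulti d := by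
  rw [← (Fin.appendEquiv p q).sum_comp, Fintype.sum_prod_type, Finset.sum_mul_sum]
  refine Finset.sum_congr rfl fun b _ => Finset.sum_congr rfl fun c _ => ?_
  change _ = (f (Fin.append b c ∘ _) * g (Fin.append b c ∘ _)) • dxMulti (Fin.append b c)
  rw [dxMulti_append, smul_mul_smul_comm]
  congr 3 <;> funext k <;> simp

theorem sum_smul_dxMulti_succ {p : ℕ} (k : Fin (p + 1)) (f : (Fin (p + 1) → κ) → R) :
    ∑ b, f b • (dxMulti b : ExteriorAlgebra R (κ → R)) =
      (-1 : R) ^ (k : ℕ) • ∑ c, dx c * ∑ b, f (k.insertNth c b) • dxMulti b := by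
  rw [← (Fin.insertNthEquiv (fun _ => κ) k).sum_comp, Fintype.sum_prod_type]
  simp only [Finset.smul_sum, Finset.mul_sum]
  refine Finset.sum_congr rfl fun c _ => Finset.sum_congr rfl fun b _ => ?_
  change f (k.insertNth c b) • dxMulti (k.insertNth c b) = _
  rw [dxMulti_insertNth, mul_smul_comm, smul_comm]

theorem rowDerivation_dx_mul (G : Matrix κ κ R) (c : κ) (X : ExteriorAlgebra R (κ → R)) :
    rowDerivation G (dx c * X) = ι R (G.row c) * X + dx c * rowDerivation G X := by
  rw [dx, rowDerivation_ι_mul, Matrix.single_one_vecMul]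

theorem rowDerivation_dxMulti (G : Matrix κ κ R) {p : ℕ} (b : Fin p → κ) :
    rowDerivation G (dxMulti b) = ∑ k, ∑ a, G (b k) a • dxMulti (Function.update b k a) := by
  induction p with
  | zero => simp only [dxMulti_zero, rowDerivation_apply, contract_one, mul_zero,
      Finset.sum_const_zero, Finset.univ_eq_empty, Finset.sum_empty]
  | succ p ih =>
    obtain ⟨c, b, rfl⟩ : ∃ c b', b = Fin.cons c b' := ⟨b 0, Fin.tail b, (Fin.cons_self_tail b).symm⟩
    rw [dxMulti_cons, rowDerivation_dx_mul, ih, Fin.sum_univ_succ]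
    congr 1
    · simp only [Fin.cons_zero, Fin.update_cons_zero, dxMulti_cons, ← smul_mul_assoc,
        ← Finset.sum_mul, sum_smul_dx]
      rfl
    · simp only [Fin.cons_succ, ← Fin.cons_update, dxMulti_cons, Finset.mul_sum, mul_smul_comm]

theorem sum_smul_rowDerivation_dxMulti (G : Matrix κ κ R) {p : ℕ} (f : (Fin p → κ) → R) :
    rowDerivation G (∑ b, f b • dxMulti b) =
      ∑ b, (∑ k, ∑ m, G m (b k) * f (Function.update b k m)) • dxMulti b := by
  simp only [map_sum, map_smul, rowDerivation_dxMulti, Finset.smul_sum, Finset.sum_smul, smul_smul]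
  rw [Finset.sum_comm]
  conv_rhs => rw [Finset.sum_comm]
  refine Finset.sum_congr rfl fun k _ => ?_
  -- exchange the value of `b` in slot `k` with the summation index `m`
  let e : (Fin p → κ) × κ → (Fin p → κ) × κ := fun bm => (Function.update bm.1 k bm.2, bm.1 k)
  have he : Function.Involutive e := fun bm => by simp [e]
  rw [← Fintype.sum_prod_type', ← Fintype.sum_prod_type']
  refine Fintype.sum_equiv he.toPerm _ _ fun bm => ?_
  simp [e, mul_comm]

theorem coeff_sum_smul_dxMulti (a : ℕ → κ) {p : ℕ} (f : (Fin p → κ) → R) :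
    coeff a (∑ b, f b • (dxMulti b : ExteriorAlgebra R (κ → R))) =
      ∑ σ : Equiv.Perm (Fin p), ((σ.sign : ℤ) : R) * f fun k => a (σ k) := by
  have hcoeff (b : Fin p → κ) : coeff a (dxMulti b : ExteriorAlgebra R (κ → R)) =
      ∑ σ : Equiv.Perm (Fin p), ((σ.sign : ℤ) : R) * if b = fun k => a (σ k) then 1 else 0 := by
    rw [coeff_dxMulti, ← Matrix.det_transpose, Matrix.det_apply']
    simp only [Matrix.transpose_apply, Matrix.of_apply, Pi.single_apply, Finset.prod_ite_zero,
      Finset.prod_const_one, funext_iff, Finset.mem_univ, true_imp_iff, eq_comm]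
  simp only [map_sum, map_smul, hcoeff, smul_eq_mul, Finset.mul_sum]
  rw [Finset.sum_comm]
  refine Finset.sum_congr rfl fun σ _ => ?_
  simp only [mul_ite, mul_one, mul_zero, Finset.sum_ite_eq', Finset.mem_univ, if_true]
  exact mul_comm _ _

theorem contract_sum_smul_dxMulti (m : κ) {p : ℕ} (f : (Fin (p + 1) → κ) → R) :
    contract m (∑ b, f b • dxMulti b) =
      ∑ k : Fin (p + 1), (-1 : R) ^ (k : ℕ) •
        ∑ b : Fin p → κ, f (k.insertNth m b) • (dxMulti b : ExteriorAlgebra R (κ → R)) := by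
  simp only [map_sum, map_smul, contract_dxMulti, Finset.smul_sum, smul_smul]
  rw [Finset.sum_comm]
  refine Finset.sum_congr rfl fun k _ => ?_
  rw [← (Fin.insertNthEquiv (fun _ => κ) k).sum_comp, Fintype.sum_prod_type_right]
  refine Finset.sum_congr rfl fun b _ => ?_
  simp only [Fin.insertNthEquiv, Equiv.coe_fn_mk, Fin.insertNth_apply_same,
    Fin.removeNth_insertNth, mul_ite, mul_one, mul_zero, ite_smul, zero_smul, Finset.sum_ite_eq',
    Finset.mem_univ, if_true]
  rw [mul_comm]

end Coordinates

section PartialDerivatives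

variable {x : Pt n} {f g : Pt n → ℝ}

theorem pd_sub (i : Fin n) (hf : DifferentiableAt ℝ f x) (hg : DifferentiableAt ℝ g x) :
    pd i (fun y => f y - g y) x = pd i f x - pd i g x := by
  rw [pd, fderiv_fun_sub hf hg]
  rfl

theorem pd_mul (i : Fin n) (hf : DifferentiableAt ℝ f x) (hg : DifferentiableAt ℝ g x) :
    pd i (fun y => f y * g y) x = pd i f x * g x + f x * pd i g x := by
  rw [pd, fderiv_fun_mul hf hg, add_comm, mul_comm (pd i f x)]
  rfl

theorem pd_const_mul (i : Fin n) (c : ℝ) (hf : DifferentiableAt ℝ f x) :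
    pd i (fun y => c * f y) x = c * pd i f x := by
  rw [pd, fderiv_const_mul hf]
  rfl

theorem pd_sum {α : Type*} (i : Fin n) (s : Finset α) {F : α → Pt n → ℝ}
    (hF : ∀ k ∈ s, DifferentiableAt ℝ (F k) x) :
    pd i (fun y => ∑ k ∈ s, F k y) x = ∑ k ∈ s, pd i (F k) x := by
  rw [pd, fderiv_fun_sum hF, sum_apply]
  rfl

theorem differentiableAt_pd (i : Fin n) (hf : ContDiffAt ℝ 2 f x) :
    DifferentiableAt ℝ (pd i f) x :=
  ((hf.fderiv_right (m := 1) (by norm_num)).differentiableAt one_ne_zero).clm_apply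
    (differentiableAt_const _)

theorem pd_comm (i j : Fin n) (hf : ContDiffAt ℝ 2 f x) : pd i (pd j f) x = pd j (pd i f) x := by
  have hdf : DifferentiableAt ℝ (fderiv ℝ f) x :=
    (hf.fderiv_right (m := 1) (by norm_num)).differentiableAt one_ne_zero
  have hpd (k l : Fin n) : pd k (pd l f) x =
      fderiv ℝ (fderiv ℝ f) x (Pi.single k 1) (Pi.single l 1) := by
    change fderiv ℝ (fun y => fderiv ℝ f y (Pi.single l 1)) x _ = _
    rw [fderiv_clm_apply hdf (differentiableAt_const _)]
    simp
  rw [hpd, hpd]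
  exact hf.isSymmSndFDerivAt (by rw [minSmoothness_of_isRCLikeNormedField]) _ _

end PartialDerivatives

section Forms

variable {p q : ℕ} {ξ η : Form n} {x : Pt n}

/-- The form `∂_k ξ` obtained by differentiating every component of `ξ`. -/
noncomputable def pdForm (k : Fin n) (ξ : Form n) : Form n := fun a => pd k (ξ a)

/-- The action on a `p`-form of a matrix `G` of functions, one slot at a time:
`Σ_k G_{m a_k} ξ_{⋯ m ⋯}`; `nabla` subtracts it with `G_{m a} = Γ^m_{i a}`. -/
def slotAct (G : Fin n → Fin n → Pt n → ℝ) (p : ℕ) (ξ : Form n) : Form n := fun a x =>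
  ∑ k : Fin p, ∑ m, G m (a k) x * ξ (fun t => if t = (k : ℕ) then m else a t) x

theorem nabla_eq_sub (Γ : Fin n → Fin n → Fin n → Pt n → ℝ) (i : Fin n) (p : ℕ) (ξ : Form n) :
    nabla Γ i p ξ = pdForm i ξ - slotAct (fun m a => Γ m i a) p ξ :=
  rfl

namespace DependsOn

theorem congr_fin (hξ : DependsOn p ξ) {a b : ℕ → Fin n} (h : ∀ k : Fin p, a k = b k) :
    ξ a = ξ b :=
  hξ a b fun t ht => h ⟨t, ht⟩

theorem pdForm (hξ : DependsOn p ξ) (k : Fin n) : DependsOn p (pdForm k ξ) := fun a b h =>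
  congrArg (pd k) (hξ a b h)

theorem fmul (hξ : DependsOn p ξ) (f : Pt n → ℝ) : DependsOn p (fmul f ξ) := fun a b h => by
  funext x
  rw [Stmt8.fmul, Stmt8.fmul, hξ a b h]

theorem slotAct (hξ : DependsOn p ξ) (G : Fin n → Fin n → Pt n → ℝ) :
    DependsOn p (slotAct G p ξ) := fun a b h => by
  funext x
  refine Finset.sum_congr rfl fun k _ => Finset.sum_congr rfl fun m _ => ?_
  rw [h k k.isLt, hξ _ (fun t => if t = (k : ℕ) then m else b t) fun t ht => by rw [h t ht]]

theorem nabla (hξ : DependsOn p ξ) (Γ : Fin n → Fin n → Fin n → Pt n → ℝ) (i : Fin n) :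
    DependsOn p (nabla Γ i p ξ) := fun a b h => by
  rw [nabla_eq_sub, Pi.sub_apply, hξ.pdForm i a b h, hξ.slotAct _ a b h, Pi.sub_apply]

theorem extd (hξ : DependsOn p ξ) : DependsOn (p + 1) (extd p ξ) := fun a b h => by
  funext x
  refine Finset.sum_congr rfl fun k _ => ?_
  rw [h k k.isLt, hξ _ (fun t => if t < (k : ℕ) then b t else b (t + 1)) fun t ht => by
    rw [h t (by omega), h (t + 1) (by omega)]]

theorem intr (hξ : DependsOn p ξ) (m : Fin n) : DependsOn (p - 1) (intr p m ξ) := fun a b h => by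
  obtain _ | p := p
  · rfl
  · refine hξ _ _ fun t ht => ?_
    obtain _ | t := t
    · rfl
    · exact h t (by omega)

theorem wedge (hξ : DependsOn p ξ) (hη : DependsOn q η) : DependsOn (p + q) (wedge p q ξ η) :=
  fun a b h => by
    funext x
    simp only [Stmt8.wedge]
    congr! 3 with σ
    · congr 1
      exact congrFun (hξ.congr_fin fun k => by simp [h]) x
    · exact congrFun (hη.congr_fin fun k => by simp [h]) x

end DependsOn

theorem dependsOn_Hform (ω : Fin n → Fin n → Pt n → ℝ) (Γ : Fin n → Fin n → Fin n → Pt n → ℝ)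
    (i j : Fin n) : DependsOn 2 (Hform ω Γ i j) := fun a b h => by
  funext x
  simp only [Hform, h 0 two_pos, h 1 one_lt_two]

namespace IsAnti

theorem pdForm (hξ : IsAnti p ξ) (k : Fin n) : IsAnti p (pdForm k ξ) :=
  fun a i j hi hj hij x => by
    have h : ξ (fun t => a (Equiv.swap i j t)) = -ξ a := funext (hξ a i j hi hj hij)
    rw [Stmt8.pdForm, Stmt8.pdForm, h, pd, fderiv_neg]
    rfl

theorem fmul (hξ : IsAnti p ξ) (f : Pt n → ℝ) : IsAnti p (fmul f ξ) :=
  fun a i j hi hj hij x => by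
    rw [Stmt8.fmul, hξ a i j hi hj hij x, mul_neg, Stmt8.fmul]

end IsAnti

theorem SmoothOn.contDiffAt {U : Set (Pt n)} (hξ : SmoothOn U ξ) (hU : U ∈ 𝓝 x)
    (a : ℕ → Fin n) : ContDiffAt ℝ 2 (ξ a) x :=
  ((hξ a).contDiffAt hU).of_le (WithTop.coe_le_coe.mpr le_top)

theorem differentiableAt_slotAct {G : Fin n → Fin n → Pt n → ℝ}
    (hG : ∀ m a, DifferentiableAt ℝ (G m a) x) (hξ : ∀ a, DifferentiableAt ℝ (ξ a) x)
    (a : ℕ → Fin n) : DifferentiableAt ℝ (slotAct G p ξ a) x :=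
  DifferentiableAt.fun_sum fun _ _ => DifferentiableAt.fun_sum fun _ _ => (hG _ _).mul (hξ _)

theorem differentiableAt_nabla {Γ : Fin n → Fin n → Fin n → Pt n → ℝ}
    (hΓ : ∀ i j k, DifferentiableAt ℝ (Γ i j k) x) (hξ : ∀ a, ContDiffAt ℝ 2 (ξ a) x)
    (i : Fin n) (a : ℕ → Fin n) : DifferentiableAt ℝ (nabla Γ i p ξ a) x :=
  (differentiableAt_pd i (hξ a)).sub (differentiableAt_slotAct (fun m b => hΓ m i b)
    (fun b => (hξ b).differentiableAt two_ne_zero) a)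

theorem differentiableAt_wedge (hξ : ∀ a, DifferentiableAt ℝ (ξ a) x)
    (hη : ∀ a, DifferentiableAt ℝ (η a) x) (a : ℕ → Fin n) :
    DifferentiableAt ℝ (wedge p q ξ η a) x :=
  (DifferentiableAt.fun_sum fun _ _ => ((hξ _).const_mul _).mul (hη _)).const_mul _

theorem pdForm_slotAct {G : Fin n → Fin n → Pt n → ℝ}
    (hG : ∀ m a, DifferentiableAt ℝ (G m a) x) (hξ : ∀ a, DifferentiableAt ℝ (ξ a) x)
    (k : Fin n) (a : ℕ → Fin n) :
    pdForm k (slotAct G p ξ) a x =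
      slotAct (fun m b => pd k (G m b)) p ξ a x + slotAct G p (pdForm k ξ) a x := by
  have hprod (l : Fin p) (m : Fin n) : DifferentiableAt ℝ
      (fun y => G m (a l) y * ξ (fun t => if t = (l : ℕ) then m else a t) y) x :=
    (hG _ _).mul (hξ _)
  simp only [pdForm, slotAct, ← Finset.sum_add_distrib]
  unfold slotAct
  rw [pd_sum _ _ fun l _ => DifferentiableAt.fun_sum fun m _ => hprod l m]
  refine Finset.sum_congr rfl fun l _ => ?_
  rw [pd_sum _ _ fun m _ => hprod l m]
  exact Finset.sum_congr rfl fun m _ => pd_mul k (hG _ _) (hξ _)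

theorem pdForm_extd (hξ : ∀ a, ContDiffAt ℝ 2 (ξ a) x) (i : Fin n) (a : ℕ → Fin n) :
    pdForm i (extd p ξ) a x = extd p (pdForm i ξ) a x := by
  simp only [pdForm, extd]
  unfold extd
  rw [pd_sum _ _ fun _ _ => (differentiableAt_pd _ (hξ _)).const_mul _]
  refine Finset.sum_congr rfl fun k _ => ?_
  rw [pd_const_mul _ _ (differentiableAt_pd _ (hξ _)), pd_comm _ _ (hξ _)]

theorem pdForm_wedge (hξ : ∀ a, DifferentiableAt ℝ (ξ a) x)
    (hη : ∀ a, DifferentiableAt ℝ (η a) x) (k : Fin n) (a : ℕ → Fin n) :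
    pdForm k (wedge p q ξ η) a x =
      wedge p q (pdForm k ξ) η a x + wedge p q ξ (pdForm k η) a x := by
  have hprod (c : ℝ) (b d : ℕ → Fin n) : DifferentiableAt ℝ (fun y => c * ξ b y * η d y) x :=
    ((hξ b).const_mul c).mul (hη d)
  simp only [pdForm]
  unfold wedge
  rw [pd_const_mul _ _ (DifferentiableAt.fun_sum fun σ _ => hprod _ _ _),
    pd_sum _ _ fun σ _ => hprod _ _ _, ← mul_add, ← Finset.sum_add_distrib]
  congr! 2 with σ
  rw [pd_mul _ ((hξ _).const_mul _) (hη _), pd_const_mul _ _ (hξ _)]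
  rfl

theorem extd_const_smul (c : ℝ) (hξ : ∀ a, DifferentiableAt ℝ (ξ a) x) (a : ℕ → Fin n) :
    extd p (c • ξ) a x = c * extd p ξ a x := by
  rw [extd, extd, Finset.mul_sum]
  refine Finset.sum_congr rfl fun k _ => ?_
  rw [← mul_left_comm, ← pd_const_mul _ _ (hξ _)]
  rfl

theorem extd_sum {α : Type*} (s : Finset α) {F : α → Form n}
    (hF : ∀ k ∈ s, ∀ a, DifferentiableAt ℝ (F k a) x) (a : ℕ → Fin n) :
    extd p (∑ k ∈ s, F k) a x = ∑ k ∈ s, extd p (F k) a x := by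
  have hsum (b : ℕ → Fin n) : (∑ k ∈ s, F k) b = fun y => ∑ k ∈ s, F k b y := by
    funext y
    simp only [Finset.sum_apply]
  simp only [extd, hsum]
  rw [Finset.sum_comm]
  refine Finset.sum_congr rfl fun l _ => ?_
  rw [pd_sum _ _ fun k hk => hF k hk _, Finset.mul_sum]

end Forms

section ToExterior

variable [NeZero n] {p q : ℕ} {ξ η : Form n} {x : Pt n}

/-- The index family `ℕ → Fin n` that continues the tuple `b` by zeros, at which a form can be
evaluated. -/
noncomputable def extendTuple (b : Fin p → Fin n) : ℕ → Fin n := Function.extend Fin.val b 0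

theorem extendTuple_val (b : Fin p → Fin n) (k : Fin p) : extendTuple b k = b k :=
  Fin.val_injective.extend_apply b 0 k

theorem DependsOn.extendTuple_eq (hξ : DependsOn p ξ) (a : ℕ → Fin n) :
    ξ (extendTuple fun k : Fin p => a k) = ξ a :=
  hξ.congr_fin (extendTuple_val _)

theorem wedge_apply_of_dependsOn (hξ : DependsOn p ξ) (hη : DependsOn q η) (a : ℕ → Fin n)
    (x : Pt n) : wedge p q ξ η a x = ((p.factorial * q.factorial : ℕ) : ℝ)⁻¹ *
      ∑ σ : Equiv.Perm (Fin (p + q)), ((σ.sign : ℤ) : ℝ) *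
        (ξ (extendTuple fun k => a (σ (Fin.castAdd q k))) x *
          η (extendTuple fun k => a (σ (Fin.natAdd p k))) x) := by
  simp only [wedge, mul_assoc]
  refine congrArg _ (Finset.sum_congr rfl fun σ _ => ?_)
  congr 2
  · refine congrFun (hξ.congr_fin fun k => ?_) x
    rw [extendTuple_val, dif_pos k.isLt]
    rfl
  · refine congrFun (hη.congr_fin fun k => ?_) x
    rw [extendTuple_val, dif_pos k.isLt]
    rfl

theorem isAnti_wedge (hξ : DependsOn p ξ) (hη : DependsOn q η) :
    IsAnti (p + q) (wedge p q ξ η) := fun a i j hi hj hij x => by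
  let τ : Equiv.Perm (Fin (p + q)) := Equiv.swap ⟨i, hi⟩ ⟨j, hj⟩
  have hswap (k : Fin (p + q)) : Equiv.swap i j k = τ k :=
    Fin.val_injective.swap_apply ⟨i, hi⟩ ⟨j, hj⟩ k
  have hsign : τ.sign = -1 := Equiv.Perm.sign_swap fun h => hij (congrArg Fin.val h)
  rw [wedge_apply_of_dependsOn hξ hη, wedge_apply_of_dependsOn hξ hη, ← mul_neg,
    ← Finset.sum_neg_distrib]
  congr 1
  refine Fintype.sum_equiv (Equiv.mulLeft τ) _ _ fun σ => ?_
  simp only [hswap, Equiv.coe_mulLeft, Equiv.Perm.sign_mul, hsign, Equiv.Perm.mul_apply,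
    Units.val_neg, Int.cast_neg, neg_mul, neg_neg, one_mul]

theorem IsAnti.apply_comp_perm (hanti : IsAnti p ξ) (hξ : DependsOn p ξ) (b : Fin p → Fin n)
    (σ : Equiv.Perm (Fin p)) (x : Pt n) :
    ξ (extendTuple (b ∘ σ)) x = ((σ.sign : ℤ) : ℝ) * ξ (extendTuple b) x := by
  induction σ using Equiv.Perm.swap_induction_on generalizing b with
  | one => simp
  | swap_mul f i j hij ih =>
    have hswap : ξ (extendTuple (b ∘ Equiv.swap i j)) =
        ξ fun t => extendTuple b (Equiv.swap (i : ℕ) j t) := hξ.congr_fin fun k => by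
      rw [extendTuple_val, Fin.val_injective.swap_apply, extendTuple_val, Function.comp_apply]
    rw [Equiv.Perm.coe_mul, ← Function.comp_assoc, ih, hswap,
      hanti _ i j i.isLt j.isLt (Fin.val_injective.ne hij), Equiv.Perm.sign_mul,
      Equiv.Perm.sign_swap hij]
    push_cast
    ring

/-- The element of the exterior algebra representing the value at `x` of the `p`-form `ξ`:
`(1/p!) Σ ξ_{b_1⋯b_p}(x) dx^{b_1} ∧ ⋯ ∧ dx^{b_p}`. -/
noncomputable def toExterior (p : ℕ) (x : Pt n) :
    Form n →ₗ[ℝ] ExteriorAlgebra ℝ (Fin n → ℝ) :=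
  (p.factorial : ℝ)⁻¹ • ∑ b : Fin p → Fin n,
    ((LinearMap.proj x : (Pt n → ℝ) →ₗ[ℝ] ℝ) ∘ₗ
      LinearMap.proj (φ := fun _ => Pt n → ℝ) (extendTuple b)).smulRight (dxMulti b)

theorem toExterior_apply (p : ℕ) (x : Pt n) (ξ : Form n) :
    toExterior p x ξ = (p.factorial : ℝ)⁻¹ • ∑ b : Fin p → Fin n,
      ξ (extendTuple b) x • dxMulti b := by
  simp only [toExterior, LinearMap.smul_apply, LinearMap.sum_apply, LinearMap.smulRight_apply,
    LinearMap.comp_apply, LinearMap.proj_apply]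

theorem toExterior_congr (h : ∀ a, ξ a x = η a x) : toExterior p x ξ = toExterior p x η := by
  simp only [toExterior_apply, h]

theorem toExterior_mem_exteriorPower (p : ℕ) (x : Pt n) (ξ : Form n) :
    toExterior p x ξ ∈ ⋀[ℝ]^p (Fin n → ℝ) := by
  rw [toExterior_apply]
  exact Submodule.smul_mem _ _
    (Submodule.sum_mem _ fun b _ => Submodule.smul_mem _ _ (dxMulti_mem_exteriorPower b))

theorem wedge_apply_eq_coeff (hξ : DependsOn p ξ) (hη : DependsOn q η) (a : ℕ → Fin n)
    (x : Pt n) : wedge p q ξ η a x = coeff a (toExterior p x ξ * toExterior q x η) := by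
  rw [wedge_apply_of_dependsOn hξ hη, toExterior_apply, toExterior_apply, smul_mul_smul_comm,
    sum_smul_dxMulti_mul, map_smul, coeff_sum_smul_dxMulti, Nat.cast_mul, mul_inv, smul_eq_mul]
  rfl

theorem toExterior_wedge (hξ : DependsOn p ξ) (hη : DependsOn q η) :
    toExterior (p + q) x (wedge p q ξ η) = toExterior p x ξ * toExterior q x η := by
  set c : ℝ := (p.factorial : ℝ)⁻¹ * (q.factorial : ℝ)⁻¹ with hc
  let f (b : Fin (p + q) → Fin n) : ℝ :=
    ξ (extendTuple (b ∘ Fin.castAdd q)) x * η (extendTuple (b ∘ Fin.natAdd p)) x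
  have hwedge (b : Fin (p + q) → Fin n) : wedge p q ξ η (extendTuple b) x =
      ∑ σ : Equiv.Perm (Fin (p + q)), c * ((σ.sign : ℤ) : ℝ) * f (b ∘ σ) := by
    simp only [wedge_apply_of_dependsOn hξ hη, extendTuple_val, Nat.cast_mul, mul_inv, hc,
      Finset.mul_sum, mul_assoc]
    rfl
  have hperm (σ : Equiv.Perm (Fin (p + q))) :
      ∑ b, (c * ((σ.sign : ℤ) : ℝ) * f (b ∘ σ)) • dxMulti b =
        toExterior p x ξ * toExterior q x η := by
    simp only [mul_smul _ (f _), ← Finset.smul_sum]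
    rw [sum_smul_dxMulti_comp_perm, smul_smul, mul_assoc, sign_cast_mul_self, mul_one,
      toExterior_apply, toExterior_apply, smul_mul_smul_comm, sum_smul_dxMulti_mul]
  rw [toExterior_apply]
  simp only [hwedge, Finset.sum_smul]
  rw [Finset.sum_comm]
  simp only [hperm, Finset.sum_const, Finset.card_univ, Fintype.card_perm, Fintype.card_fin]
  rw [← Nat.cast_smul_eq_nsmul ℝ, smul_smul, inv_mul_cancel₀ (Nat.cast_ne_zero.mpr
    (Nat.factorial_ne_zero _)), one_smul]

theorem coeff_toExterior (hanti : IsAnti p ξ) (hξ : DependsOn p ξ) (a : ℕ → Fin n) (x : Pt n) :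
    coeff a (toExterior p x ξ) = ξ a x := by
  have hterm (σ : Equiv.Perm (Fin p)) :
      ((σ.sign : ℤ) : ℝ) * ξ (extendTuple fun k : Fin p => a (σ k)) x = ξ a x := by
    have h := hanti.apply_comp_perm hξ (fun k => a k) σ x
    rw [hξ.extendTuple_eq] at h
    change _ * ξ (extendTuple ((fun k : Fin p => a k) ∘ σ)) x = _
    rw [h, ← mul_assoc, sign_cast_mul_self, one_mul]
  rw [toExterior_apply, map_smul, coeff_sum_smul_dxMulti]
  simp only [hterm, Finset.sum_const, Finset.card_univ, Fintype.card_perm, Fintype.card_fin]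
  rw [nsmul_eq_mul, smul_eq_mul, inv_mul_cancel_left₀ (Nat.cast_ne_zero.mpr p.factorial_ne_zero)]

theorem coeff_dx_mul_toExterior (hanti : IsAnti p ξ) (hξ : DependsOn p ξ) (a : ℕ → Fin n)
    (c : Fin n) (x : Pt n) :
    coeff a (dx c * toExterior p x ξ) = ∑ k : Fin (p + 1), (-1 : ℝ) ^ (k : ℕ) *
      (if a k = c then 1 else 0) * ξ (fun t => if t < (k : ℕ) then a t else a (t + 1)) x := by
  have hcoeff (b : ℕ → Fin n) :
      ξ b x = (p.factorial : ℝ)⁻¹ * ∑ d : Fin p → Fin n,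
        ξ (extendTuple d) x * coeff b (dxMulti d) := by
    rw [← coeff_toExterior hanti hξ b x, toExterior_apply]
    simp only [map_smul, map_sum, smul_eq_mul]
  rw [toExterior_apply]
  simp only [map_smul, map_sum, mul_smul_comm, Finset.mul_sum, coeff_dx_mul_dxMulti, smul_eq_mul]
  rw [Finset.sum_comm]
  refine Finset.sum_congr rfl fun k _ => ?_
  rw [hcoeff]
  simp only [Finset.mul_sum]
  exact Finset.sum_congr rfl fun d _ => by ring

theorem toExterior_extd (hξ : DependsOn p ξ) :
    toExterior (p + 1) x (extd p ξ) = ∑ c, dx c * toExterior p x (pdForm c ξ) := by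
  have hslot (k : Fin (p + 1)) : ∑ b : Fin (p + 1) → Fin n, ((-1 : ℝ) ^ (k : ℕ) *
      pd (b k) (ξ (extendTuple (k.removeNth b))) x) • dxMulti b =
        (p.factorial : ℝ) • ∑ c, dx c * toExterior p x (pdForm c ξ) := by
    simp only [mul_smul, ← Finset.smul_sum]
    rw [sum_smul_dxMulti_succ k, smul_smul, neg_one_pow_mul_self, one_smul, Finset.smul_sum]
    simp only [toExterior_apply, Fin.insertNth_apply_same, Fin.removeNth_insertNth, pdForm,
      mul_smul_comm]
    simp only [smul_inv_smul₀ (Nat.cast_ne_zero (R := ℝ).mpr p.factorial_ne_zero)]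
  have hremove (b : Fin (p + 1) → Fin n) (k : Fin (p + 1)) :
      ξ (fun t => if t < (k : ℕ) then extendTuple b t else extendTuple b (t + 1)) =
        ξ (extendTuple (k.removeNth b)) := hξ.congr_fin fun t => by
    rw [extendTuple_val, Fin.removeNth_apply, ← extendTuple_val b, Fin.succAbove]
    simp only [Fin.lt_def, Fin.val_castSucc]
    split_ifs <;> rfl
  rw [toExterior_apply]
  simp only [extd, extendTuple_val, hremove, Finset.sum_smul]
  rw [Finset.sum_comm]
  simp only [hslot, Finset.sum_const, Finset.card_univ, Fintype.card_fin]
  rw [← Nat.cast_smul_eq_nsmul ℝ, smul_smul, smul_smul, Nat.factorial_succ, mul_assoc,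
    ← Nat.cast_mul, inv_mul_cancel₀ (Nat.cast_ne_zero.mpr (by positivity)), one_smul]

theorem coeff_toExterior_extd (hanti : IsAnti p ξ) (hξ : DependsOn p ξ) (a : ℕ → Fin n)
    (x : Pt n) : coeff a (toExterior (p + 1) x (extd p ξ)) = extd p ξ a x := by
  rw [toExterior_extd hξ]
  simp only [map_sum, coeff_dx_mul_toExterior (hanti.pdForm _) (hξ.pdForm _)]
  rw [Finset.sum_comm]
  refine Finset.sum_congr rfl fun k _ => ?_
  simp only [mul_ite, mul_one, mul_zero, ite_mul, zero_mul, Finset.sum_ite_eq, Finset.mem_univ,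
    if_true, pdForm]

theorem toExterior_slotAct (hξ : DependsOn p ξ) (G : Fin n → Fin n → Pt n → ℝ) :
    toExterior p x (slotAct G p ξ) =
      rowDerivation (Matrix.of fun m a => G m a x) (toExterior p x ξ) := by
  rw [toExterior_apply, toExterior_apply, map_smul, sum_smul_rowDerivation_dxMulti]
  have hupdate (b : Fin p → Fin n) (k : Fin p) (m : Fin n) :
      ξ (fun t => if t = (k : ℕ) then m else extendTuple b t) =
        ξ (extendTuple (Function.update b k m)) := hξ.congr_fin fun t => by
    rw [extendTuple_val, extendTuple_val, Function.update_apply]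
    simp only [Fin.ext_iff]
  simp only [slotAct, hupdate, extendTuple_val, Matrix.of_apply]

theorem contract_toExterior (hanti : IsAnti p ξ) (hξ : DependsOn p ξ) (m : Fin n) :
    contract m (toExterior p x ξ) = toExterior (p - 1) x (intr p m ξ) := by
  obtain _ | p := p
  · simp [toExterior_apply, dxMulti_zero, contract_one, intr]
  have hinsert (k : Fin (p + 1)) (b : Fin p → Fin n) :
      ξ (extendTuple (k.insertNth m b)) x =
        (-1 : ℝ) ^ (k : ℕ) * intr (p + 1) m ξ (extendTuple b) x := by
    rw [← Fin.cons_comp_cycleRange, hanti.apply_comp_perm hξ, Fin.sign_cycleRange]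
    push_cast
    refine congrArg _ (congrFun (hξ.congr_fin fun t => ?_) x)
    rw [extendTuple_val]
    refine Fin.cases rfl (fun t => ?_) t
    exact (extendTuple_val b t).symm
  rw [toExterior_apply, toExterior_apply, map_smul, contract_sum_smul_dxMulti]
  simp only [hinsert, mul_smul, ← Finset.smul_sum]
  rw [Finset.sum_congr rfl fun k _ => by rw [smul_smul, neg_one_pow_mul_self, one_smul],
    Finset.sum_const, Finset.card_univ, Fintype.card_fin, ← Nat.cast_smul_eq_nsmul ℝ, smul_smul,
    Nat.factorial_succ, Nat.cast_mul, mul_inv_rev,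
    inv_mul_cancel_right₀ (Nat.cast_ne_zero.mpr p.succ_ne_zero)]
  rfl

theorem toExterior_pdForm_wedge (hξ : DependsOn p ξ) (hη : DependsOn q η)
    (hξx : ∀ a, DifferentiableAt ℝ (ξ a) x) (hηx : ∀ a, DifferentiableAt ℝ (η a) x)
    (k : Fin n) :
    toExterior (p + q) x (pdForm k (wedge p q ξ η)) =
      toExterior p x (pdForm k ξ) * toExterior q x η +
        toExterior p x ξ * toExterior q x (pdForm k η) := by
  rw [← toExterior_wedge (hξ.pdForm k) hη, ← toExterior_wedge hξ (hη.pdForm k), ← map_add]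
  exact toExterior_congr (pdForm_wedge hξx hηx k)

theorem toExterior_extd_wedge (hξ : DependsOn p ξ) (hη : DependsOn q η)
    (hξx : ∀ a, DifferentiableAt ℝ (ξ a) x) (hηx : ∀ a, DifferentiableAt ℝ (η a) x) :
    toExterior (p + q + 1) x (extd (p + q) (wedge p q ξ η)) =
      toExterior (p + 1) x (extd p ξ) * toExterior q x η +
        (-1 : ℝ) ^ p • (toExterior p x ξ * toExterior (q + 1) x (extd q η)) := by
  have hswap (k : Fin n) (Y : ExteriorAlgebra ℝ (Fin n → ℝ)) :
      dx k * (toExterior p x ξ * Y) = (-1 : ℝ) ^ p • (toExterior p x ξ * (dx k * Y)) := by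
    rw [← mul_assoc, dx, ι_mul_of_mem_exteriorPower (toExterior_mem_exteriorPower p x ξ),
      smul_mul_assoc, mul_assoc]
  simp only [toExterior_extd (hξ.wedge hη), toExterior_extd hξ, toExterior_extd hη,
    toExterior_pdForm_wedge hξ hη hξx hηx, mul_add, hswap, Finset.sum_add_distrib,
    Finset.sum_mul, Finset.mul_sum, Finset.smul_sum, mul_assoc]

theorem toExterior_extd_fmul {f : Pt n → ℝ} (hf : DifferentiableAt ℝ f x) (hξ : DependsOn p ξ)
    (hξx : ∀ a, DifferentiableAt ℝ (ξ a) x) :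
    toExterior (p + 1) x (extd p (fmul f ξ)) =
      ι ℝ (fun k => pd k f x) * toExterior p x ξ + f x • toExterior (p + 1) x (extd p ξ) := by
  have hpd (k : Fin n) : toExterior p x (pdForm k (fmul f ξ)) =
      pd k f x • toExterior p x ξ + f x • toExterior p x (pdForm k ξ) := by
    rw [← map_smul, ← map_smul, ← map_add]
    exact toExterior_congr fun a => pd_mul k hf (hξx a)
  simp only [toExterior_extd (hξ.fmul f), toExterior_extd hξ, hpd, mul_add, mul_smul_comm,
    Finset.sum_add_distrib, Finset.smul_sum]
  rw [← sum_smul_dx, Finset.sum_mul]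
  simp only [smul_mul_assoc]

end ToExterior

section Connection

variable {p : ℕ} {ξ : Form n} {x : Pt n} {Γ : Fin n → Fin n → Fin n → Pt n → ℝ}

/-- The one-forms `θ_i^m = Γ^m_{ia} dx^a` at `x`: the connection forms of the opposite connection,
whose Christoffel symbols are `Γ^m_{ai}`. -/
noncomputable def connForm (Γ : Fin n → Fin n → Fin n → Pt n → ℝ) (x : Pt n) (i m : Fin n) :
    ExteriorAlgebra ℝ (Fin n → ℝ) :=
  ι ℝ fun a => Γ m i a x

/-- The curvature two-forms at `x` of the opposite connection, with the sign
`F_i^m = θ_i^k ∧ θ_k^m - dθ_i^m`. -/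
noncomputable def curvForm (Γ : Fin n → Fin n → Fin n → Pt n → ℝ) (x : Pt n) (i m : Fin n) :
    ExteriorAlgebra ℝ (Fin n → ℝ) :=
  ∑ k, connForm Γ x i k * connForm Γ x k m - ∑ k, dx k * ι ℝ fun a => pd k (Γ m i a) x

theorem commute_curvForm (i m : Fin n) (X : ExteriorAlgebra ℝ (Fin n → ℝ)) :
    Commute X (curvForm Γ x i m) :=
  (Commute.sum_right _ _ _ fun _ _ => commute_ι_mul_ι _ _ X).sub_right
    (Commute.sum_right _ _ _ fun _ _ => commute_ι_mul_ι _ _ X)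

/-- The components of `F_i^m = F_{ab} dx^a ∧ dx^b`, not antisymmetrised in `a` and `b`. -/
noncomputable def curvCoeff (Γ : Fin n → Fin n → Fin n → Pt n → ℝ) (x : Pt n)
    (i m a b : Fin n) : ℝ :=
  ∑ k, Γ k i a x * Γ m k b x - pd a (Γ m i b) x

theorem curvForm_eq_sum (s j : Fin n) :
    curvForm Γ x s j = ∑ a, ∑ b, curvCoeff Γ x s j a b • (dx a * dx b) := by
  have hconn : ∑ k, connForm Γ x s k * connForm Γ x k j =
      ∑ a, ∑ b, (∑ k, Γ k s a x * Γ j k b x) • (dx a * dx b) := by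
    simp only [connForm, ← sum_smul_dx, Finset.sum_mul_sum, smul_mul_smul_comm, Finset.sum_smul]
    rw [Finset.sum_comm]
    exact Finset.sum_congr rfl fun a _ => Finset.sum_comm
  simp only [curvForm, curvCoeff, hconn, ← sum_smul_dx, Finset.mul_sum, mul_smul_comm, sub_smul,
    Finset.sum_sub_distrib]

theorem covT_sub_two_mul_Rc_antisymm (hΓ : ∀ i j k, DifferentiableAt ℝ (Γ i j k) x)
    (j s a b : Fin n) :
    (covT Γ j b a s x - 2 * Rc Γ j b a s x) - (covT Γ j a b s x - 2 * Rc Γ j a b s x) =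
      2 * (curvCoeff Γ x s j a b - curvCoeff Γ x s j b a) := by
  have hTor (u v : Fin n) : pd s (Tor Γ j u v) x = pd s (Γ j u v) x - pd s (Γ j v u) x :=
    pd_sub s (hΓ j u v) (hΓ j v u)
  simp only [covT, Rc, curvCoeff, hTor, Tor, mul_sub, Finset.sum_sub_distrib]
  simp only [mul_comm (Γ j _ _ x)]
  ring

theorem PoissonCompat.mono {ω : Fin n → Fin n → Pt n → ℝ} {U V : Set (Pt n)}
    (h : PoissonCompat U ω Γ) (hVU : V ⊆ U) : PoissonCompat V ω Γ :=
  fun i j m y hy => h i j m y (hVU hy)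

theorem PoissonCompat.sum_connForm_eq_zero {ω : Fin n → Fin n → Pt n → ℝ}
    (h : PoissonCompat {x} ω Γ) (i j : Fin n) :
    ι ℝ (fun m => pd m (ω i j) x) + ∑ k, ω k j x • connForm Γ x k i +
      ∑ k, ω i k x • connForm Γ x k j = 0 := by
  simp only [connForm, ← map_smul, ← map_sum, ← map_add]
  rw [← map_zero (ι ℝ (M := Fin n → ℝ))]
  congr 1
  funext m
  simp only [Pi.add_apply, Finset.sum_apply, Pi.smul_apply, smul_eq_mul, Pi.zero_apply]
  exact h i j m x rfl

variable [NeZero n]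

/-- The value at `x` of `F_i^m ∧ (∂_m⌟ξ)`, the curvature part of the commutator of `d` and `∇_i`
on the `p`-form `ξ`. -/
noncomputable def curvAct (Γ : Fin n → Fin n → Fin n → Pt n → ℝ) (p : ℕ) (x : Pt n) (ξ : Form n)
    (i : Fin n) : ExteriorAlgebra ℝ (Fin n → ℝ) :=
  ∑ m, curvForm Γ x i m * toExterior (p - 1) x (intr p m ξ)

theorem toExterior_nabla (hanti : IsAnti p ξ) (hξ : DependsOn p ξ)
    (Γ : Fin n → Fin n → Fin n → Pt n → ℝ) (i : Fin n) :
    toExterior p x (nabla Γ i p ξ) = toExterior p x (pdForm i ξ) -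
      ∑ m, connForm Γ x i m * toExterior (p - 1) x (intr p m ξ) := by
  rw [nabla_eq_sub, map_sub, toExterior_slotAct hξ, rowDerivation_apply]
  simp only [contract_toExterior hanti hξ]
  rfl

theorem toExterior_extd_nabla_eq_sum (hanti : IsAnti p ξ) (hξ : DependsOn p ξ)
    (hΓ : ∀ i j k, DifferentiableAt ℝ (Γ i j k) x) (hξx : ∀ a, ContDiffAt ℝ 2 (ξ a) x)
    (i : Fin n) :
    toExterior (p + 1) x (extd p (nabla Γ i p ξ)) =
      ∑ c, dx c * toExterior p x (pdForm c (pdForm i ξ)) -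
      ∑ c, dx c * (∑ m, ι ℝ (fun a => pd c (Γ m i a) x) * toExterior (p - 1) x (intr p m ξ)) -
      ∑ c, dx c * rowDerivation (Matrix.of fun m a => Γ m i a x) (toExterior p x (pdForm c ξ)) := by
  have hpd (c : Fin n) : toExterior p x (pdForm c (nabla Γ i p ξ)) =
      toExterior p x (pdForm c (pdForm i ξ)) -
        ∑ m, ι ℝ (fun a => pd c (Γ m i a) x) * toExterior (p - 1) x (intr p m ξ) -
        rowDerivation (Matrix.of fun m a => Γ m i a x) (toExterior p x (pdForm c ξ)) := by
    simp only [← contract_toExterior hanti hξ]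
    rw [← toExterior_slotAct (hξ.pdForm c)]
    have hslot : ∑ m, ι ℝ (fun a => pd c (Γ m i a) x) * contract m (toExterior p x ξ) =
        toExterior p x (slotAct (fun m a => pd c (Γ m i a)) p ξ) := by
      rw [toExterior_slotAct hξ, rowDerivation_apply]
      rfl
    rw [hslot, sub_sub, ← map_add, ← map_sub]
    refine toExterior_congr fun a => ?_
    have hξx' (b : ℕ → Fin n) : DifferentiableAt ℝ (ξ b) x :=
      (hξx b).differentiableAt two_ne_zero
    have hΓ' (m b : Fin n) : DifferentiableAt ℝ (Γ m i b) x := hΓ m i b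
    rw [Pi.sub_apply, Pi.sub_apply, Pi.add_apply, Pi.add_apply, ← pdForm_slotAct hΓ' hξx']
    exact pd_sub c (differentiableAt_pd i (hξx a)) (differentiableAt_slotAct hΓ' hξx' a)
  simp only [toExterior_extd (hξ.nabla Γ i), hpd, mul_sub, Finset.sum_sub_distrib]

theorem toExterior_nabla_extd_eq_sum (hξ : DependsOn p ξ) (hξx : ∀ a, ContDiffAt ℝ 2 (ξ a) x)
    (i : Fin n) :
    toExterior (p + 1) x (nabla Γ i (p + 1) (extd p ξ)) =
      ∑ c, dx c * toExterior p x (pdForm c (pdForm i ξ)) -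
      ∑ c, connForm Γ x i c * toExterior p x (pdForm c ξ) -
      ∑ c, dx c * rowDerivation (Matrix.of fun m a => Γ m i a x) (toExterior p x (pdForm c ξ)) := by
  rw [nabla_eq_sub, map_sub, toExterior_slotAct hξ.extd, toExterior_congr (pdForm_extd hξx i),
    toExterior_extd (hξ.pdForm i), toExterior_extd hξ, map_sum, sub_sub, ← Finset.sum_add_distrib]
  simp only [rowDerivation_dx_mul]
  rfl

theorem toExterior_extd_nabla (hanti : IsAnti p ξ) (hξ : DependsOn p ξ)
    (hΓ : ∀ i j k, DifferentiableAt ℝ (Γ i j k) x) (hξx : ∀ a, ContDiffAt ℝ 2 (ξ a) x)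
    (i : Fin n) :
    toExterior (p + 1) x (extd p (nabla Γ i p ξ)) =
      toExterior (p + 1) x (nabla Γ i (p + 1) (extd p ξ)) +
      ∑ k, connForm Γ x i k * toExterior p x (nabla Γ k p ξ) +
      curvAct Γ p x ξ i := by
  have hθ : ∑ k, connForm Γ x i k * toExterior p x (nabla Γ k p ξ) =
      ∑ c, connForm Γ x i c * toExterior p x (pdForm c ξ) -
      ∑ m, (∑ k, connForm Γ x i k * connForm Γ x k m) * toExterior (p - 1) x (intr p m ξ) := by
    simp only [toExterior_nabla hanti hξ, mul_sub, Finset.sum_sub_distrib, Finset.mul_sum,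
      Finset.sum_mul, mul_assoc]
    rw [Finset.sum_comm (f := fun k m => connForm Γ x i k * (connForm Γ x k m * _))]
  have hF : ∑ c, dx c * (∑ m, ι ℝ (fun a => pd c (Γ m i a) x) *
        toExterior (p - 1) x (intr p m ξ)) =
      ∑ m, (∑ k, dx k * ι ℝ fun a => pd k (Γ m i a) x) * toExterior (p - 1) x (intr p m ξ) := by
    simp only [Finset.mul_sum, Finset.sum_mul, mul_assoc]
    exact Finset.sum_comm
  simp only [toExterior_extd_nabla_eq_sum hanti hξ hΓ hξx, toExterior_nabla_extd_eq_sum hξ hξx, hθ,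
    hF, curvAct, curvForm, sub_mul, Finset.sum_sub_distrib]
  abel

theorem toExterior_two (ξ : Form n) :
    toExterior 2 x ξ =
      (2⁻¹ : ℝ) • ∑ a, ∑ b, ξ (extendTuple ![a, b]) x • (dx a * dx b) := by
  rw [toExterior_apply, ← (finTwoArrowEquiv (Fin n)).symm.sum_comp, Fintype.sum_prod_type]
  simp [dxMulti_eq_prod, finTwoArrowEquiv]

theorem toExterior_Hform (hΓ : ∀ i j k, DifferentiableAt ℝ (Γ i j k) x)
    (ω : Fin n → Fin n → Pt n → ℝ) (i j : Fin n) :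
    toExterior 2 x (Hform ω Γ i j) = (2⁻¹ : ℝ) • ∑ s, ω i s x • curvForm Γ x s j := by
  have hH (a b : Fin n) : Hform ω Γ i j (extendTuple ![a, b]) x =
      (2⁻¹ : ℝ) * ∑ s, ω i s x * (curvCoeff Γ x s j a b - curvCoeff Γ x s j b a) := by
    have h0 : extendTuple ![a, b] 0 = a := extendTuple_val ![a, b] 0
    have h1 : extendTuple ![a, b] 1 = b := extendTuple_val ![a, b] 1
    simp only [Hform, h0, h1, covT_sub_two_mul_Rc_antisymm hΓ, mul_left_comm _ (2 : ℝ),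
      ← Finset.mul_sum]
    ring
  have hcurv (s : Fin n) : ω i s x • curvForm Γ x s j = (2⁻¹ : ℝ) • ∑ a, ∑ b,
      (ω i s x * (curvCoeff Γ x s j a b - curvCoeff Γ x s j b a)) • (dx a * dx b) := by
    simp only [mul_smul, ← Finset.smul_sum]
    rw [sum_sub_swap_smul_dx_mul_dx, ← curvForm_eq_sum, smul_comm _ (2 : ℝ),
      inv_smul_smul₀ two_ne_zero]
  simp only [toExterior_two, hH, hcurv, mul_smul (2⁻¹ : ℝ), ← Finset.smul_sum, Finset.sum_smul]
  congr 2
  exact (Finset.sum_congr rfl fun a _ => Finset.sum_comm).trans Finset.sum_comm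

end Connection

section Cancellation

variable {R A κ : Type*} [CommRing R] [Ring A] [Algebra R A] [Fintype κ]

theorem sum_leibniz_of_compat (ε : R) {w : κ → κ → R} {dw θ : κ → κ → A}
    {N DN f M DM g : κ → A}
    (hw : ∀ i j, dw i j + ∑ k, w k j • θ k i + ∑ k, w i k • θ k j = 0)
    (hN : ∀ i, DN i = ∑ k, θ i k * N k + f i) (hM : ∀ j, DM j = ∑ k, θ j k * M k + g j)
    (hθ : ∀ i j k, θ j k * N i = ε • (N i * θ j k)) :
    ∑ i, ∑ j, (dw i j * (N i * M j) + w i j • (DN i * M j + ε • (N i * DM j))) =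
      ∑ i, ∑ j, w i j • (f i * M j + ε • (N i * g j)) := by
  have hDN : ∑ i, ∑ j, w i j • (DN i * M j) =
      ∑ i, ∑ j, (∑ k, w k j • θ k i) * (N i * M j) + ∑ i, ∑ j, w i j • (f i * M j) := by
    simp only [hN, add_mul, smul_add, Finset.sum_add_distrib, Finset.sum_mul, Finset.smul_sum,
      mul_assoc, smul_mul_assoc]
    congr 1
    rw [Finset.sum_comm]
    refine (Finset.sum_congr rfl fun j _ => Finset.sum_comm).trans Finset.sum_comm
  have hDM : ∑ i, ∑ j, w i j • ε • (N i * DM j) =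
      ∑ i, ∑ j, (∑ k, w i k • θ k j) * (N i * M j) + ∑ i, ∑ j, w i j • ε • (N i * g j) := by
    simp only [hM, mul_add, smul_add, Finset.sum_add_distrib, Finset.sum_mul, Finset.mul_sum,
      Finset.smul_sum, ← mul_assoc, smul_mul_assoc, hθ]
    congr 1
    exact Finset.sum_congr rfl fun i _ => Finset.sum_comm
  have hcancel : ∑ i, ∑ j, dw i j * (N i * M j) + ∑ i, ∑ j, (∑ k, w k j • θ k i) * (N i * M j) +
      ∑ i, ∑ j, (∑ k, w i k • θ k j) * (N i * M j) = 0 := by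
    simp only [← Finset.sum_add_distrib, ← add_mul, hw, zero_mul, Finset.sum_const_zero]
  simp only [smul_add, Finset.sum_add_distrib, hDN, hDM]
  rw [← sub_eq_zero, ← hcancel]
  abel

end Cancellation

section Defect

variable [NeZero n] {p q : ℕ} {ξ η : Form n} {x : Pt n} {ω : Fin n → Fin n → Pt n → ℝ}
  {Γ : Fin n → Fin n → Fin n → Pt n → ℝ}

theorem Qcorr_apply (hξ : DependsOn p ξ) (hη : DependsOn q η) (a : ℕ → Fin n) :
    Qcorr ω Γ p q ξ η a x = coeff a ((2⁻¹ : ℝ) • ∑ i, ∑ j, ω i j x •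
      (toExterior p x (nabla Γ i p ξ) * toExterior q x (nabla Γ j q η))) := by
  simp only [Qcorr, Pi.smul_apply, Finset.sum_apply, fmul, map_smul, map_sum, smul_eq_mul,
    wedge_apply_eq_coeff (hξ.nabla Γ _) (hη.nabla Γ _)]

theorem extd_fmul_wedge_apply {f : Pt n → ℝ} (hf : DifferentiableAt ℝ f x) (hξ : DependsOn p ξ)
    (hη : DependsOn q η) (hξx : ∀ a, DifferentiableAt ℝ (ξ a) x)
    (hηx : ∀ a, DifferentiableAt ℝ (η a) x) (a : ℕ → Fin n) :
    extd (p + q) (fmul f (wedge p q ξ η)) a x =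
      coeff a (ι ℝ (fun k => pd k f x) * (toExterior p x ξ * toExterior q x η) +
        f x • (toExterior (p + 1) x (extd p ξ) * toExterior q x η +
          (-1 : ℝ) ^ p • (toExterior p x ξ * toExterior (q + 1) x (extd q η)))) := by
  rw [← coeff_toExterior_extd ((isAnti_wedge hξ hη).fmul f) ((hξ.wedge hη).fmul f),
    toExterior_extd_fmul hf (hξ.wedge hη) (differentiableAt_wedge hξx hηx),
    toExterior_wedge hξ hη, toExterior_extd_wedge hξ hη hξx hηx]

theorem extd_Qcorr_apply (hω : ∀ i j, DifferentiableAt ℝ (ω i j) x)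
    (hΓ : ∀ i j k, DifferentiableAt ℝ (Γ i j k) x) (hξ : DependsOn p ξ) (hη : DependsOn q η)
    (hξx : ∀ a, ContDiffAt ℝ 2 (ξ a) x) (hηx : ∀ a, ContDiffAt ℝ 2 (η a) x) (a : ℕ → Fin n) :
    extd (p + q) (Qcorr ω Γ p q ξ η) a x = coeff a ((2⁻¹ : ℝ) • ∑ i, ∑ j,
      (ι ℝ (fun k => pd k (ω i j) x) *
          (toExterior p x (nabla Γ i p ξ) * toExterior q x (nabla Γ j q η)) +
        ω i j x • (toExterior (p + 1) x (extd p (nabla Γ i p ξ)) *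
            toExterior q x (nabla Γ j q η) +
          (-1 : ℝ) ^ p • (toExterior p x (nabla Γ i p ξ) *
            toExterior (q + 1) x (extd q (nabla Γ j q η)))))) := by
  have hterm (i j : Fin n) (b : ℕ → Fin n) :
      DifferentiableAt ℝ (fmul (ω i j) (wedge p q (nabla Γ i p ξ) (nabla Γ j q η)) b) x :=
    (hω i j).mul (differentiableAt_wedge (differentiableAt_nabla hΓ hξx i)
      (differentiableAt_nabla hΓ hηx j) b)
  have hsum (i : Fin n) (b : ℕ → Fin n) : DifferentiableAt ℝ
      ((∑ j, fmul (ω i j) (wedge p q (nabla Γ i p ξ) (nabla Γ j q η))) b) x := by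
    rw [Finset.sum_apply]
    exact DifferentiableAt.sum fun j _ => hterm i j b
  have hsum₂ (b : ℕ → Fin n) : DifferentiableAt ℝ
      ((∑ i, ∑ j, fmul (ω i j) (wedge p q (nabla Γ i p ξ) (nabla Γ j q η))) b) x := by
    rw [Finset.sum_apply]
    exact DifferentiableAt.sum fun i _ => hsum i b
  rw [Qcorr, extd_const_smul _ hsum₂, extd_sum _ fun i _ => hsum i]
  simp only [extd_sum _ fun j _ => hterm _ j, map_smul, map_sum, smul_eq_mul,
    extd_fmul_wedge_apply (hω _ _) (hξ.nabla Γ _) (hη.nabla Γ _) (differentiableAt_nabla hΓ hξx _)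
      (differentiableAt_nabla hΓ hηx _)]

theorem extd_Qcorr_sub (hω : ∀ i j, DifferentiableAt ℝ (ω i j) x)
    (hΓ : ∀ i j k, DifferentiableAt ℝ (Γ i j k) x) (hpc : PoissonCompat {x} ω Γ)
    (hξ : DependsOn p ξ) (hη : DependsOn q η) (hξa : IsAnti p ξ) (hηa : IsAnti q η)
    (hξx : ∀ a, ContDiffAt ℝ 2 (ξ a) x) (hηx : ∀ a, ContDiffAt ℝ 2 (η a) x) (a : ℕ → Fin n) :
    extd (p + q) (Qcorr ω Γ p q ξ η) a x - Qcorr ω Γ (p + 1) q (extd p ξ) η a x -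
        (-1 : ℝ) ^ p * Qcorr ω Γ p (q + 1) ξ (extd q η) a x =
      coeff a ((2⁻¹ : ℝ) • ∑ i, ∑ j, ω i j x •
        (curvAct Γ p x ξ i * toExterior q x (nabla Γ j q η) +
          (-1 : ℝ) ^ p • (toExterior p x (nabla Γ i p ξ) * curvAct Γ q x η j))) := by
  have hcancel := sum_leibniz_of_compat ((-1 : ℝ) ^ p) hpc.sum_connForm_eq_zero
    (N := fun i => toExterior p x (nabla Γ i p ξ)) (M := fun j => toExterior q x (nabla Γ j q η))
    (DN := fun i => toExterior (p + 1) x (extd p (nabla Γ i p ξ)) -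
      toExterior (p + 1) x (nabla Γ i (p + 1) (extd p ξ)))
    (DM := fun j => toExterior (q + 1) x (extd q (nabla Γ j q η)) -
      toExterior (q + 1) x (nabla Γ j (q + 1) (extd q η)))
    (fun i => sub_eq_of_eq_add' ((toExterior_extd_nabla hξa hξ hΓ hξx i).trans (add_assoc _ _ _)))
    (fun j => sub_eq_of_eq_add' ((toExterior_extd_nabla hηa hη hΓ hηx j).trans (add_assoc _ _ _)))
    (fun i j k => ι_mul_of_mem_exteriorPower (toExterior_mem_exteriorPower p x _) _)
  rw [extd_Qcorr_apply hω hΓ hξ hη hξx hηx, Qcorr_apply hξ.extd hη, Qcorr_apply hξ hη.extd,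
    ← hcancel, ← smul_eq_mul ((-1 : ℝ) ^ p), ← map_smul, ← map_sub, ← map_sub]
  congr 1
  simp only [sub_mul, mul_sub, smul_sub, smul_add, Finset.sum_add_distrib, Finset.sum_sub_distrib,
    Finset.smul_sum, smul_comm ((-1 : ℝ) ^ p)]
  abel

theorem sum_wedge_Hform_intr (hΓ : ∀ i j k, DifferentiableAt ℝ (Γ i j k) x)
    (hωa : ∀ i j, ω i j x = -ω j i x) (hξ : DependsOn p ξ) (hη : DependsOn q η)
    (a : ℕ → Fin n) :
    (∑ i, ∑ j, wedge (2 + (p - 1)) q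
        (wedge 2 (p - 1) (Hform ω Γ j i) (intr p i ξ)) (nabla Γ j q η)) a x =
      -coeff a ((2⁻¹ : ℝ) • ∑ i, ∑ j, ω i j x •
        (curvAct Γ p x ξ i * toExterior q x (nabla Γ j q η))) := by
  have hH (i : Fin n) := dependsOn_Hform ω Γ i
  simp only [Finset.sum_apply,
    wedge_apply_eq_coeff ((hH _ _).wedge (hξ.intr _)) (hη.nabla Γ _),
    toExterior_wedge (hH _ _) (hξ.intr _), toExterior_Hform hΓ, ← map_sum, ← map_neg, curvAct]
  congr 1
  simp only [smul_mul_assoc, ← Finset.smul_sum]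
  rw [← smul_neg, Finset.sum_comm, Finset.sum_comm (f := fun i j => ω i j x • _)]
  simp only [Finset.sum_mul, Finset.smul_sum, smul_mul_assoc, ← Finset.sum_neg_distrib, ← neg_smul,
    ← hωa]
  exact Finset.sum_congr rfl fun j _ => Finset.sum_comm

theorem sum_wedge_Hform_nabla (hΓ : ∀ i j k, DifferentiableAt ℝ (Γ i j k) x)
    (hξ : DependsOn p ξ) (hη : DependsOn q η) (a : ℕ → Fin n) :
    (∑ i, ∑ j, wedge (2 + p) (q - 1)
        (wedge 2 p (Hform ω Γ i j) (nabla Γ i p ξ)) (intr q j η)) a x =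
      coeff a ((2⁻¹ : ℝ) • ∑ i, ∑ j, ω i j x •
        (toExterior p x (nabla Γ i p ξ) * curvAct Γ q x η j)) := by
  have hH (i : Fin n) := dependsOn_Hform ω Γ i
  simp only [Finset.sum_apply,
    wedge_apply_eq_coeff ((hH _ _).wedge (hξ.nabla Γ _)) (hη.intr _),
    toExterior_wedge (hH _ _) (hξ.nabla Γ _), toExterior_Hform hΓ, ← map_sum, curvAct]
  congr 1
  simp only [smul_mul_assoc, ← Finset.smul_sum, Finset.mul_sum, Finset.sum_mul, ← mul_assoc,
    (commute_curvForm _ _ _).eq]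
  simp only [Finset.smul_sum]
  exact Finset.sum_congr rfl fun i _ => Finset.sum_comm

end Defect

theorem statement_8_general {ω : Fin n → Fin n → Pt n → ℝ}
    {Γ : Fin n → Fin n → Fin n → Pt n → ℝ} {p q : ℕ} {ξ η : Form n} {x : Pt n}
    (hω : ∀ i j, DifferentiableAt ℝ (ω i j) x) (hΓ : ∀ i j k, DifferentiableAt ℝ (Γ i j k) x)
    (hωa : ∀ i j, ω i j x = -ω j i x) (hpc : PoissonCompat {x} ω Γ)
    (hξ : DependsOn p ξ) (hη : DependsOn q η) (hξa : IsAnti p ξ) (hηa : IsAnti q η)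
    (hξx : ∀ a, ContDiffAt ℝ 2 (ξ a) x) (hηx : ∀ a, ContDiffAt ℝ 2 (η a) x) (a : ℕ → Fin n) :
    (extd (p + q) (wedge p q ξ η) a x
        = wedge (p + 1) q (extd p ξ) η a x
          + (-1 : ℝ) ^ p * wedge p (q + 1) ξ (extd q η) a x) ∧
    (extd (p + q) (Qcorr ω Γ p q ξ η) a x
        - Qcorr ω Γ (p + 1) q (extd p ξ) η a x
        - (-1 : ℝ) ^ p * Qcorr ω Γ p (q + 1) ξ (extd q η) a x
      = - (∑ i, ∑ j,
            wedge (2 + (p - 1)) q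
              (wedge 2 (p - 1) (Hform ω Γ j i) (intr p i ξ)) (nabla Γ j q η)) a x
        + (-1 : ℝ) ^ p *
          (∑ i, ∑ j,
            wedge (2 + p) (q - 1)
              (wedge 2 p (Hform ω Γ i j) (nabla Γ i p ξ)) (intr q j η)) a x) := by
  have : NeZero n := ⟨(a 0).pos.ne'⟩
  constructor
  · rw [← coeff_toExterior_extd (isAnti_wedge hξ hη) (hξ.wedge hη),
      toExterior_extd_wedge hξ hη (fun b => (hξx b).differentiableAt two_ne_zero)
        fun b => (hηx b).differentiableAt two_ne_zero, map_add, map_smul, smul_eq_mul,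
      wedge_apply_eq_coeff hξ.extd hη, wedge_apply_eq_coeff hξ hη.extd]
  · rw [extd_Qcorr_sub hω hΓ hpc hξ hη hξa hηa hξx hηx, sum_wedge_Hform_intr hΓ hωa hξ hη,
      sum_wedge_Hform_nabla hΓ hξ hη, neg_neg, ← smul_eq_mul, ← map_smul, ← map_add]
    simp only [smul_add, Finset.sum_add_distrib, Finset.smul_sum, smul_comm ((-1 : ℝ) ^ p)]

end

/-- for Poisson-compatible `(ω, ∇)` and the product
`ξ ∧_Q η = ξ ∧ η + (λ/2) ω^{ij} ∇_i ξ ∧ ∇_j η` over `ℝ[λ]/(λ²)`, the Leibniz defect is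
`d(ξ ∧_Q η) − dξ ∧_Q η − (−1)^p ξ ∧_Q dη
  = −λ H^{ji} ∧ (∂_i⌟ξ) ∧ ∇_j η + λ (−1)^p H^{ij} ∧ ∇_i ξ ∧ (∂_j⌟η)`.
The `λ⁰`-component is the classical Leibniz rule and the `λ¹`-component is the displayed
identity. -/
theorem statement_8 (U : Set (Pt n)) (hU : IsOpen U)
    (ω : Fin n → Fin n → Pt n → ℝ)
    (Γ : Fin n → Fin n → Fin n → Pt n → ℝ)
    (hωs : ∀ i j, ContDiffOn ℝ (⊤ : ℕ∞) (ω i j) U)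
    (hΓs : ∀ i j k, ContDiffOn ℝ (⊤ : ℕ∞) (Γ i j k) U)
    (hanti : ∀ i j, ∀ x ∈ U, ω i j x = - ω j i x)
    (hpc : PoissonCompat U ω Γ)
    (p q : ℕ) (ξ η : Form n) (hξ : IsPForm U p ξ) (hη : IsPForm U q η) :
    ∀ (a : ℕ → Fin n), ∀ x ∈ U,
      (extd (p + q) (wedge p q ξ η) a x
          = wedge (p + 1) q (extd p ξ) η a x
            + (-1 : ℝ) ^ p * wedge p (q + 1) ξ (extd q η) a x) ∧
      (extd (p + q) (Qcorr ω Γ p q ξ η) a x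
          - Qcorr ω Γ (p + 1) q (extd p ξ) η a x
          - (-1 : ℝ) ^ p * Qcorr ω Γ p (q + 1) ξ (extd q η) a x
        = - (∑ i, ∑ j,
              wedge (2 + (p - 1)) q
                (wedge 2 (p - 1) (Hform ω Γ j i) (intr p i ξ)) (nabla Γ j q η)) a x
          + (-1 : ℝ) ^ p *
            (∑ i, ∑ j,
              wedge (2 + p) (q - 1)
                (wedge 2 p (Hform ω Γ i j) (nabla Γ i p ξ)) (intr q j η)) a x) := by
  intro a x hx
  have hUx := hU.mem_nhds hx
  exact statement_8_general (fun i j => ((hωs i j).contDiffAt hUx).differentiableAt (by simp))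
    (fun i j k => ((hΓs i j k).contDiffAt hUx).differentiableAt (by simp))
    (fun i j => hanti i j x hx) (hpc.mono (Set.singleton_subset_iff.mpr hx))
    hξ.1 hη.1 hξ.2.1 hη.2.1 (hξ.2.2.contDiffAt hUx) (hη.2.2.contDiffAt hUx) a

end Stmt8
end

section
/- On an open set U ⊆ ℝⁿ, let ω^{ij} be a smooth antisymmetric bivector and Γ^i_{jk} smooth Christoffel symbols such that the pair (ω, ∇) is Poisson-compatible, and let H^{ij} := (1/4) ω^{is}(T^j_{nm;s} − 2 R^j_{nms}) dx^m ∧ dx^n. Over ℝ[λ]/(λ²) define for homogeneous ξ, η: ξ ∧₁ η := ξ ∧ η + (λ/2) ω^{ij} ∇_i ξ ∧ ∇_j η + λ (−1)^{|ξ|+1} H^{ij} ∧ (∂_i⌟ξ) ∧ (∂_j⌟η), extended λ-bilinearly. Then: (i) ∧₁ is associative; (ii) the undeformed exterior derivative d satisfies the graded Leibniz rule for ∧₁ (d(ξ ∧₁ η) = dξ ∧₁ η + (−1)^{|ξ|} ξ ∧₁ dη for homogeneous ξ) if and only if H^{ij} = H^{ji} for all i, j and dH^{ij} + Γ^i_{rp}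 dx^p ∧ H^{rj} + Γ^j_{rp} dx^p ∧ H^{ir} = 0 for all i, j. -/
namespace Stmt9

variable {n : ℕ}

/-- A point of the coordinate chart. -/
abbrev Pt (n : ℕ) := Fin n → ℝ

/-- The coefficient family of a differential form: a `p`-form is a family
`ξ_{a 0, …, a (p−1)}` of functions (only the first `p` index slots are used). -/
abbrev Form (n : ℕ) := (ℕ → Fin n) → Pt n → ℝ

/-- Partial derivative in the `i`-th coordinate direction. -/
noncomputable def pd (i : Fin n) (f : Pt n → ℝ) (x : Pt n) : ℝ :=
  fderiv ℝ f x (Pi.single i 1)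

/-- Wedge product of a `p`-form and a `q`-form (coordinate formula). -/
noncomputable def wedge (p q : ℕ) (ξ η : Form n) : Form n := fun a x =>
  ((p.factorial * q.factorial : ℕ) : ℝ)⁻¹ *
    ∑ σ : Equiv.Perm (Fin (p + q)),
      ((Equiv.Perm.sign σ : ℤ) : ℝ) *
        ξ (fun t => if h : t < p then a ((σ ⟨t, by omega⟩ : Fin (p + q)) : ℕ) else a t) x *
        η (fun t => if h : t < q then a ((σ ⟨p + t, by omega⟩ : Fin (p + q)) : ℕ) else a t) x

/-- Exterior derivative of a `p`-form:
`(dξ)_{a_0⋯a_p} = Σ_k (−1)^k ∂_{a_k} ξ_{a_0⋯(omit a_k)⋯a_p}`. -/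
noncomputable def extd (p : ℕ) (ξ : Form n) : Form n := fun a x =>
  ∑ k : Fin (p + 1),
    (-1 : ℝ) ^ (k : ℕ) *
      pd (a (k : ℕ)) (ξ (fun t => if t < (k : ℕ) then a t else a (t + 1))) x

/-- Interior product of a `p`-form with the `m`-th coordinate vector field
(zero on `0`-forms). -/
def intr (p : ℕ) (m : Fin n) (ξ : Form n) : Form n :=
  if p = 0 then (fun _ _ => 0)
  else fun a x => ξ (fun t => if t = 0 then m else a (t - 1)) x

/-- Interior product of a `p`-form with a vector field `v` (zero on `0`-forms). -/
noncomputable def iprod (p : ℕ) (v : Fin n → Pt n → ℝ) (ξ : Form n) : Form n :=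
  if p = 0 then (fun _ _ => 0)
  else fun a x => ∑ m, v m x * ξ (fun t => if t = 0 then m else a (t - 1)) x

/-- Covariant derivative of a `p`-form:
`(∇_i ξ)_{a_1⋯a_p} = ∂_i ξ_{a_1⋯a_p} − Σ_k Γ^m_{i a_k} ξ_{⋯ m ⋯}`. -/
noncomputable def nabla (Γ : Fin n → Fin n → Fin n → Pt n → ℝ) (i : Fin n) (p : ℕ)
    (ξ : Form n) : Form n := fun a x =>
  pd i (ξ a) x
    - ∑ k : Fin p, ∑ m, Γ m i (a (k : ℕ)) x * ξ (fun t => if t = (k : ℕ) then m else a t) x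

/-- Multiplication of a form by a scalar function. -/
def fmul (f : Pt n → ℝ) (ξ : Form n) : Form n := fun a x => f x * ξ a x

/-- `ξ` depends only on its first `p` index slots. -/
def DependsOn (p : ℕ) (ξ : Form n) : Prop :=
  ∀ a b : ℕ → Fin n, (∀ t, t < p → a t = b t) → ξ a = ξ b

/-- `ξ` is totally antisymmetric in its first `p` index slots. -/
def IsAnti (p : ℕ) (ξ : Form n) : Prop :=
  ∀ (a : ℕ → Fin n) (i j : ℕ), i < p → j < p → i ≠ j →
    ∀ x, ξ (fun t => a (Equiv.swap i j t)) x = - ξ a x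

/-- `ξ` has smooth coefficients on `U`. -/
def SmoothOn (U : Set (Pt n)) (ξ : Form n) : Prop :=
  ∀ a, ContDiffOn ℝ (⊤ : ℕ∞) (ξ a) U

/-- `ξ` is (the coefficient family of) a smooth `p`-form on `U`. -/
def IsPForm (U : Set (Pt n)) (p : ℕ) (ξ : Form n) : Prop :=
  DependsOn p ξ ∧ IsAnti p ξ ∧ SmoothOn U ξ

/-- Torsion `T^i_{jk} = Γ^i_{jk} - Γ^i_{kj}`. -/
def Tor (Γ : Fin n → Fin n → Fin n → Pt n → ℝ) (i j k : Fin n) (x : Pt n) : ℝ :=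
  Γ i j k x - Γ i k j x

/-- Curvature `R^l_{ijk} = ∂_j Γ^l_{ki} − ∂_k Γ^l_{ji} + Γ^m_{ki} Γ^l_{jm} − Γ^m_{ji} Γ^l_{km}`. -/
noncomputable def Rc (Γ : Fin n → Fin n → Fin n → Pt n → ℝ) (l i j k : Fin n)
    (x : Pt n) : ℝ :=
  pd j (Γ l k i) x - pd k (Γ l j i) x
    + ∑ m, Γ m k i x * Γ l j m x - ∑ m, Γ m j i x * Γ l k m x

/-- Covariant derivative of the torsion:
`T^j_{ab;s} = ∂_s T^j_{ab} + Γ^j_{sp} T^p_{ab} − Γ^p_{sa} T^j_{pb} − Γ^p_{sb} T^j_{ap}`. -/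
noncomputable def covT (Γ : Fin n → Fin n → Fin n → Pt n → ℝ) (j a b s : Fin n)
    (x : Pt n) : ℝ :=
  pd s (Tor Γ j a b) x + ∑ p, Γ j s p x * Tor Γ p a b x
    - ∑ p, Γ p s a x * Tor Γ j p b x - ∑ p, Γ p s b x * Tor Γ j a p x

/-- The pair `(ω, ∇)` is Poisson-compatible on `U`. -/
def PoissonCompat (U : Set (Pt n)) (ω : Fin n → Fin n → Pt n → ℝ)
    (Γ : Fin n → Fin n → Fin n → Pt n → ℝ) : Prop :=
  ∀ i j m, ∀ x ∈ U,
    pd m (ω i j) x + ∑ k, ω k j x * Γ i k m x + ∑ k, ω i k x * Γ j k m x = 0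

/-- The 2-form `H^{ij} = (1/4) ω^{is}(T^j_{nm;s} − 2 R^j_{nms}) dx^m ∧ dx^n`
(as a coefficient family, slots `(a 0, a 1) = (m, n)`). -/
noncomputable def Hform (ω : Fin n → Fin n → Pt n → ℝ)
    (Γ : Fin n → Fin n → Fin n → Pt n → ℝ) (i j : Fin n) : Form n := fun a x =>
  (1 / 4 : ℝ) * ∑ s, ω i s x *
    ((covT Γ j (a 1) (a 0) s x - 2 * Rc Γ j (a 1) (a 0) s x)
      - (covT Γ j (a 0) (a 1) s x - 2 * Rc Γ j (a 0) (a 1) s x))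

/-- The `λ`-correction term `(1/2) ω^{ij} ∇_i ξ ∧ ∇_j η` of the functorial product `∧_Q`. -/
noncomputable def Qcorr (ω : Fin n → Fin n → Pt n → ℝ)
    (Γ : Fin n → Fin n → Fin n → Pt n → ℝ) (p q : ℕ) (ξ η : Form n) : Form n :=
  (2⁻¹ : ℝ) • ∑ i, ∑ j, fmul (ω i j) (wedge p q (nabla Γ i p ξ) (nabla Γ j q η))

/-- `λ`-extended forms over `ℝ[λ]/(λ²)`: a pair `(ξ₀, ξ₁)` stands for `ξ₀ + λ ξ₁`. -/
abbrev FormL (n : ℕ) := Form n × Form n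

/-- Both components are smooth `p`-forms on `U`. -/
def IsPFormL (U : Set (Pt n)) (p : ℕ) (ξ : FormL n) : Prop :=
  IsPForm U p ξ.1 ∧ IsPForm U p ξ.2

/-- The order-`λ` nonlinear correction
`(−1)^{|ξ|+1} Σ_{i,j} H^{ij} ∧ (∂_i⌟ξ) ∧ (∂_j⌟η)`. -/
noncomputable def HatCorr (ω : Fin n → Fin n → Pt n → ℝ)
    (Γ : Fin n → Fin n → Fin n → Pt n → ℝ) (p q : ℕ) (ξ η : Form n) : Form n :=
  ((-1 : ℝ) ^ (p + 1)) •
    ∑ i, ∑ j,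
      wedge (2 + (p - 1)) (q - 1)
        (wedge 2 (p - 1) (Hform ω Γ i j) (intr p i ξ)) (intr q j η)

/-- The quantum wedge product `∧₁` on `λ`-extended forms:
`ξ ∧₁ η = ξ ∧ η + (λ/2) ω^{ij} ∇_i ξ ∧ ∇_j η
  + λ (−1)^{|ξ|+1} H^{ij} ∧ (∂_i⌟ξ) ∧ (∂_j⌟η)`, extended `λ`-bilinearly. -/
noncomputable def wedge1 (ω : Fin n → Fin n → Pt n → ℝ)
    (Γ : Fin n → Fin n → Fin n → Pt n → ℝ) (p q : ℕ) (ξ η : FormL n) : FormL n :=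
  (wedge p q ξ.1 η.1,
   wedge p q ξ.1 η.2 + wedge p q ξ.2 η.1
     + Qcorr ω Γ p q ξ.1 η.1 + HatCorr ω Γ p q ξ.1 η.1)

/-- The (undeformed) exterior derivative on `λ`-extended forms. -/
noncomputable def extdL (p : ℕ) (ξ : FormL n) : FormL n := (extd p ξ.1, extd p ξ.2)

/-- The 1-form `Γ^i_{r p} dx^p` (with `i, r` fixed). -/
def GammaOne (Γ : Fin n → Fin n → Fin n → Pt n → ℝ) (i r : Fin n) : Form n :=
  fun a x => Γ i r (a 0) x

/-- Symmetry of the `H^{ij}` in `i, j` (as 2-forms on `U`). -/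
def HSymm (U : Set (Pt n)) (ω : Fin n → Fin n → Pt n → ℝ)
    (Γ : Fin n → Fin n → Fin n → Pt n → ℝ) : Prop :=
  ∀ i j a, ∀ x ∈ U, Hform ω Γ i j a x = Hform ω Γ j i a x

/-- The condition `dH^{ij} + Γ^i_{rp} dx^p ∧ H^{rj} + Γ^j_{rp} dx^p ∧ H^{ir} = 0` on `U`. -/
def HClosed (U : Set (Pt n)) (ω : Fin n → Fin n → Pt n → ℝ)
    (Γ : Fin n → Fin n → Fin n → Pt n → ℝ) : Prop :=
  ∀ i j a, ∀ x ∈ U,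
    (extd 2 (Hform ω Γ i j)
      + ∑ r, wedge 1 2 (GammaOne Γ i r) (Hform ω Γ r j)
      + ∑ r, wedge 1 2 (GammaOne Γ j r) (Hform ω Γ i r)) a x = 0

/-- Associativity of `∧₁` on `U`, on (λ-extended) homogeneous smooth forms. -/
def WedgeAssoc (U : Set (Pt n)) (ω : Fin n → Fin n → Pt n → ℝ)
    (Γ : Fin n → Fin n → Fin n → Pt n → ℝ) : Prop :=
  ∀ (p q r : ℕ) (ξ η ζ : FormL n),
    IsPFormL U p ξ → IsPFormL U q η → IsPFormL U r ζ →
    ∀ a, ∀ x ∈ U,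
      (wedge1 ω Γ (p + q) r (wedge1 ω Γ p q ξ η) ζ).1 a x
          = (wedge1 ω Γ p (q + r) ξ (wedge1 ω Γ q r η ζ)).1 a x ∧
      (wedge1 ω Γ (p + q) r (wedge1 ω Γ p q ξ η) ζ).2 a x
          = (wedge1 ω Γ p (q + r) ξ (wedge1 ω Γ q r η ζ)).2 a x

/-- The graded Leibniz rule for `d` with respect to `∧₁` on `U`. -/
def LeibnizRule (U : Set (Pt n)) (ω : Fin n → Fin n → Pt n → ℝ)
    (Γ : Fin n → Fin n → Fin n → Pt n → ℝ) : Prop :=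
  ∀ (p q : ℕ) (ξ η : FormL n),
    IsPFormL U p ξ → IsPFormL U q η →
    ∀ a, ∀ x ∈ U,
      (extdL (p + q) (wedge1 ω Γ p q ξ η)).1 a x
          = (wedge1 ω Γ (p + 1) q (extdL p ξ) η
              + ((-1 : ℝ) ^ p) • wedge1 ω Γ p (q + 1) ξ (extdL q η)).1 a x ∧
      (extdL (p + q) (wedge1 ω Γ p q ξ η)).2 a x
          = (wedge1 ω Γ (p + 1) q (extdL p ξ) η
              + ((-1 : ℝ) ^ p) • wedge1 ω Γ p (q + 1) ξ (extdL q η)).2 a x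

/-!
Forms are modelled as `A ⊗ Λ(ℝⁿ)` with `A` the algebra of smooth functions on `U`. Write `γ` for the
matrix of one-forms `γ^m_i = Γ^m_{ik} dx^k` and `Ω = dγ + γ ∧ γ` for its curvature. Antisymmetrized
in `m, n`, the expression `T^j_{nm;s} - 2 R^j_{nms}` is the coefficient of `-2 Ω^j_s`, so that
`H^{ij} = -½ ω^{is} Ω^j_s`.

The operators `∇_i` are derivations of the wedge product and `∂_i ⌟` are antiderivations, so both
corrections are Hochschild cocycles (the two-forms `H^{ij}` commute with all forms), and this is
associativity to first order in `λ`.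

For the Leibniz rule, `d (∂_i ⌟ X) = ∇_i X - ∂_i ⌟ dX + γ^m_i ∧ (∂_m ⌟ X)` and
`d (∇_i X) = ∇_i (dX) - Ω^m_i ∧ (∂_m ⌟ X) + γ^m_i ∧ ∇_m X`. When `d` is applied to the corrections,
the terms with `γ` combine with `dω^{ij}` and `dH^{ij}` to covariant exterior derivatives. That of
`ω` vanishes by Poisson compatibility, and the terms with `Ω` contract with `ω` to `H`. What remains
is the defect
`(H^{ij} - H^{ji}) ∧ (∂_i ⌟ X) ∧ ∇_j Y - (-1)^|X| (DH)^{ij} ∧ (∂_i ⌟ X) ∧ (∂_j ⌟ Y)`,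
and testing it on `(dx^i, x^j)` and `(dx^i, dx^j)` shows that it vanishes for all `X, Y` only if
`H^{ij} = H^{ji}` and `DH = 0`.
-/

/-! ### Exterior forms with coefficients in an algebra -/

open scoped TensorProduct

/-- The exterior forms `f dx^{i₁} ∧ ⋯ ∧ dx^{iₚ}` with coefficients `f` in a commutative algebra `A`
of functions. Tensoring with the exterior algebra over `ℝ`, instead of taking the exterior algebra
over `A`, lets a derivation `D` of `A` act on coefficients as `D ⊗ id`. -/
abbrev FormAlgebra (A ι : Type*) [CommRing A] [Algebra ℝ A] :=
  A ⊗[ℝ] ExteriorAlgebra ℝ (ι → ℝ)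

namespace FormAlgebra

section Contract

variable {A ι : Type*} [CommRing A] [Algebra ℝ A]

/-- The interior product `∂_m ⌟` with a coordinate vector field. -/
def contract (m : ι) : FormAlgebra A ι →ₗ[A] FormAlgebra A ι :=
  (CliffordAlgebra.contractLeft (Q := (0 : QuadraticForm ℝ (ι → ℝ)))
    (LinearMap.proj m)).baseChange A

/-- The component of degree zero of a form. -/
noncomputable def scalarPart : FormAlgebra A ι →ₗ[A] A :=
  (Algebra.TensorProduct.rid ℝ A A).toLinearMap ∘ₗ
    (ExteriorAlgebra.algebraMapInv.toLinearMap).baseChange A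

/-- The operator `D ⊗ id` differentiating the coefficients of a form. -/
def partialD (D : Derivation ℝ A A) : FormAlgebra A ι →ₗ[ℝ] FormAlgebra A ι :=
  D.toLinearMap.rTensor _

/-- The coefficient `X_{a 0, …, a (p - 1)}` of a form, obtained by contracting `X` with
`∂_{a 0}, …, ∂_{a (p - 1)}` in this order. -/
noncomputable def coeff : (p : ℕ) → (ℕ → ι) → FormAlgebra A ι →ₗ[A] A
  | 0, _ => scalarPart
  | p + 1, a => coeff p (fun t => a (t + 1)) ∘ₗ contract (a 0)

theorem contract_tmul (m : ι) (f : A) (w : ExteriorAlgebra ℝ (ι → ℝ)) :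
    contract m (f ⊗ₜ[ℝ] w) = f ⊗ₜ CliffordAlgebra.contractLeft (LinearMap.proj m) w :=
  rfl

theorem contract_one (m : ι) : contract m (1 : FormAlgebra A ι) = 0 := by
  rw [Algebra.TensorProduct.one_def, contract_tmul, CliffordAlgebra.contractLeft_one,
    TensorProduct.tmul_zero]

theorem contract_contract (l m : ι) (X : FormAlgebra A ι) :
    contract l (contract m X) = -contract m (contract l X) := by
  induction X using TensorProduct.induction_on with
  | zero => simp only [map_zero, neg_zero]
  | tmul f w =>
    simp only [contract_tmul]
    rw [CliffordAlgebra.contractLeft_comm, TensorProduct.tmul_neg]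
  | add X Y hX hY => simp only [map_add, hX, hY, neg_add]

theorem coeff_congr {p : ℕ} {a b : ℕ → ι} (h : ∀ t < p, a t = b t) :
    (coeff p a : FormAlgebra A ι →ₗ[A] A) = coeff p b := by
  induction p generalizing a b with
  | zero => rfl
  | succ p ih =>
    simp only [coeff]
    rw [h 0 p.succ_pos, ih fun t ht => h (t + 1) (Nat.succ_lt_succ ht)]

theorem partialD_tmul (D : Derivation ℝ A A) (f : A) (w : ExteriorAlgebra ℝ (ι → ℝ)) :
    partialD D (f ⊗ₜ[ℝ] w) = D f ⊗ₜ w :=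
  rfl

theorem partialD_smul (D : Derivation ℝ A A) (f : A) (X : FormAlgebra A ι) :
    partialD D (f • X) = D f • X + f • partialD D X := by
  induction X using TensorProduct.induction_on with
  | zero => simp only [smul_zero, map_zero, add_zero]
  | tmul g w =>
    simp only [TensorProduct.smul_tmul', partialD_tmul, smul_eq_mul, Derivation.leibniz,
      TensorProduct.add_tmul]
    rw [mul_comm (D f), add_comm]
  | add X Y hX hY => simp only [smul_add, map_add, hX, hY]; abel

theorem partialD_mul (D : Derivation ℝ A A) (X Y : FormAlgebra A ι) :
    partialD D (X * Y) = partialD D X * Y + X * partialD D Y := by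
  induction X using TensorProduct.induction_on with
  | zero => simp only [zero_mul, map_zero, add_zero]
  | add X X' hX hX' => simp only [add_mul, map_add, hX, hX']; abel
  | tmul f v =>
    induction Y using TensorProduct.induction_on with
    | zero => simp only [mul_zero, map_zero, add_zero]
    | add Y Y' hY hY' => simp only [mul_add, map_add, hY, hY']; abel
    | tmul g w =>
      simp only [Algebra.TensorProduct.tmul_mul_tmul, partialD_tmul, Derivation.leibniz,
        smul_eq_mul, ← TensorProduct.add_tmul]
      ring_nf

theorem partialD_one (D : Derivation ℝ A A) : partialD D (1 : FormAlgebra A ι) = 0 := by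
  rw [Algebra.TensorProduct.one_def, partialD_tmul, D.map_one_eq_zero, TensorProduct.zero_tmul]

theorem partialD_contract (D : Derivation ℝ A A) (m : ι) (X : FormAlgebra A ι) :
    partialD D (contract m X) = contract m (partialD D X) := by
  induction X using TensorProduct.induction_on with
  | zero => simp only [map_zero]
  | tmul f w => rfl
  | add X Y hX hY => simp only [map_add, hX, hY]

theorem partialD_comm {D D' : Derivation ℝ A A} (h : ∀ f, D (D' f) = D' (D f))
    (X : FormAlgebra A ι) : partialD D (partialD D' X) = partialD D' (partialD D X) := by
  induction X using TensorProduct.induction_on with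
  | zero => simp only [map_zero]
  | tmul f w => simp only [partialD_tmul, h]
  | add X Y hX hY => simp only [map_add, hX, hY]

theorem scalarPart_one : scalarPart (1 : FormAlgebra A ι) = 1 := by
  simp [scalarPart, Algebra.TensorProduct.one_def]

theorem map_scalarPart (D : Derivation ℝ A A) (X : FormAlgebra A ι) :
    D (scalarPart X) = scalarPart (partialD D X) := by
  induction X using TensorProduct.induction_on with
  | zero => simp only [map_zero]
  | tmul f w => simp [scalarPart, partialD_tmul]
  | add X Y hX hY => simp only [map_add, hX, hY]

theorem map_coeff (D : Derivation ℝ A A) (p : ℕ) (a : ℕ → ι) (X : FormAlgebra A ι) :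
    D (coeff p a X) = coeff p a (partialD D X) := by
  induction p generalizing a X with
  | zero => exact map_scalarPart D X
  | succ p ih => simp only [coeff, LinearMap.comp_apply, ih, partialD_contract]

end Contract

section Frame

variable {A ι : Type*} [CommRing A] [Algebra ℝ A] [DecidableEq ι]

/-- The coordinate one-form `dx^i`. -/
def dx (i : ι) : FormAlgebra A ι := 1 ⊗ₜ ExteriorAlgebra.ι ℝ (Pi.single i 1)

/-- The form `dx^{b 0} ∧ ⋯ ∧ dx^{b (p - 1)}`. -/
noncomputable def monomial {p : ℕ} (b : Fin p → ι) : FormAlgebra A ι :=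
  1 ⊗ₜ ExteriorAlgebra.ιMulti ℝ p fun t => Pi.single (b t) 1

variable (A ι) in
/-- The forms of degree `p`. -/
def homog (p : ℕ) : Submodule A (FormAlgebra A ι) :=
  Submodule.span A (Set.range (monomial (A := A) (ι := ι) (p := p)))

theorem dx_mul_dx (i j : ι) : dx i * dx j = -(dx j * dx i : FormAlgebra A ι) := by
  simp only [dx, Algebra.TensorProduct.tmul_mul_tmul, ← TensorProduct.tmul_neg]
  rw [eq_neg_of_add_eq_zero_left (ExteriorAlgebra.ι_add_mul_swap _ _)]

theorem contract_dx_mul (m k : ι) (X : FormAlgebra A ι) :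
    contract m (dx k * X) = (if m = k then X else 0) - dx k * contract m X := by
  induction X using TensorProduct.induction_on with
  | zero => simp
  | add X Y hX hY =>
    simp only [mul_add, map_add, hX, hY]
    split_ifs <;> abel
  | tmul f w =>
    have h : CliffordAlgebra.contractLeft (LinearMap.proj m)
          (ExteriorAlgebra.ι ℝ (Pi.single k (1 : ℝ)) * w)
        = (if m = k then w else 0)
          - ExteriorAlgebra.ι ℝ (Pi.single k 1)
            * CliffordAlgebra.contractLeft (LinearMap.proj m) w := by
      refine (CliffordAlgebra.contractLeft_ι_mul _ _ _).trans ?_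
      simp [Pi.single_apply]
    simp only [dx, Algebra.TensorProduct.tmul_mul_tmul, contract_tmul, h, TensorProduct.tmul_sub]
    split_ifs <;> simp

theorem contract_dx (m k : ι) : contract m (dx k) = if m = k then (1 : FormAlgebra A ι) else 0 := by
  simpa [contract_one] using contract_dx_mul m k (1 : FormAlgebra A ι)

theorem partialD_dx_mul (D : Derivation ℝ A A) (k : ι) (X : FormAlgebra A ι) :
    partialD D (dx k * X) = dx k * partialD D X := by
  rw [partialD_mul, dx, partialD_tmul, D.map_one_eq_zero, TensorProduct.zero_tmul, zero_mul,
    zero_add]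

theorem monomial_zero (b : Fin 0 → ι) : monomial b = (1 : FormAlgebra A ι) := by
  rw [monomial, ExteriorAlgebra.ιMulti_zero_apply, Algebra.TensorProduct.one_def]

theorem monomial_succ {p : ℕ} (b : Fin (p + 1) → ι) :
    (monomial b : FormAlgebra A ι) = dx (b 0) * monomial (Fin.tail b) := by
  rw [monomial, ExteriorAlgebra.ιMulti_succ_apply, dx, monomial,
    Algebra.TensorProduct.tmul_mul_tmul, one_mul]
  rfl

theorem monomial_mul_monomial {p q : ℕ} (b : Fin p → ι) (c : Fin q → ι) :
    (monomial b * monomial c : FormAlgebra A ι) = monomial (Fin.append b c) := by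
  simp only [monomial, Algebra.TensorProduct.tmul_mul_tmul, one_mul, ExteriorAlgebra.ιMulti_apply,
    ← List.prod_append, ← List.ofFn_fin_append]
  congr 3
  ext t : 1
  refine Fin.addCases (fun t => ?_) (fun t => ?_) t <;> simp

theorem monomial_comp_perm {p : ℕ} (b : Fin p → ι) (σ : Equiv.Perm (Fin p)) :
    (monomial (b ∘ σ) : FormAlgebra A ι) = (Equiv.Perm.sign σ : ℤ) • monomial b := by
  have h : ExteriorAlgebra.ιMulti ℝ p (fun t => (Pi.single ((b ∘ σ) t) 1 : ι → ℝ)) =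
      Equiv.Perm.sign σ • ExteriorAlgebra.ιMulti ℝ p fun t => Pi.single (b t) 1 :=
    (ExteriorAlgebra.ιMulti ℝ p).map_perm (fun t => (Pi.single (b t) 1 : ι → ℝ)) σ
  rw [monomial, monomial, h, Units.smul_def]
  exact TensorProduct.tmul_smul _ _ _

theorem monomial_mem_homog {p : ℕ} (b : Fin p → ι) : monomial b ∈ homog A ι p :=
  Submodule.subset_span (Set.mem_range_self b)

theorem one_mem_homog : 1 ∈ homog A ι 0 := by
  rw [← monomial_zero (A := A) (finZeroElim : Fin 0 → ι)]
  exact monomial_mem_homog _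

theorem mul_mem_homog {p q : ℕ} {X Y : FormAlgebra A ι} (hX : X ∈ homog A ι p)
    (hY : Y ∈ homog A ι q) : X * Y ∈ homog A ι (p + q) := by
  induction hX using Submodule.span_induction with
  | zero => rw [zero_mul]; exact zero_mem _
  | add X X' _ _ h h' => rw [add_mul]; exact add_mem h h'
  | smul f X _ h => rw [smul_mul_assoc]; exact Submodule.smul_mem _ f h
  | mem X hX =>
    obtain ⟨b, rfl⟩ := hX
    induction hY using Submodule.span_induction with
    | zero => rw [mul_zero]; exact zero_mem _
    | add Y Y' _ _ h h' => rw [mul_add]; exact add_mem h h'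
    | smul f Y _ h => rw [mul_smul_comm]; exact Submodule.smul_mem _ f h
    | mem Y hY =>
      obtain ⟨c, rfl⟩ := hY
      rw [monomial_mul_monomial]
      exact monomial_mem_homog _

theorem dx_mem_homog (k : ι) : dx k ∈ homog A ι 1 := by
  have h := monomial_mem_homog (A := A) (fun _ : Fin 1 => k)
  rwa [monomial_succ, monomial_zero, mul_one] at h

theorem dx_mul_mem_homog {p : ℕ} {X : FormAlgebra A ι} (k : ι) (hX : X ∈ homog A ι p) :
    dx k * X ∈ homog A ι (p + 1) :=
  add_comm 1 p ▸ mul_mem_homog (dx_mem_homog k) hX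

@[elab_as_elim]
theorem homog_induction {P : ∀ (p : ℕ) (X : FormAlgebra A ι), X ∈ homog A ι p → Prop}
    (zero : ∀ p, P p 0 (zero_mem _))
    (add : ∀ p X Y hX hY, P p X hX → P p Y hY → P p (X + Y) (add_mem hX hY))
    (smul : ∀ p (f : A) X hX, P p X hX → P p (f • X) (Submodule.smul_mem _ f hX))
    (one : P 0 1 one_mem_homog)
    (dx_mul : ∀ p k X hX, P p X hX → P (p + 1) (dx k * X) (dx_mul_mem_homog k hX))
    {p : ℕ} {X : FormAlgebra A ι} (hX : X ∈ homog A ι p) : P p X hX := by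
  induction hX using Submodule.span_induction with
  | zero => exact zero p
  | add X Y _ _ hX hY => exact add p X Y _ _ hX hY
  | smul f X _ hX => exact smul p f X _ hX
  | mem X hX =>
    obtain ⟨b, rfl⟩ := hX
    induction p with
    | zero => simpa only [monomial_zero] using one
    | succ p ih =>
      simpa only [monomial_succ] using dx_mul p _ _ (monomial_mem_homog _) (ih (Fin.tail b))

/-- The form `X` commutes with one-forms up to the sign `s`. For a form of degree `p` the sign is
`(-1) ^ p`; unlike the degree, the sign of `∂_m ⌟ X` is determined by that of `X` without a case
distinction for `p = 0`. -/
def HasSign (s : ℝ) (X : FormAlgebra A ι) : Prop :=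
  ∀ k, dx k * X = s • (X * dx k)

theorem hasSign_of_mem_homog {p : ℕ} {X : FormAlgebra A ι} (hX : X ∈ homog A ι p) :
    HasSign ((-1) ^ p) X := by
  intro k
  induction hX using homog_induction with
  | zero => simp only [zero_mul, mul_zero, smul_zero]
  | add _ X Y _ _ hX hY => simp only [add_mul, mul_add, smul_add, hX, hY]
  | smul _ f X _ hX => rw [smul_mul_assoc, mul_smul_comm, hX, smul_comm]
  | one => simp only [pow_zero, one_smul, one_mul, mul_one]
  | dx_mul _ l X _ hX =>
    rw [← mul_assoc, dx_mul_dx, neg_mul, mul_assoc, hX, mul_smul_comm, ← mul_assoc, pow_succ,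
      mul_neg_one, neg_smul]

theorem HasSign.commute {P : FormAlgebra A ι} (hP : HasSign 1 P) {p : ℕ} {X : FormAlgebra A ι}
    (hX : X ∈ homog A ι p) : Commute X P := by
  induction hX using homog_induction with
  | zero => exact Commute.zero_left P
  | add _ X Y _ _ hX hY => exact hX.add_left hY
  | smul _ f X _ hX => exact hX.smul_left f
  | one => exact Commute.one_left P
  | dx_mul _ k X _ hX => exact Commute.mul_left ((hP k).trans (one_smul _ _)) hX

theorem contract_eq_zero (m : ι) {X : FormAlgebra A ι} (hX : X ∈ homog A ι 0) :
    contract m X = 0 := by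
  induction hX using Submodule.span_induction with
  | zero => exact map_zero _
  | add X Y _ _ hX hY => rw [map_add, hX, hY, add_zero]
  | smul f X _ hX => rw [map_smul, hX, smul_zero]
  | mem X hX => obtain ⟨b, rfl⟩ := hX; rw [monomial_zero, contract_one]

theorem contract_mem_homog (m : ι) {p : ℕ} {X : FormAlgebra A ι} (hX : X ∈ homog A ι p) :
    contract m X ∈ homog A ι (p - 1) := by
  induction hX using homog_induction with
  | zero p => rw [map_zero]; exact zero_mem _
  | add p X Y _ _ hX hY => rw [map_add]; exact add_mem hX hY
  | smul p f X _ hX => rw [map_smul]; exact Submodule.smul_mem _ f hX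
  | one => rw [contract_one]; exact zero_mem _
  | dx_mul p k X hX h =>
    rw [contract_dx_mul]
    refine sub_mem (by split_ifs; exacts [hX, zero_mem _]) ?_
    cases p with
    | zero => rw [contract_eq_zero m hX, mul_zero]; exact zero_mem _
    | succ p => exact dx_mul_mem_homog k h

theorem contract_mul (m : ι) {p : ℕ} {X : FormAlgebra A ι} (hX : X ∈ homog A ι p)
    (Y : FormAlgebra A ι) :
    contract m (X * Y) = contract m X * Y + (-1 : ℝ) ^ p • (X * contract m Y) := by
  induction hX using homog_induction with
  | zero p => simp only [zero_mul, map_zero, smul_zero, add_zero]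
  | add p X X' _ _ hX hX' => simp only [add_mul, map_add, smul_add, hX, hX']; abel
  | smul p f X _ hX =>
    rw [smul_mul_assoc, map_smul, hX, map_smul, smul_mul_assoc, smul_mul_assoc, smul_add,
      smul_comm f]
  | one => rw [one_mul, contract_one, zero_mul, zero_add, pow_zero, one_smul, one_mul]
  | dx_mul p k X _ hX =>
    rw [mul_assoc, contract_dx_mul, hX, contract_dx_mul, mul_add, mul_smul_comm, sub_mul, pow_succ,
      mul_neg_one, neg_smul, mul_assoc, mul_assoc, ite_mul, zero_mul, sub_add_eq_sub_sub,
      sub_eq_add_neg]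

theorem hasSign_contract (m : ι) {p : ℕ} {X : FormAlgebra A ι} (hX : X ∈ homog A ι p) :
    HasSign (-(-1) ^ p) (contract m X) := by
  cases p with
  | zero =>
    intro k
    rw [contract_eq_zero m hX, mul_zero, zero_mul, smul_zero]
  | succ p =>
    rw [pow_succ, mul_neg_one, neg_neg]
    exact hasSign_of_mem_homog (Nat.add_sub_cancel p 1 ▸ contract_mem_homog m hX)

theorem partialD_mem_homog (D : Derivation ℝ A A) {p : ℕ} {X : FormAlgebra A ι}
    (hX : X ∈ homog A ι p) : partialD D X ∈ homog A ι p := by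
  induction hX using Submodule.span_induction with
  | zero => rw [map_zero]; exact zero_mem _
  | add X Y _ _ hX hY => rw [map_add]; exact add_mem hX hY
  | smul f X hmem hX =>
    rw [partialD_smul]
    exact add_mem (Submodule.smul_mem _ _ hmem) (Submodule.smul_mem _ f hX)
  | mem X hX =>
    obtain ⟨b, rfl⟩ := hX
    rw [monomial, partialD_tmul, D.map_one_eq_zero, TensorProduct.zero_tmul]
    exact zero_mem _

theorem HasSign.one_mul {s : ℝ} {P F : FormAlgebra A ι} (hP : HasSign 1 P) (hF : HasSign s F) :
    HasSign s (P * F) := by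
  intro k
  rw [← mul_assoc, hP, one_smul, mul_assoc, hF, mul_smul_comm, mul_assoc]

theorem hasSign_one_of_mem_homog_two {P : FormAlgebra A ι} (hP : P ∈ homog A ι 2) :
    HasSign 1 P := by
  simpa only [even_two, Even.neg_pow, one_pow] using hasSign_of_mem_homog hP

theorem hasSign_smul_one (f : A) : HasSign 1 (f • 1 : FormAlgebra A ι) := by
  simpa only [pow_zero] using hasSign_of_mem_homog (Submodule.smul_mem _ f one_mem_homog)

end Frame

section Coeff

variable {A ι : Type*} [CommRing A] [Algebra ℝ A] [DecidableEq ι]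

theorem scalarPart_dx_mul (k : ι) (X : FormAlgebra A ι) : scalarPart (dx k * X) = 0 := by
  induction X using TensorProduct.induction_on with
  | zero => rw [mul_zero, map_zero]
  | tmul f w => simp [scalarPart, dx, ExteriorAlgebra.algebraMapInv]
  | add X Y hX hY => rw [mul_add, map_add, hX, hY, add_zero]

theorem coeff_dx_mul (p : ℕ) (a : ℕ → ι) (k : ι) (X : FormAlgebra A ι) :
    coeff (p + 1) a (dx k * X) = ∑ j : Fin (p + 1), (-1) ^ (j : ℕ) *
      if a j = k then coeff p (fun t => if t < j then a t else a (t + 1)) X else 0 := by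
  induction p generalizing a X with
  | zero =>
    rw [coeff, LinearMap.comp_apply, contract_dx_mul, map_sub]
    simp only [coeff, scalarPart_dx_mul, apply_ite scalarPart, map_zero, sub_zero]
    simp
  | succ p ih =>
    rw [coeff, LinearMap.comp_apply, contract_dx_mul, map_sub, ih,
      Fin.sum_univ_succ (n := p + 1), sub_eq_add_neg, ← Finset.sum_neg_distrib]
    congr 1
    · split_ifs <;> simp_all
    · refine Finset.sum_congr rfl fun j _ => ?_
      split_ifs <;> simp_all [coeff, pow_succ]

theorem coeff_dx_mul_contract (p : ℕ) (a : ℕ → ι) (k m : ι) (X : FormAlgebra A ι) :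
    coeff p a (dx k * contract m X) = ∑ j : Fin p,
      if a j = k then coeff p (fun t => if t = j then m else a t) X else 0 := by
  induction p generalizing a X with
  | zero => simp only [coeff, scalarPart_dx_mul, Finset.univ_eq_empty, Finset.sum_empty]
  | succ p ih =>
    rw [coeff, LinearMap.comp_apply, contract_dx_mul, map_sub, contract_contract, mul_neg, map_neg,
      sub_neg_eq_add, ih, Fin.sum_univ_succ]
    congr 1
    · split_ifs <;> simp_all [coeff]
    · refine Finset.sum_congr rfl fun j _ => ?_
      simp [coeff]

theorem coeff_monomial {p : ℕ} (a : ℕ → ι) (b : Fin p → ι) :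
    coeff p a (monomial b : FormAlgebra A ι) =
      (Matrix.of fun s t : Fin p => if a t = b s then (1 : A) else 0).det := by
  induction p generalizing a with
  | zero => rw [monomial_zero, coeff, scalarPart_one, Matrix.det_fin_zero]
  | succ p ih =>
    rw [monomial_succ, coeff_dx_mul, Matrix.det_succ_row_zero]
    refine Finset.sum_congr rfl fun j _ => ?_
    have hminor (t : Fin p) : (if (t : ℕ) < j then a t else a (t + 1)) = a (j.succAbove t) := by
      rcases lt_or_ge (t : ℕ) j with h | h
      · rw [if_pos h, Fin.succAbove_of_castSucc_lt _ _ h, Fin.val_castSucc]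
      · rw [if_neg h.not_gt, Fin.succAbove_of_le_castSucc _ _ h, Fin.val_succ]
    rw [ih]
    simp only [hminor, mul_assoc, Matrix.of_apply, ite_mul, one_mul, zero_mul]
    rfl

theorem coeff_monomial_eq_sum_perm {p : ℕ} (a : ℕ → ι) (b : Fin p → ι) :
    coeff p a (monomial b : FormAlgebra A ι) =
      ∑ σ : Equiv.Perm (Fin p),
        if b = fun t => a (σ t) then ((Equiv.Perm.sign σ : ℤ) : A) else 0 := by
  rw [coeff_monomial, ← Matrix.det_transpose, Matrix.det_apply']
  refine Finset.sum_congr rfl fun σ _ => ?_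
  simp only [Matrix.transpose_apply, Matrix.of_apply, Finset.prod_ite_zero, Finset.mem_univ,
    true_implies, Finset.prod_const_one, funext_iff, eq_comm, mul_ite, mul_one, mul_zero]

theorem coeff_swap {p : ℕ} {X : FormAlgebra A ι} (hX : X ∈ homog A ι p) (a : ℕ → ι)
    {i j : Fin p} (hij : i ≠ j) :
    coeff p (fun t => a (Equiv.swap (i : ℕ) j t)) X = -coeff p a X := by
  induction hX using Submodule.span_induction with
  | zero => simp only [map_zero, neg_zero]
  | add X Y _ _ hX hY => simp only [map_add, hX, hY, neg_add]
  | smul f X _ hX => simp only [map_smul, hX, smul_neg]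
  | mem X hX =>
    obtain ⟨b, rfl⟩ := hX
    have h := Matrix.det_permute' (Equiv.swap i j)
      (Matrix.of fun s t : Fin p => if a t = b s then (1 : A) else 0)
    rw [Equiv.Perm.sign_swap hij, Units.val_neg, Units.val_one, Int.cast_neg, Int.cast_one,
      neg_one_mul] at h
    simp only [coeff_monomial, Fin.val_injective.swap_apply]
    exact h

/-- `Function.extend Fin.val b a` is the sequence of indices which starts with `b`; its other terms
play no role. -/
theorem eq_sum_coeff_smul_monomial [Fintype ι] {p : ℕ} {X : FormAlgebra A ι}
    (hX : X ∈ homog A ι p) (a : ℕ → ι) :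
    X = (p.factorial : ℝ)⁻¹ •
      ∑ b : Fin p → ι, coeff p (Function.extend Fin.val b a) X • monomial b := by
  induction hX using Submodule.span_induction with
  | zero => simp only [map_zero, zero_smul, Finset.sum_const_zero, smul_zero]
  | add X Y _ _ hX hY =>
    simp only [map_add, add_smul, Finset.sum_add_distrib, smul_add, ← hX, ← hY]
  | smul f X _ hX =>
    simp only [map_smul, smul_assoc, ← Finset.smul_sum]
    rw [smul_comm, ← hX]
  | mem X hX =>
    obtain ⟨c, rfl⟩ := hX
    rw [eq_inv_smul_iff₀ (by positivity)]
    have hperm (σ : Equiv.Perm (Fin p)) : (∑ b : Fin p → ι, (if c = fun t => b (σ t) then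
          ((Equiv.Perm.sign σ : ℤ) : A) else 0) • (monomial b : FormAlgebra A ι)) = monomial c := by
      have hc (b : Fin p → ι) : (c = fun t => b (σ t)) ↔ b = c ∘ ⇑σ⁻¹ :=
        (Equiv.comp_symm_eq σ b c).symm.trans eq_comm
      simp only [hc, ite_smul, zero_smul, Finset.sum_ite_eq', Finset.mem_univ, if_true,
        monomial_comp_perm, Int.cast_smul_eq_zsmul, smul_smul, Equiv.Perm.sign_inv]
      rw [← Units.val_mul, Int.units_mul_self, Units.val_one, one_smul]
    simp only [coeff_monomial_eq_sum_perm, Fin.val_injective.extend_apply, Finset.sum_smul]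
    rw [Finset.sum_comm, Finset.sum_congr rfl fun σ _ => hperm σ, Finset.sum_const,
      Finset.card_univ, Fintype.card_perm, Fintype.card_fin, Nat.cast_smul_eq_nsmul]

theorem coeff_mul [Finite ι] {p q : ℕ} {X Y : FormAlgebra A ι} (hX : X ∈ homog A ι p)
    (hY : Y ∈ homog A ι q) (a : ℕ → ι) :
    coeff (p + q) a (X * Y) = ((p.factorial * q.factorial : ℕ) : ℝ)⁻¹ •
      ∑ σ : Equiv.Perm (Fin (p + q)), ((Equiv.Perm.sign σ : ℤ) : A) *
        coeff p (Function.extend Fin.val (fun t => a (σ (Fin.castAdd q t))) a) X *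
        coeff q (Function.extend Fin.val (fun t => a (σ (Fin.natAdd p t))) a) Y := by
  have happend (b : Fin p → ι) (c : Fin q → ι) (σ : Equiv.Perm (Fin (p + q))) :
      (Fin.append b c = fun t => a (σ t)) ↔
        b = (fun t => a (σ (Fin.castAdd q t))) ∧ c = fun t => a (σ (Fin.natAdd p t)) := by
    simp only [funext_iff, Fin.forall_fin_add, Fin.append_left, Fin.append_right]
  have hmono (b : Fin p → ι) (c : Fin q → ι) (f g : A) :
      coeff (p + q) a ((f • monomial b) * (g • monomial c)) =
        ∑ σ : Equiv.Perm (Fin (p + q)), if b = (fun t => a (σ (Fin.castAdd q t))) then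
          if c = (fun t => a (σ (Fin.natAdd p t))) then ((Equiv.Perm.sign σ : ℤ) : A) * f * g
          else 0 else 0 := by
    rw [smul_mul_smul_comm, map_smul, monomial_mul_monomial, coeff_monomial_eq_sum_perm,
      Finset.smul_sum]
    refine Finset.sum_congr rfl fun σ _ => ?_
    simp only [happend, ite_and, mul_ite, mul_zero, smul_eq_mul]
    congr 2
    ring
  have := Fintype.ofFinite ι
  conv_lhs => rw [eq_sum_coeff_smul_monomial hX a, eq_sum_coeff_smul_monomial hY a]
  rw [smul_mul_smul_comm, ← mul_inv, ← Nat.cast_mul, LinearMap.map_smul_of_tower,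
    Finset.sum_mul_sum]
  simp only [map_sum, hmono]
  congr 1
  rw [Finset.sum_congr rfl fun b _ => Finset.sum_comm, Finset.sum_comm]
  refine Finset.sum_congr rfl fun σ _ => ?_
  simp only [Finset.sum_ite_irrel, Finset.sum_const_zero, Finset.sum_ite_eq',
    Finset.mem_univ, if_true]

end Coeff

/-! ### Calculus with a linear connection -/

section Pairing

variable {A ι : Type*} [CommRing A] [Algebra ℝ A] [Fintype ι]

/-- The contraction `P^{ij} ∧ F_i ∧ G_j`, the common shape of the two corrections to the product. -/
noncomputable def pairing (P : ι → ι → FormAlgebra A ι) (F G : ι → FormAlgebra A ι) :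
    FormAlgebra A ι :=
  ∑ i, ∑ j, P i j * F i * G j

theorem pairing_sub_left (P : ι → ι → FormAlgebra A ι) (F F' G : ι → FormAlgebra A ι) :
    pairing P (fun i => F i - F' i) G = pairing P F G - pairing P F' G := by
  simp only [pairing, mul_sub, sub_mul, Finset.sum_sub_distrib]

theorem pairing_sub_right (P : ι → ι → FormAlgebra A ι) (F G G' : ι → FormAlgebra A ι) :
    pairing P F (fun j => G j - G' j) = pairing P F G - pairing P F G' := by
  simp only [pairing, mul_sub, Finset.sum_sub_distrib]

theorem pairing_sub_coeff (P Q : ι → ι → FormAlgebra A ι) (F G : ι → FormAlgebra A ι) :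
    pairing (fun i j => P i j - Q i j) F G = pairing P F G - pairing Q F G := by
  simp only [pairing, sub_mul, Finset.sum_sub_distrib]

theorem pairing_cocycle {P : ι → ι → FormAlgebra A ι} {X : FormAlgebra A ι}
    (hP : ∀ i j, Commute X (P i j)) (Y Z : FormAlgebra A ι) (F G H : ι → FormAlgebra A ι)
    (s t : ℝ) :
    pairing P F G * Z + t • pairing P (fun i => F i * Y + s • (X * G i)) H =
      (s * t) • (X * pairing P G H) + pairing P F (fun j => G j * Z + t • (Y * H j)) := by
  simp only [pairing, mul_add, add_mul, Finset.sum_add_distrib, Finset.sum_mul, Finset.mul_sum,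
    Finset.smul_sum, smul_add, mul_smul_comm, smul_mul_assoc, ← mul_assoc, (hP _ _).eq, smul_smul,
    mul_comm t s]
  abel

end Pairing

section Calculus

variable {A ι : Type*} [CommRing A] [Algebra ℝ A] [DecidableEq ι] [Fintype ι]

/-- The exterior derivative `Σ_k dx^k ∧ ∂_k` for given derivations `∂_k = D k` of the coefficients,
which need not commute. -/
noncomputable def extDeriv (D : ι → Derivation ℝ A A) : FormAlgebra A ι →ₗ[ℝ] FormAlgebra A ι :=
  ∑ k, LinearMap.mulLeft ℝ (dx k) ∘ₗ partialD (D k)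

/-- The connection form `Γ^m_{ik} dx^k`. -/
noncomputable def connForm (Γ : ι → ι → ι → A) (m i : ι) : FormAlgebra A ι :=
  ∑ k, Γ m i k • dx k

/-- The covariant derivative `∇_i` of forms. -/
noncomputable def covDeriv (D : ι → Derivation ℝ A A) (Γ : ι → ι → ι → A) (i : ι)
    (X : FormAlgebra A ι) : FormAlgebra A ι :=
  partialD (D i) X - ∑ m, connForm Γ m i * contract m X

/-- The curvature form `dγ + γ ∧ γ` of the matrix `γ` of connection forms `Γ^m_{ik} dx^k`. As the
form index of `γ` is the last lower index of `Γ`, this is the curvature not of `∇` but of the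
connection whose Christoffel symbols are transposed. -/
noncomputable def curvForm (D : ι → Derivation ℝ A A) (Γ : ι → ι → ι → A) (m i : ι) :
    FormAlgebra A ι :=
  extDeriv D (connForm Γ m i) + ∑ r, connForm Γ m r * connForm Γ r i

/-- The covariant exterior derivative `dP^{ij} + γ^i_r ∧ P^{rj} + γ^j_r ∧ P^{ir}` of a family of
forms with two upper indices. -/
noncomputable def covExtDeriv (D : ι → Derivation ℝ A A) (Γ : ι → ι → ι → A)
    (P : ι → ι → FormAlgebra A ι) (i j : ι) : FormAlgebra A ι :=
  extDeriv D (P i j) + ∑ r, connForm Γ i r * P r j + ∑ r, connForm Γ j r * P i r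

variable {D : ι → Derivation ℝ A A} {Γ : ι → ι → ι → A}

theorem extDeriv_apply (X : FormAlgebra A ι) :
    extDeriv D X = ∑ k, dx k * partialD (D k) X := by
  simp only [extDeriv, LinearMap.sum_apply, LinearMap.comp_apply, LinearMap.mulLeft_apply]

theorem extDeriv_mem_homog {p : ℕ} {X : FormAlgebra A ι} (hX : X ∈ homog A ι p) :
    extDeriv D X ∈ homog A ι (p + 1) := by
  rw [extDeriv_apply]
  exact sum_mem fun k _ => dx_mul_mem_homog k (partialD_mem_homog (D k) hX)

theorem extDeriv_mul {s : ℝ} {X : FormAlgebra A ι} (hX : HasSign s X) (Y : FormAlgebra A ι) :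
    extDeriv D (X * Y) = extDeriv D X * Y + s • (X * extDeriv D Y) := by
  simp only [extDeriv_apply, partialD_mul, mul_add, Finset.sum_add_distrib, Finset.sum_mul,
    Finset.mul_sum, Finset.smul_sum, ← mul_assoc, hX _, smul_mul_assoc]

theorem extDeriv_contract (i : ι) (X : FormAlgebra A ι) :
    extDeriv D (contract i X) = partialD (D i) X - contract i (extDeriv D X) := by
  simp only [extDeriv_apply, map_sum, contract_dx_mul, partialD_contract, Finset.sum_sub_distrib,
    Finset.sum_ite_eq, Finset.mem_univ, if_true, sub_sub_cancel]

theorem extDeriv_partialD (hD : ∀ k l f, D k (D l f) = D l (D k f)) (i : ι) (X : FormAlgebra A ι) :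
    extDeriv D (partialD (D i) X) = partialD (D i) (extDeriv D X) := by
  simp only [extDeriv_apply, map_sum, partialD_dx_mul, partialD_comm (hD _ i)]

theorem connForm_mem_homog (m i : ι) : connForm Γ m i ∈ homog A ι 1 :=
  sum_mem fun k _ => Submodule.smul_mem _ _ (dx_mem_homog k)

theorem curvForm_mem_homog (m i : ι) : curvForm D Γ m i ∈ homog A ι 2 := by
  rw [← one_add_one_eq_two]
  exact add_mem (extDeriv_mem_homog (connForm_mem_homog m i))
    (sum_mem fun r _ => mul_mem_homog (connForm_mem_homog m r) (connForm_mem_homog r i))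

theorem covDeriv_mem_homog (i : ι) {p : ℕ} {X : FormAlgebra A ι} (hX : X ∈ homog A ι p) :
    covDeriv D Γ i X ∈ homog A ι p := by
  refine sub_mem (partialD_mem_homog (D i) hX) (sum_mem fun m _ => ?_)
  cases p with
  | zero => rw [contract_eq_zero m hX, mul_zero]; exact zero_mem _
  | succ p =>
    rw [add_comm p 1]
    exact mul_mem_homog (connForm_mem_homog m i)
      (Nat.add_sub_cancel p 1 ▸ contract_mem_homog m hX)

theorem HasSign.connForm_mul {s : ℝ} {X : FormAlgebra A ι} (hX : HasSign s X) (m i : ι) :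
    connForm Γ m i * X = s • (X * connForm Γ m i) := by
  simp only [connForm, Finset.sum_mul, Finset.mul_sum, Finset.smul_sum, smul_mul_assoc,
    mul_smul_comm, hX _, smul_comm s]

theorem covDeriv_mul (i : ι) {p : ℕ} {X : FormAlgebra A ι} (hX : X ∈ homog A ι p)
    (Y : FormAlgebra A ι) :
    covDeriv D Γ i (X * Y) = covDeriv D Γ i X * Y + X * covDeriv D Γ i Y := by
  have hsign (m : ι) (Z : FormAlgebra A ι) :
      connForm Γ m i * (-1 : ℝ) ^ p • (X * Z) = X * (connForm Γ m i * Z) := by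
    rw [mul_smul_comm, ← mul_assoc, (hasSign_of_mem_homog hX).connForm_mul, smul_mul_assoc,
      smul_smul, ← mul_pow, neg_one_mul, neg_neg, one_pow, one_smul, mul_assoc]
  simp only [covDeriv, partialD_mul, contract_mul _ hX, mul_add, hsign, Finset.sum_add_distrib,
    sub_mul, mul_sub, Finset.sum_mul, Finset.mul_sum, mul_assoc]
  abel

theorem extDeriv_contract_eq_covDeriv (i : ι) (X : FormAlgebra A ι) :
    extDeriv D (contract i X) =
      covDeriv D Γ i X - contract i (extDeriv D X) + ∑ m, connForm Γ m i * contract m X := by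
  rw [extDeriv_contract, covDeriv]
  abel

theorem extDeriv_covDeriv (hD : ∀ k l f, D k (D l f) = D l (D k f)) (i : ι) (X : FormAlgebra A ι) :
    extDeriv D (covDeriv D Γ i X) = covDeriv D Γ i (extDeriv D X)
      - ∑ m, curvForm D Γ m i * contract m X + ∑ m, connForm Γ m i * covDeriv D Γ m X := by
  have hterm (m : ι) : extDeriv D (connForm Γ m i * contract m X) =
      extDeriv D (connForm Γ m i) * contract m X - connForm Γ m i * covDeriv D Γ m X
        + connForm Γ m i * contract m (extDeriv D X)
        - ∑ r, connForm Γ m i * (connForm Γ r m * contract r X) := by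
    rw [extDeriv_mul (hasSign_of_mem_homog (connForm_mem_homog m i)), pow_one, neg_one_smul,
      extDeriv_contract_eq_covDeriv, mul_add, mul_sub, Finset.mul_sum]
    abel
  have hanti (m r : ι) : connForm Γ m i * (connForm Γ r m * contract r X) =
      -(connForm Γ r m * connForm Γ m i * contract r X) := by
    rw [← mul_assoc, (hasSign_of_mem_homog (connForm_mem_homog r m)).connForm_mul, pow_one,
      neg_one_smul, neg_mul]
  have hcov : covDeriv D Γ i (extDeriv D X) =
      partialD (D i) (extDeriv D X) - ∑ m, connForm Γ m i * contract m (extDeriv D X) := rfl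
  rw [hcov, covDeriv, map_sub, map_sum, extDeriv_partialD hD]
  simp only [hterm, hanti, curvForm, add_mul, Finset.sum_mul,
    Finset.sum_add_distrib, Finset.sum_sub_distrib, Finset.sum_neg_distrib]
  rw [Finset.sum_comm (f := fun m r => connForm Γ r m * connForm Γ m i * contract r X)]
  abel

theorem extDeriv_pairing {P : ι → ι → FormAlgebra A ι} {F F' G G' : ι → FormAlgebra A ι} {s : ℝ}
    (hP : ∀ i j, HasSign 1 (P i j)) (hF : ∀ i, HasSign s (F i))
    (hF' : ∀ i, extDeriv D (F i) = F' i + ∑ m, connForm Γ m i * F m)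
    (hG' : ∀ j, extDeriv D (G j) = G' j + ∑ m, connForm Γ m j * G m) :
    extDeriv D (pairing P F G) =
      pairing (covExtDeriv D Γ P) F G + pairing P F' G + s • pairing P F G' := by
  have hleft (i j : ι) : P i j * extDeriv D (F i) =
      P i j * F' i + ∑ m, connForm Γ m i * P i j * F m := by
    simp only [hF', mul_add, Finset.mul_sum, ← mul_assoc, (hP i j).connForm_mul, one_smul]
  have hright (i j : ι) : s • (P i j * F i * extDeriv D (G j)) =
      s • (P i j * F i * G' j) + ∑ m, connForm Γ m j * (P i j * F i) * G m := by
    simp only [hG', mul_add, Finset.mul_sum, ← mul_assoc, ((hP i j).one_mul (hF i)).connForm_mul,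
      smul_add, Finset.smul_sum, smul_mul_assoc]
  have hterm (i j : ι) : extDeriv D (P i j * F i * G j) =
      extDeriv D (P i j) * F i * G j + ∑ m, connForm Γ m i * P i j * F m * G j
        + ∑ m, connForm Γ m j * P i j * F i * G m
        + P i j * F' i * G j + s • (P i j * F i * G' j) := by
    rw [extDeriv_mul ((hP i j).one_mul (hF i)), extDeriv_mul (hP i j), one_smul, hleft, hright]
    simp only [add_mul, Finset.sum_mul, mul_assoc]
    abel
  have hswap₁ : ∑ i, ∑ j, ∑ m, connForm Γ m i * P i j * F m * G j =
      ∑ i, ∑ j, ∑ m, connForm Γ i m * P m j * F i * G j :=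
    calc _ = ∑ i, ∑ m, ∑ j, connForm Γ m i * P i j * F m * G j :=
          Finset.sum_congr rfl fun i _ => Finset.sum_comm
      _ = ∑ m, ∑ i, ∑ j, connForm Γ m i * P i j * F m * G j := Finset.sum_comm
      _ = _ := Finset.sum_congr rfl fun m _ => Finset.sum_comm
  have hswap₂ : ∑ i, ∑ j, ∑ m, connForm Γ m j * P i j * F i * G m =
      ∑ i, ∑ j, ∑ m, connForm Γ j m * P i m * F i * G j :=
    Finset.sum_congr rfl fun i _ => Finset.sum_comm
  simp only [pairing, covExtDeriv, map_sum, hterm, add_mul, Finset.sum_mul, Finset.smul_sum,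
    Finset.sum_add_distrib]
  rw [hswap₁, hswap₂]

/-- The two-forms `H^{ij} = -½ ω^{is} Ω^j_s`, where `Ω` is the curvature form. -/
noncomputable def hForm (D : ι → Derivation ℝ A A) (Γ : ι → ι → ι → A) (ω : ι → ι → A) (i j : ι) :
    FormAlgebra A ι :=
  (-2⁻¹ : ℝ) • ∑ s, ω i s • curvForm D Γ j s

/-- The first-order correction to the wedge product of a form of degree `p` with another form. -/
noncomputable def correction (D : ι → Derivation ℝ A A) (Γ : ι → ι → ι → A) (ω : ι → ι → A) (p : ℕ)
    (X Y : FormAlgebra A ι) : FormAlgebra A ι :=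
  (2⁻¹ : ℝ) • pairing (fun i j => ω i j • 1) (covDeriv D Γ · X) (covDeriv D Γ · Y)
    + (-1 : ℝ) ^ (p + 1) • pairing (hForm D Γ ω) (contract · X) (contract · Y)

/-- The obstruction to the graded Leibniz rule for the quantum wedge product, which is
`(H^{ij} - H^{ji}) ∧ (∂_i ⌟ X) ∧ ∇_j Y ∓ (DH)^{ij} ∧ (∂_i ⌟ X) ∧ (∂_j ⌟ Y)` for the covariant
exterior derivative `DH`. -/
noncomputable def leibnizDefect (D : ι → Derivation ℝ A A) (Γ : ι → ι → ι → A) (ω : ι → ι → A)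
    (p : ℕ) (X Y : FormAlgebra A ι) : FormAlgebra A ι :=
  pairing (fun i j => hForm D Γ ω i j - hForm D Γ ω j i) (contract · X) (covDeriv D Γ · Y)
    - (-1 : ℝ) ^ p • pairing (covExtDeriv D Γ (hForm D Γ ω)) (contract · X) (contract · Y)

variable {ω : ι → ι → A}

theorem hForm_mem_homog (i j : ι) : hForm D Γ ω i j ∈ homog A ι 2 :=
  Submodule.smul_of_tower_mem _ _
    (sum_mem fun s _ => Submodule.smul_mem _ _ (curvForm_mem_homog j s))

theorem correction_cocycle {p q : ℕ} {X Y : FormAlgebra A ι} (hX : X ∈ homog A ι p)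
    (hY : Y ∈ homog A ι q) (Z : FormAlgebra A ι) :
    correction D Γ ω p X Y * Z + correction D Γ ω (p + q) (X * Y) Z =
      X * correction D Γ ω q Y Z + correction D Γ ω p X (Y * Z) := by
  have hQ := pairing_cocycle (fun i j => (hasSign_smul_one (ω i j)).commute hX) Y Z
    (covDeriv D Γ · X) (covDeriv D Γ · Y) (covDeriv D Γ · Z) 1 1
  have hH := pairing_cocycle (P := hForm D Γ ω)
    (fun i j => (hasSign_one_of_mem_homog_two (hForm_mem_homog i j)).commute hX) Y Z
    (contract · X) (contract · Y) (contract · Z) ((-1) ^ p) ((-1) ^ q)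
  simp only [one_smul, mul_one, ← covDeriv_mul _ hX, ← covDeriv_mul _ hY] at hQ
  simp only [← contract_mul _ hX, ← contract_mul _ hY] at hH
  have hsign : (-1 : ℝ) ^ (p + 1) * ((-1) ^ p * (-1) ^ q) = (-1) ^ (q + 1) := by
    rw [← mul_assoc, ← pow_add, show p + 1 + p = 2 * p + 1 by ring, pow_succ, pow_mul, neg_one_sq,
      one_pow, one_mul, pow_succ']
  have hsign' : (-1 : ℝ) ^ (p + 1) * (-1) ^ q = (-1) ^ (p + q + 1) := by
    rw [← pow_add, add_right_comm]
  replace hH := congrArg ((-1 : ℝ) ^ (p + 1) • ·) hH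
  simp only [smul_add, smul_smul, hsign, hsign'] at hH
  simp only [correction, add_mul, mul_add, smul_mul_assoc, mul_smul_comm]
  rw [add_add_add_comm, ← smul_add, hQ, hH, smul_add, add_add_add_comm]

theorem covExtDeriv_smul_one (i j : ι) :
    covExtDeriv D Γ (fun i j => ω i j • 1) i j =
      ∑ m, (D m (ω i j) + ∑ k, ω k j * Γ i k m + ∑ k, ω i k * Γ j k m) • dx m := by
  have hconn (i r : ι) (f : A) :
      connForm Γ i r * f • (1 : FormAlgebra A ι) = ∑ m, (f * Γ i r m) • dx m := by
    rw [mul_smul_comm, mul_one, connForm, Finset.smul_sum]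
    simp only [smul_smul]
  have hd : extDeriv D (ω i j • 1) = ∑ m, D m (ω i j) • (dx m : FormAlgebra A ι) := by
    simp only [extDeriv_apply, partialD_smul, partialD_one, smul_zero, add_zero, mul_smul_comm,
      mul_one]
  simp only [covExtDeriv, hd, hconn, add_smul, Finset.sum_smul, Finset.sum_add_distrib]
  rw [Finset.sum_comm, Finset.sum_comm (f := fun r m => (ω i r * Γ j r m) • dx m)]

theorem sum_smul_curvForm (j k : ι) :
    ∑ s, ω k s • curvForm D Γ j s = (-2 : ℝ) • hForm D Γ ω k j := by
  rw [hForm, smul_smul]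
  norm_num

theorem pairing_curvForm_contract_left (hω : ∀ i j, ω i j = -ω j i) (X : FormAlgebra A ι)
    (G : ι → FormAlgebra A ι) :
    pairing (fun i j => ω i j • 1) (fun i => ∑ m, curvForm D Γ m i * contract m X) G =
      (2 : ℝ) • pairing (fun i j => hForm D Γ ω j i) (contract · X) G := by
  have hcoeff (j m : ι) : ∑ i, ω i j • curvForm D Γ m i = (2 : ℝ) • hForm D Γ ω j m := by
    simp only [hω _ j, neg_smul, Finset.sum_neg_distrib, sum_smul_curvForm, neg_neg]
  simp only [pairing, smul_one_mul, Finset.smul_sum, Finset.sum_mul]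
  calc ∑ i, ∑ j, ∑ m, (ω i j • (curvForm D Γ m i * contract m X)) * G j
      = ∑ m, ∑ j, ∑ i, (ω i j • (curvForm D Γ m i * contract m X)) * G j := by
        rw [Finset.sum_congr rfl fun i _ => Finset.sum_comm, Finset.sum_comm]
        exact Finset.sum_congr rfl fun m _ => Finset.sum_comm
    _ = ∑ m, ∑ j, (2 : ℝ) • (hForm D Γ ω j m * contract m X * G j) := by
        refine Finset.sum_congr rfl fun m _ => Finset.sum_congr rfl fun j _ => ?_
        simp only [← smul_mul_assoc, ← Finset.sum_mul, hcoeff]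

theorem pairing_curvForm_contract_right {p : ℕ} {F : ι → FormAlgebra A ι}
    (hF : ∀ i, F i ∈ homog A ι p) (Y : FormAlgebra A ι) :
    pairing (fun i j => ω i j • 1) F (fun j => ∑ m, curvForm D Γ m j * contract m Y) =
      (-2 : ℝ) • pairing (hForm D Γ ω) F (contract · Y) := by
  simp only [pairing, smul_one_mul, Finset.smul_sum, Finset.mul_sum]
  refine Finset.sum_congr rfl fun i _ => Finset.sum_comm.trans (Finset.sum_congr rfl fun m _ => ?_)
  have hcomm (j : ι) : (ω i j • F i) * (curvForm D Γ m j * contract m Y) =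
      ω i j • curvForm D Γ m j * F i * contract m Y := by
    rw [smul_mul_assoc, ← mul_assoc, ((hasSign_one_of_mem_homog_two
      (curvForm_mem_homog m j)).commute (hF i)).eq, smul_mul_assoc, smul_mul_assoc]
  simp only [hcomm, ← Finset.sum_mul, sum_smul_curvForm]
  simp only [smul_mul_assoc]

theorem extDeriv_correction (hD : ∀ k l f, D k (D l f) = D l (D k f)) (hω : ∀ i j, ω i j = -ω j i)
    (hcompat : ∀ i j, covExtDeriv D Γ (fun i j => ω i j • 1) i j = 0) {p : ℕ}
    {X : FormAlgebra A ι} (hX : X ∈ homog A ι p) (Y : FormAlgebra A ι) :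
    extDeriv D (correction D Γ ω p X Y) = correction D Γ ω (p + 1) (extDeriv D X) Y
      + (-1 : ℝ) ^ p • correction D Γ ω p X (extDeriv D Y)
      + leibnizDefect D Γ ω p X Y := by
  have hQ := extDeriv_pairing (fun i j => hasSign_smul_one (ω i j))
    (fun i => hasSign_of_mem_homog (covDeriv_mem_homog (D := D) (Γ := Γ) i hX))
    (fun i => extDeriv_covDeriv hD i X) (fun j => extDeriv_covDeriv hD j Y)
  have hzero : pairing (covExtDeriv D Γ fun i j => ω i j • 1) (covDeriv D Γ · X)
      (covDeriv D Γ · Y) = 0 := by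
    simp only [pairing, hcompat, zero_mul, Finset.sum_const_zero]
  have hH := extDeriv_pairing (D := D) (Γ := Γ)
    (fun i j => hasSign_one_of_mem_homog_two (hForm_mem_homog (D := D) (Γ := Γ) (ω := ω) i j))
    (fun i => hasSign_contract i hX) (fun i => extDeriv_contract_eq_covDeriv i X)
    (fun j => extDeriv_contract_eq_covDeriv j Y)
  rw [hzero, zero_add, pairing_sub_left, pairing_sub_right, pairing_curvForm_contract_left hω,
    pairing_curvForm_contract_right (fun i => covDeriv_mem_homog i hX)] at hQ
  rw [pairing_sub_left, pairing_sub_right] at hH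
  have hsq : (-1 : ℝ) ^ p * (-1) ^ p = 1 := by rw [← mul_pow, neg_one_mul, neg_neg, one_pow]
  rw [correction, map_add, map_smul, map_smul, hQ, hH, leibnizDefect, pairing_sub_coeff,
    correction, correction, pow_succ, pow_succ]
  linear_combination (norm := module) hsq • pairing (hForm D Γ ω) (contract · X) (covDeriv D Γ · Y)

end Calculus

section QuantumProduct

variable {A ι : Type*} [CommRing A] [Algebra ℝ A] [DecidableEq ι] [Fintype ι]

/-- The quantum wedge product of forms over the dual numbers `ℝ[λ]/(λ²)`. The pair `(X₀, X₁)` stands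
for `X₀ + λ X₁`, and `p` is the degree of the first factor. -/
noncomputable def quantumMul (D : ι → Derivation ℝ A A) (Γ : ι → ι → ι → A) (ω : ι → ι → A) (p : ℕ)
    (X Y : FormAlgebra A ι × FormAlgebra A ι) : FormAlgebra A ι × FormAlgebra A ι :=
  (X.1 * Y.1, X.1 * Y.2 + X.2 * Y.1 + correction D Γ ω p X.1 Y.1)

/-- The exterior derivative of forms over the dual numbers. -/
noncomputable def extDerivDual (D : ι → Derivation ℝ A A)
    (X : FormAlgebra A ι × FormAlgebra A ι) : FormAlgebra A ι × FormAlgebra A ι :=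
  (extDeriv D X.1, extDeriv D X.2)

/-- The exterior derivative satisfies the graded Leibniz rule for the quantum wedge product of
homogeneous forms. -/
def GradedLeibniz (D : ι → Derivation ℝ A A) (Γ : ι → ι → ι → A) (ω : ι → ι → A) : Prop :=
  ∀ p q, ∀ X ∈ (homog A ι p).prod (homog A ι p), ∀ Y ∈ (homog A ι q).prod (homog A ι q),
    extDerivDual D (quantumMul D Γ ω p X Y) =
      quantumMul D Γ ω (p + 1) (extDerivDual D X) Y
        + (-1 : ℝ) ^ p • quantumMul D Γ ω p X (extDerivDual D Y)

variable {D : ι → Derivation ℝ A A} {Γ : ι → ι → ι → A} {ω : ι → ι → A}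

theorem quantumMul_assoc {p q : ℕ} {X Y : FormAlgebra A ι × FormAlgebra A ι}
    (hX : X.1 ∈ homog A ι p) (hY : Y.1 ∈ homog A ι q) (Z : FormAlgebra A ι × FormAlgebra A ι) :
    quantumMul D Γ ω (p + q) (quantumMul D Γ ω p X Y) Z =
      quantumMul D Γ ω p X (quantumMul D Γ ω q Y Z) := by
  refine Prod.ext (mul_assoc _ _ _) ?_
  have h := correction_cocycle (D := D) (Γ := Γ) (ω := ω) hX hY Z.1
  simp only [quantumMul, add_mul, mul_add, mul_assoc]
  rw [add_assoc, add_assoc (_ + _), h]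
  abel

theorem extDerivDual_quantumMul (hD : ∀ k l f, D k (D l f) = D l (D k f))
    (hω : ∀ i j, ω i j = -ω j i)
    (hcompat : ∀ i j, covExtDeriv D Γ (fun i j => ω i j • 1) i j = 0) {p : ℕ}
    {X : FormAlgebra A ι × FormAlgebra A ι} (hX : X ∈ (homog A ι p).prod (homog A ι p))
    (Y : FormAlgebra A ι × FormAlgebra A ι) :
    extDerivDual D (quantumMul D Γ ω p X Y) =
      quantumMul D Γ ω (p + 1) (extDerivDual D X) Y
        + (-1 : ℝ) ^ p • quantumMul D Γ ω p X (extDerivDual D Y)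
        + (0, leibnizDefect D Γ ω p X.1 Y.1) := by
  have hsign₁ := hasSign_of_mem_homog hX.1
  have hsign₂ := hasSign_of_mem_homog hX.2
  refine Prod.ext ?_ ?_
  · simp only [quantumMul, extDerivDual, extDeriv_mul hsign₁, Prod.fst_add, Prod.smul_fst, add_zero]
  · simp only [quantumMul, extDerivDual, map_add, extDeriv_mul hsign₁, extDeriv_mul hsign₂,
      extDeriv_correction hD hω hcompat hX.1, Prod.snd_add, Prod.smul_snd, smul_add]
    abel

theorem leibnizDefect_dx_coordinate {x : ι → A} (hx : ∀ k i, D k (x i) = if k = i then 1 else 0)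
    (i j : ι) :
    leibnizDefect D Γ ω 1 (dx i) (x j • 1) = hForm D Γ ω i j - hForm D Γ ω j i := by
  simp [leibnizDefect, pairing, covDeriv, contract_dx, contract_one, partialD_smul, partialD_one,
    hx]

theorem leibnizDefect_dx_dx (hsymm : ∀ i j, hForm D Γ ω i j = hForm D Γ ω j i) (i j : ι) :
    leibnizDefect D Γ ω 1 (dx i) (dx j) = covExtDeriv D Γ (hForm D Γ ω) i j := by
  have hzero (k l : ι) : hForm D Γ ω k l - hForm D Γ ω l k = 0 := sub_eq_zero.2 (hsymm k l)
  simp [leibnizDefect, pairing, contract_dx, hzero]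

theorem gradedLeibniz_iff (hD : ∀ k l f, D k (D l f) = D l (D k f))
    (hω : ∀ i j, ω i j = -ω j i)
    (hcompat : ∀ i j, covExtDeriv D Γ (fun i j => ω i j • 1) i j = 0) {x : ι → A}
    (hx : ∀ k i, D k (x i) = if k = i then 1 else 0) :
    GradedLeibniz D Γ ω ↔
      (∀ i j, hForm D Γ ω i j = hForm D Γ ω j i) ∧
        ∀ i j, covExtDeriv D Γ (hForm D Γ ω) i j = 0 := by
  constructor
  · intro hleib
    have hdefect {q : ℕ} (i : ι) {Y : FormAlgebra A ι} (hY : Y ∈ homog A ι q) :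
        leibnizDefect D Γ ω 1 (dx i) Y = 0 := by
      have hX : ((dx i, 0) : FormAlgebra A ι × FormAlgebra A ι) ∈
          (homog A ι 1).prod (homog A ι 1) :=
        ⟨dx_mem_homog i, zero_mem _⟩
      have h := hleib 1 q _ hX (Y, 0) ⟨hY, zero_mem _⟩
      rw [extDerivDual_quantumMul hD hω hcompat hX, add_eq_left] at h
      exact congrArg Prod.snd h
    have hsymm (i j : ι) : hForm D Γ ω i j = hForm D Γ ω j i := by
      rw [← sub_eq_zero, ← leibnizDefect_dx_coordinate hx,
        hdefect i (Submodule.smul_mem _ (x j) one_mem_homog)]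
    refine ⟨hsymm, fun i j => ?_⟩
    rw [← leibnizDefect_dx_dx hsymm, hdefect i (dx_mem_homog j)]
  · rintro ⟨hsymm, hclosed⟩ p q X hX Y -
    have hdefect : leibnizDefect D Γ ω p X.1 Y.1 = 0 := by
      simp only [leibnizDefect, pairing, sub_eq_zero.2 (hsymm _ _), hclosed, zero_mul,
        Finset.sum_const_zero, smul_zero, sub_zero]
    rw [extDerivDual_quantumMul hD hω hcompat hX, hdefect, Prod.mk_zero_zero, add_zero]

end QuantumProduct

section CalculusCoeff

variable {A ι : Type*} [CommRing A] [Algebra ℝ A] [DecidableEq ι] [Fintype ι]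
  {D : ι → Derivation ℝ A A} {Γ : ι → ι → ι → A}

theorem coeff_extDeriv (p : ℕ) (a : ℕ → ι) (X : FormAlgebra A ι) :
    coeff (p + 1) a (extDeriv D X) = ∑ j : Fin (p + 1), (-1) ^ (j : ℕ) *
      D (a j) (coeff p (fun t => if t < j then a t else a (t + 1)) X) := by
  simp only [extDeriv_apply, map_sum, coeff_dx_mul]
  rw [Finset.sum_comm]
  simp only [← Finset.mul_sum, Finset.sum_ite_eq, Finset.mem_univ, if_true, map_coeff]

theorem coeff_covDeriv (i : ι) (p : ℕ) (a : ℕ → ι) (X : FormAlgebra A ι) :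
    coeff p a (covDeriv D Γ i X) = D i (coeff p a X)
      - ∑ j : Fin p, ∑ m, Γ m i (a j) * coeff p (fun t => if t = j then m else a t) X := by
  simp only [covDeriv, connForm, map_sub, map_sum, map_coeff, Finset.sum_mul, smul_mul_assoc,
    map_smul, coeff_dx_mul_contract, smul_eq_mul, Finset.mul_sum, mul_ite, mul_zero]
  rw [Finset.sum_congr rfl fun m _ => Finset.sum_comm, Finset.sum_comm]
  simp only [Finset.sum_ite_eq, Finset.mem_univ, if_true]

theorem contract_connForm (k m i : ι) : contract k (connForm Γ m i) = Γ m i k • 1 := by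
  simp only [connForm, map_sum, map_smul, contract_dx, smul_ite, smul_zero, Finset.sum_ite_eq,
    Finset.mem_univ, if_true]

theorem coeff_connForm (a : ℕ → ι) (m i : ι) : coeff 1 a (connForm Γ m i) = Γ m i (a 0) := by
  simp only [coeff, LinearMap.comp_apply, contract_connForm, map_smul, scalarPart_one, smul_eq_mul,
    mul_one]

theorem coeff_curvForm (a : ℕ → ι) (m i : ι) :
    coeff 2 a (curvForm D Γ m i) = D (a 0) (Γ m i (a 1)) - D (a 1) (Γ m i (a 0))
      + ∑ r, (Γ m r (a 0) * Γ r i (a 1) - Γ m r (a 1) * Γ r i (a 0)) := by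
  have hd : coeff 2 a (extDeriv D (connForm Γ m i)) =
      D (a 0) (Γ m i (a 1)) - D (a 1) (Γ m i (a 0)) := by
    simp [coeff_extDeriv, coeff_connForm, Fin.sum_univ_two, sub_eq_add_neg]
  have hmul (r : ι) : coeff 2 a (connForm Γ m r * connForm Γ r i) =
      Γ m r (a 0) * Γ r i (a 1) - Γ m r (a 1) * Γ r i (a 0) := by
    simp [coeff, contract_mul _ (connForm_mem_homog m r), contract_connForm, scalarPart_one,
      sub_eq_add_neg, mul_comm (Γ r i (a 0))]
  simp only [curvForm, map_add, map_sum, hd, hmul]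

end CalculusCoeff

end FormAlgebra

/-! ### Coefficient families of smooth forms -/

section SmoothFunctions

open TopologicalSpace

variable {U : Opens (Pt n)}

theorem pd_congr {f g : Pt n → ℝ} (h : Set.EqOn f g U) (i : Fin n) : Set.EqOn (pd i f) (pd i g) U :=
  fun x hx => by
    rw [pd, pd, (h.eventuallyEq_of_mem (U.isOpen.mem_nhds hx)).fderiv_eq]

theorem contDiffOn_pd {f : Pt n → ℝ} (hf : ContDiffOn ℝ (⊤ : ℕ∞) f U) (i : Fin n) :
    ContDiffOn ℝ (⊤ : ℕ∞) (pd i f) U :=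
  (hf.fderiv_of_isOpen U.isOpen (by exact_mod_cast le_top)).clm_apply contDiffOn_const

theorem pd_comm {f : Pt n → ℝ} (hf : ContDiffOn ℝ (⊤ : ℕ∞) f U) (i j : Fin n) :
    Set.EqOn (pd i (pd j f)) (pd j (pd i f)) U := by
  intro x hx
  have hx' : (U : Set (Pt n)) ∈ nhds x := U.isOpen.mem_nhds hx
  have hdiff : DifferentiableAt ℝ (fderiv ℝ f) x :=
    (((hf.fderiv_of_isOpen U.isOpen (m := (⊤ : ℕ∞)) (by exact_mod_cast le_top)).contDiffAt
      hx').differentiableAt (by simp))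
  have hsecond (k l : Fin n) :
      pd k (pd l f) x = fderiv ℝ (fderiv ℝ f) x (Pi.single k 1) (Pi.single l 1) := by
    unfold pd
    rw [fderiv_clm_apply hdiff (differentiableAt_const _)]
    simp
  rw [hsecond, hsecond]
  exact (hf.contDiffAt hx').isSymmSndFDerivAt
    (by simpa using WithTop.coe_le_coe.2 (le_top : (2 : ℕ∞) ≤ ⊤)) _ _

/-- The extension by zero of a function on `U`, through which functions on `U` are
differentiated. -/
noncomputable def extendZero : (U → ℝ) →ₗ[ℝ] Pt n → ℝ :=
  Function.ExtendByZero.linearMap ℝ Subtype.val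

theorem extendZero_apply (f : U → ℝ) {x : Pt n} (hx : x ∈ U) : extendZero f x = f ⟨x, hx⟩ :=
  Subtype.val_injective.extend_apply f 0 ⟨x, hx⟩

theorem extendZero_mul (f g : U → ℝ) : extendZero (f * g) = extendZero f * extendZero g := by
  have h := Function.extend_mul (Subtype.val : U → Pt n) f g 0 0
  rwa [mul_zero] at h

variable (U) in
/-- The algebra of smooth functions on `U`. -/
noncomputable def smoothFunctions : Subalgebra ℝ (U → ℝ) where
  carrier := {f | ContDiffOn ℝ (⊤ : ℕ∞) (extendZero f) U}
  mul_mem' {f g} hf hg := by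
    rw [Set.mem_ofPred_eq, extendZero_mul]
    exact hf.mul hg
  add_mem' {f g} hf hg := by
    rw [Set.mem_ofPred_eq, map_add]
    exact hf.add hg
  algebraMap_mem' c := (contDiffOn_const (c := c)).congr fun x hx => extendZero_apply _ hx

/-- The type of smooth functions on `U`. It is not reducible to the subalgebra because unifying the
algebraic structures of a subalgebra of a function space is expensive. -/
def SmoothFun (U : Opens (Pt n)) : Type :=
  smoothFunctions U

noncomputable instance : CommRing (SmoothFun U) :=
  inferInstanceAs (CommRing (smoothFunctions U))

noncomputable instance : Algebra ℝ (SmoothFun U) :=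
  inferInstanceAs (Algebra ℝ (smoothFunctions U))

namespace SmoothFun

/-- The inclusion of the smooth functions into all functions on `U`. -/
noncomputable def val : SmoothFun U →ₐ[ℝ] U → ℝ :=
  (smoothFunctions U).val

theorem contDiffOn_extendZero (f : SmoothFun U) : ContDiffOn ℝ (⊤ : ℕ∞) (extendZero (val f)) U :=
  Subtype.prop (p := (· ∈ smoothFunctions U)) f

theorem differentiableAt_extendZero (f : SmoothFun U) (x : U) :
    DifferentiableAt ℝ (extendZero (val f)) x :=
  (f.contDiffOn_extendZero.contDiffAt (U.isOpen.mem_nhds x.2)).differentiableAt (by simp)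

end SmoothFun

/-- The value of a smooth function on `U` at a point. -/
noncomputable def evalAt (x : U) : SmoothFun U →ₐ[ℝ] ℝ :=
  (Pi.evalAlgHom ℝ _ x).comp SmoothFun.val

@[ext]
theorem SmoothFun.ext {f g : SmoothFun U} (h : ∀ x, evalAt x f = evalAt x g) : f = g :=
  Subtype.ext (funext h)

/-- The restriction to `U` of a function which is smooth on `U`. -/
def restrictSmooth (f : Pt n → ℝ) (hf : ContDiffOn ℝ (⊤ : ℕ∞) f U) : SmoothFun U :=
  ⟨fun x => f x, hf.congr fun _ hx => extendZero_apply _ hx⟩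

theorem evalAt_restrictSmooth {f : Pt n → ℝ} (hf : ContDiffOn ℝ (⊤ : ℕ∞) f U) (x : U) :
    evalAt x (restrictSmooth f hf) = f x :=
  rfl

theorem extendZero_val_apply (f : SmoothFun U) (x : U) : extendZero f.val x = evalAt x f :=
  extendZero_apply _ x.2

/-- The partial derivative `∂_i` as a derivation of the algebra of smooth functions. -/
noncomputable def partialDeriv (i : Fin n) : Derivation ℝ (SmoothFun U) (SmoothFun U) :=
  Derivation.mk'
    { toFun := fun f => restrictSmooth (pd i (extendZero f.val))
        (contDiffOn_pd f.contDiffOn_extendZero i)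
      map_add' := fun f g => by
        ext x
        simp only [evalAt_restrictSmooth, pd, map_add,
          fderiv_add (f.differentiableAt_extendZero x) (g.differentiableAt_extendZero x),
          add_apply]
      map_smul' := fun c f => by
        ext x
        simp only [evalAt_restrictSmooth, pd, map_smul,
          fderiv_const_smul (f.differentiableAt_extendZero x), smul_apply, RingHom.id_apply] }
    fun f g => by
      ext x
      simp only [LinearMap.coe_mk, AddHom.coe_mk, evalAt_restrictSmooth, pd, map_mul, map_add,
        extendZero_mul, smul_eq_mul, extendZero_val_apply,
        fderiv_mul (f.differentiableAt_extendZero x) (g.differentiableAt_extendZero x),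
        add_apply, smul_apply]

theorem pd_eq_partialDeriv {f : Pt n → ℝ} {g : SmoothFun U} (h : ∀ x : U, f x = evalAt x g)
    (i : Fin n) (x : U) : pd i f x = evalAt x (partialDeriv i g) :=
  pd_congr (fun y hy => (h ⟨y, hy⟩).trans (extendZero_val_apply g ⟨y, hy⟩).symm) i x.2

theorem partialDeriv_comm (i j : Fin n) (f : SmoothFun U) :
    partialDeriv i (partialDeriv j f) = partialDeriv j (partialDeriv i f) := by
  ext x
  calc evalAt x (partialDeriv i (partialDeriv j f)) = pd i (pd j (extendZero f.val)) x :=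
        (pd_eq_partialDeriv (fun _ => rfl) i x).symm
    _ = pd j (pd i (extendZero f.val)) x := pd_comm f.contDiffOn_extendZero i j x.2
    _ = evalAt x (partialDeriv j (partialDeriv i f)) := pd_eq_partialDeriv (fun _ => rfl) j x

end SmoothFunctions

section Represents

open TopologicalSpace FormAlgebra

variable {U : Opens (Pt n)}

/-- The algebra of forms on `U` with smooth coefficients. -/
abbrev SmoothForms (U : Opens (Pt n)) := FormAlgebra (SmoothFun U) (Fin n)

/-- The form `X` is of degree `p` and has the coefficient family `ξ` on `U`. -/
def Represents (p : ℕ) (X : SmoothForms U) (ξ : Form n) : Prop :=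
  X ∈ homog _ _ p ∧ ∀ a (x : U), ξ a x = evalAt x (coeff p a X)

namespace Represents

variable {p q : ℕ} {X Y : SmoothForms U} {ξ η : Form n}

theorem apply_eq (hX : Represents p X ξ) (hY : Represents p X η) (a : ℕ → Fin n) (x : U) :
    ξ a x = η a x :=
  (hX.2 a x).trans (hY.2 a x).symm

theorem eq_iff [Nonempty (Fin n)] (hX : Represents p X ξ) (hY : Represents p Y η) :
    X = Y ↔ ∀ a, ∀ x ∈ U, ξ a x = η a x := by
  refine ⟨fun h a x hx => hX.apply_eq (h ▸ hY) a ⟨x, hx⟩, fun h => ?_⟩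
  have hcoeff (a : ℕ → Fin n) : coeff p a X = coeff p a Y :=
    SmoothFun.ext fun x => (hX.2 a x).symm.trans ((h a x x.2).trans (hY.2 a x))
  obtain ⟨i⟩ := ‹Nonempty (Fin n)›
  rw [eq_sum_coeff_smul_monomial hX.1 fun _ => i, eq_sum_coeff_smul_monomial hY.1 fun _ => i]
  simp only [hcoeff]

theorem zero (p : ℕ) : Represents p (0 : SmoothForms U) 0 :=
  ⟨zero_mem _, fun a x => by rw [map_zero, map_zero]; rfl⟩

theorem of_eq_zero (hX : Represents p X ξ) (h : X = 0) (q : ℕ) : Represents q X ξ := by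
  subst h
  refine ⟨zero_mem _, fun a x => ?_⟩
  simp only [hX.2, map_zero]

theorem add (hX : Represents p X ξ) (hY : Represents p Y η) : Represents p (X + Y) (ξ + η) :=
  ⟨add_mem hX.1 hY.1, fun a x => by simp only [map_add, ← hX.2, ← hY.2, Pi.add_apply]⟩

theorem smul (c : ℝ) (hX : Represents p X ξ) : Represents p (c • X) (c • ξ) :=
  ⟨Submodule.smul_of_tower_mem _ c hX.1, fun a x => by
    simp only [LinearMap.map_smul_of_tower, map_smul, ← hX.2, Pi.smul_apply]⟩

theorem sum {X : Fin n → SmoothForms U} {ξ : Fin n → Form n} (h : ∀ i, Represents p (X i) (ξ i)) :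
    Represents p (∑ i, X i) (∑ i, ξ i) :=
  ⟨sum_mem fun i _ => (h i).1, fun a x => by simp only [map_sum, ← (h _).2, Finset.sum_apply]⟩

theorem fmul {f : Pt n → ℝ} {f' : SmoothFun U} (hf : ∀ x : U, f x = evalAt x f')
    (hX : Represents p X ξ) : Represents p (f' • X) (fmul f ξ) :=
  ⟨Submodule.smul_mem _ _ hX.1, fun a x => by
    simp only [Stmt9.fmul, map_smul, smul_eq_mul, map_mul, hf, hX.2]⟩

theorem wedge (hX : Represents p X ξ) (hY : Represents q Y η) :
    Represents (p + q) (X * Y) (wedge p q ξ η) := by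
  refine ⟨mul_mem_homog hX.1 hY.1, fun a x => ?_⟩
  have hextend {r : ℕ} (b : Fin r → Fin n) :
      Function.extend Fin.val b a = fun t => if h : t < r then b ⟨t, h⟩ else a t := by
    funext t
    split_ifs with h
    · exact Fin.val_injective.extend_apply b a ⟨t, h⟩
    · exact Function.extend_apply' _ _ _ fun ⟨s, hs⟩ => h (hs ▸ s.2)
  rw [coeff_mul hX.1 hY.1 a]
  simp only [map_smul, map_sum, map_mul, map_intCast, ← hX.2, ← hY.2, hextend, smul_eq_mul]
  rfl

theorem extd (hX : Represents p X ξ) : Represents (p + 1) (extDeriv partialDeriv X) (extd p ξ) := by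
  refine ⟨extDeriv_mem_homog hX.1, fun a x => ?_⟩
  simp only [coeff_extDeriv, map_sum, map_mul, map_pow, map_neg, map_one,
    ← pd_eq_partialDeriv (hX.2 _)]
  rfl

theorem nabla {Γ : Fin n → Fin n → Fin n → Pt n → ℝ}
    {Γ' : Fin n → Fin n → Fin n → SmoothFun U}
    (hΓ : ∀ i j k (x : U), Γ i j k x = evalAt x (Γ' i j k)) (i : Fin n) (hX : Represents p X ξ) :
    Represents p (covDeriv partialDeriv Γ' i X) (nabla Γ i p ξ) := by
  refine ⟨covDeriv_mem_homog i hX.1, fun a x => ?_⟩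
  simp only [Stmt9.nabla, coeff_covDeriv, map_sub, map_sum, map_mul, ← hΓ, ← hX.2,
    ← pd_eq_partialDeriv (hX.2 _)]

theorem intr (m : Fin n) (hX : Represents p X ξ) :
    Represents (p - 1) (contract m X) (intr p m ξ) := by
  cases p with
  | zero => rw [contract_eq_zero m hX.1]; exact zero 0
  | succ p => exact ⟨contract_mem_homog m hX.1, fun a x => hX.2 _ x⟩

end Represents

theorem IsPForm.apply_perm {p : ℕ} {ξ : Form n} (hξ : IsPForm (U : Set (Pt n)) p ξ)
    (σ : Equiv.Perm (Fin p)) (a c : ℕ → Fin n) (x : Pt n) :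
    ξ (Function.extend Fin.val (fun t => a (σ t)) c) x = ((Equiv.Perm.sign σ : ℤ) : ℝ) * ξ a x := by
  induction σ using Equiv.Perm.swap_induction_on generalizing a with
  | one =>
    have h : ξ (Function.extend Fin.val (fun t : Fin p => a t) c) = ξ a :=
      hξ.1 _ _ fun t ht => Fin.val_injective.extend_apply (fun t : Fin p => a t) c ⟨t, ht⟩
    simp only [Equiv.Perm.one_apply, h, map_one, Units.val_one, Int.cast_one, one_mul]
  | swap_mul σ i j hij ih =>
    have h := ih fun t => a (Equiv.swap (i : ℕ) j t)
    simp only [Fin.val_injective.swap_apply] at h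
    rw [Equiv.Perm.sign_mul, Equiv.Perm.sign_swap hij]
    simp only [Equiv.Perm.mul_apply, h, hξ.2.1 a i j i.2 j.2 (Fin.val_injective.ne hij),
      Units.val_neg, one_mul, Int.cast_neg, mul_neg, neg_mul]

theorem IsPForm.exists_represents {p : ℕ} {ξ : Form n} (hξ : IsPForm (U : Set (Pt n)) p ξ) :
    ∃ X : SmoothForms U, Represents p X ξ := by
  rcases isEmpty_or_nonempty (Fin n) with _ | ⟨⟨i⟩⟩
  · exact ⟨0, zero_mem _, fun a => isEmptyElim (a 0)⟩
  let ξ' (b : Fin p → Fin n) : SmoothFun U :=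
    restrictSmooth (ξ (Function.extend Fin.val b fun _ => i)) (hξ.2.2 _)
  have hξ' (a : ℕ → Fin n) (x : U) (σ : Equiv.Perm (Fin p)) :
      ((Equiv.Perm.sign σ : ℤ) : ℝ) * evalAt x (ξ' fun t => a (σ t)) = ξ a x := by
    rw [show evalAt x (ξ' fun t => a (σ t)) = _ from hξ.apply_perm σ a _ x, ← mul_assoc,
      ← Int.cast_mul, ← Units.val_mul, Int.units_mul_self, Units.val_one, Int.cast_one, one_mul]
  refine ⟨(p.factorial : ℝ)⁻¹ • ∑ b, ξ' b • monomial b,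
    Submodule.smul_of_tower_mem _ _
      (sum_mem fun b _ => Submodule.smul_mem _ _ (monomial_mem_homog b)), fun a x => ?_⟩
  simp only [LinearMap.map_smul_of_tower, map_sum, map_smul, map_zero,
    coeff_monomial_eq_sum_perm, smul_eq_mul, Finset.mul_sum, mul_ite, mul_zero,
    apply_ite (evalAt x)]
  rw [Finset.sum_comm]
  simp only [Finset.sum_ite_eq', Finset.mem_univ, if_true, map_mul, map_intCast,
    mul_comm (evalAt x _), hξ', Finset.sum_const, Finset.card_univ, Fintype.card_perm,
    Fintype.card_fin, nsmul_eq_mul]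
  exact (mul_inv_cancel_left₀ (Nat.cast_ne_zero.2 p.factorial_ne_zero) _).symm

theorem exists_isPForm_represents {p : ℕ} {X : SmoothForms U} (hX : X ∈ homog _ _ p) :
    ∃ ξ : Form n, IsPForm (U : Set (Pt n)) p ξ ∧ Represents p X ξ := by
  refine ⟨fun a => extendZero (coeff p a X).val,
    ⟨?_, ?_, fun a => (coeff p a X).contDiffOn_extendZero⟩,
    hX, fun a x => extendZero_val_apply (coeff p a X) x⟩
  · intro a b h
    simp only [coeff_congr h]
  · intro a i j hi hj hij x
    have hne : (⟨i, hi⟩ : Fin p) ≠ ⟨j, hj⟩ := fun h => hij (congrArg Fin.val h)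
    have h : coeff p (fun t => a (Equiv.swap i j t)) X = -coeff p a X := coeff_swap hX a hne
    dsimp only
    rw [h, map_neg, map_neg, Pi.neg_apply]

section Data

variable {ω : Fin n → Fin n → Pt n → ℝ} {Γ : Fin n → Fin n → Fin n → Pt n → ℝ}
  {ω' : Fin n → Fin n → SmoothFun U} {Γ' : Fin n → Fin n → Fin n → SmoothFun U}

theorem represents_gammaOne (hΓ : ∀ i j k (x : U), Γ i j k x = evalAt x (Γ' i j k)) (i j : Fin n) :
    Represents 1 (connForm Γ' i j) (GammaOne Γ i j) :=
  ⟨connForm_mem_homog i j, fun a x => by rw [coeff_connForm, ← hΓ]; rfl⟩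

theorem covT_sub_two_mul_Rc_antisymm (hΓ : ∀ i j k (x : U), Γ i j k x = evalAt x (Γ' i j k))
    (a : ℕ → Fin n) (j s : Fin n) (x : U) :
    (covT Γ j (a 1) (a 0) s x - 2 * Rc Γ j (a 1) (a 0) s x)
      - (covT Γ j (a 0) (a 1) s x - 2 * Rc Γ j (a 0) (a 1) s x) =
      -2 * evalAt x (coeff 2 a (curvForm partialDeriv Γ' j s)) := by
  have hpd (i j k l : Fin n) : pd l (Γ i j k) x = evalAt x (partialDeriv l (Γ' i j k)) :=
    pd_eq_partialDeriv (hΓ i j k) l x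
  have hTor (i j k l : Fin n) : pd l (Tor Γ i j k) x = pd l (Γ i j k) x - pd l (Γ i k j) x := by
    rw [hpd, hpd, ← map_sub, ← map_sub]
    exact pd_eq_partialDeriv (fun y => by rw [map_sub, ← hΓ, ← hΓ]; rfl) l x
  simp only [covT, Rc, hTor, Tor, coeff_curvForm, map_add, map_sub, map_sum, map_mul, ← hpd, ← hΓ,
    mul_sub, sub_mul, Finset.sum_sub_distrib, mul_comm]
  ring

theorem represents_hform (hω : ∀ i j (x : U), ω i j x = evalAt x (ω' i j))
    (hΓ : ∀ i j k (x : U), Γ i j k x = evalAt x (Γ' i j k)) (i j : Fin n) :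
    Represents 2 (hForm partialDeriv Γ' ω' i j) (Hform ω Γ i j) := by
  refine ⟨hForm_mem_homog i j, fun a x => ?_⟩
  simp only [Hform, covT_sub_two_mul_Rc_antisymm hΓ, hForm, LinearMap.map_smul_of_tower, map_smul,
    map_sum, smul_eq_mul, map_mul, ← hω, Finset.mul_sum]
  exact Finset.sum_congr rfl fun s _ => by ring

end Data

end Represents

section Transfer

open TopologicalSpace FormAlgebra

variable {U : Opens (Pt n)} {p q : ℕ}

variable (U) in
/-- The coordinate function `x^i` on `U`. -/
def coordinate (i : Fin n) : SmoothFun U :=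
  restrictSmooth (fun x => x i) (contDiff_apply ℝ ℝ i).contDiffOn

theorem partialDeriv_coordinate (k i : Fin n) :
    partialDeriv k (coordinate U i) = if k = i then 1 else 0 := by
  ext x
  calc evalAt x (partialDeriv k (coordinate U i)) = pd k (fun y => y i) x :=
        (pd_eq_partialDeriv (fun _ => rfl) k x).symm
    _ = if k = i then 1 else 0 := by
        rw [pd, (hasFDerivAt_apply i x.1).fderiv, ContinuousLinearMap.proj_apply, Pi.single_apply]
        simp only [eq_comm]
    _ = evalAt x (if k = i then 1 else 0) := by rw [apply_ite (evalAt x), map_one, map_zero]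

variable {ω : Fin n → Fin n → Pt n → ℝ} {Γ : Fin n → Fin n → Fin n → Pt n → ℝ}
  {ω' : Fin n → Fin n → SmoothFun U} {Γ' : Fin n → Fin n → Fin n → SmoothFun U}

theorem Represents.correction (hω : ∀ i j (x : U), ω i j x = evalAt x (ω' i j))
    (hΓ : ∀ i j k (x : U), Γ i j k x = evalAt x (Γ' i j k)) {X Y : SmoothForms U} {ξ η : Form n}
    (hX : Represents p X ξ) (hY : Represents q Y η) :
    Represents (p + q) (correction partialDeriv Γ' ω' p X Y)
      (Qcorr ω Γ p q ξ η + HatCorr ω Γ p q ξ η) := by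
  refine .add (.smul _ (.sum fun i => .sum fun j => ?_))
    (.smul _ (.sum fun i => .sum fun j => ?_))
  · rw [smul_one_mul, smul_mul_assoc]
    exact ((hX.nabla hΓ i).wedge (hY.nabla hΓ j)).fmul (hω i j)
  · have h := ((represents_hform hω hΓ i j).wedge (hX.intr i)).wedge (hY.intr j)
    rcases p.eq_zero_or_pos with rfl | hp
    · exact h.of_eq_zero (by rw [contract_eq_zero i hX.1, mul_zero, zero_mul]) _
    rcases q.eq_zero_or_pos with rfl | hq
    · exact h.of_eq_zero (by rw [contract_eq_zero j hY.1, mul_zero]) _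
    rwa [show 2 + (p - 1) + (q - 1) = p + q by omega] at h

/-- `Represents` for the two components of a form with coefficients in `ℝ[λ]/(λ²)`. -/
def RepresentsL (p : ℕ) (X : SmoothForms U × SmoothForms U) (ξ : FormL n) : Prop :=
  Represents p X.1 ξ.1 ∧ Represents p X.2 ξ.2

namespace RepresentsL

variable {X Y : SmoothForms U × SmoothForms U} {ξ η : FormL n}

theorem mem_prod_homog (hX : RepresentsL p X ξ) : X ∈ (homog _ _ p).prod (homog _ _ p) :=
  ⟨hX.1.1, hX.2.1⟩

theorem eq_iff [Nonempty (Fin n)] (hX : RepresentsL p X ξ) (hY : RepresentsL p Y η) :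
    X = Y ↔ ∀ a, ∀ x ∈ U, ξ.1 a x = η.1 a x ∧ ξ.2 a x = η.2 a x := by
  simp only [Prod.ext_iff, hX.1.eq_iff hY.1, hX.2.eq_iff hY.2, forall_and]

theorem extdL (hX : RepresentsL p X ξ) :
    RepresentsL (p + 1) (extDerivDual partialDeriv X) (extdL p ξ) :=
  ⟨hX.1.extd, hX.2.extd⟩

theorem add (hX : RepresentsL p X ξ) (hY : RepresentsL p Y η) : RepresentsL p (X + Y) (ξ + η) :=
  ⟨hX.1.add hY.1, hX.2.add hY.2⟩

theorem smul (c : ℝ) (hX : RepresentsL p X ξ) : RepresentsL p (c • X) (c • ξ) :=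
  ⟨hX.1.smul c, hX.2.smul c⟩

theorem wedge1 (hω : ∀ i j (x : U), ω i j x = evalAt x (ω' i j))
    (hΓ : ∀ i j k (x : U), Γ i j k x = evalAt x (Γ' i j k)) (hX : RepresentsL p X ξ)
    (hY : RepresentsL q Y η) :
    RepresentsL (p + q) (quantumMul partialDeriv Γ' ω' p X Y) (wedge1 ω Γ p q ξ η) := by
  refine ⟨hX.1.wedge hY.1, ?_⟩
  rw [Stmt9.wedge1, add_assoc (_ + _)]
  exact ((hX.1.wedge hY.2).add (hX.2.wedge hY.1)).add (hX.1.correction hω hΓ hY.1)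

end RepresentsL

theorem IsPFormL.exists_representsL {ξ : FormL n} (hξ : IsPFormL (U : Set (Pt n)) p ξ) :
    ∃ X : SmoothForms U × SmoothForms U, RepresentsL p X ξ := by
  obtain ⟨X₀, h₀⟩ := hξ.1.exists_represents
  obtain ⟨X₁, h₁⟩ := hξ.2.exists_represents
  exact ⟨(X₀, X₁), h₀, h₁⟩

theorem exists_isPFormL_representsL {X : SmoothForms U × SmoothForms U}
    (hX : X ∈ (homog _ _ p).prod (homog _ _ p)) :
    ∃ ξ : FormL n, IsPFormL (U : Set (Pt n)) p ξ ∧ RepresentsL p X ξ := by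
  obtain ⟨ξ₀, hξ₀, h₀⟩ := exists_isPForm_represents hX.1
  obtain ⟨ξ₁, hξ₁, h₁⟩ := exists_isPForm_represents hX.2
  exact ⟨(ξ₀, ξ₁), ⟨hξ₀, hξ₁⟩, h₀, h₁⟩

theorem wedgeAssoc (hω : ∀ i j (x : U), ω i j x = evalAt x (ω' i j))
    (hΓ : ∀ i j k (x : U), Γ i j k x = evalAt x (Γ' i j k)) : WedgeAssoc (U : Set (Pt n)) ω Γ := by
  intro p q r ξ η ζ hξ hη hζ a x hx
  obtain ⟨X, hX⟩ := hξ.exists_representsL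
  obtain ⟨Y, hY⟩ := hη.exists_representsL
  obtain ⟨Z, hZ⟩ := hζ.exists_representsL
  have hleft := (hX.wedge1 hω hΓ hY).wedge1 hω hΓ hZ
  have hright := hX.wedge1 hω hΓ (hY.wedge1 hω hΓ hZ)
  rw [quantumMul_assoc hX.1.1 hY.1.1, add_assoc p q r] at hleft
  exact ⟨hleft.1.apply_eq hright.1 a ⟨x, hx⟩, hleft.2.apply_eq hright.2 a ⟨x, hx⟩⟩

theorem covExtDeriv_eq_zero_of_poissonCompat (hω : ∀ i j (x : U), ω i j x = evalAt x (ω' i j))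
    (hΓ : ∀ i j k (x : U), Γ i j k x = evalAt x (Γ' i j k))
    (h : PoissonCompat (U : Set (Pt n)) ω Γ) (i j : Fin n) :
    covExtDeriv partialDeriv Γ' (fun i j => ω' i j • 1) i j = 0 := by
  rw [covExtDeriv_smul_one]
  refine Finset.sum_eq_zero fun m _ => ?_
  have hm : partialDeriv m (ω' i j) + ∑ k, ω' k j * Γ' i k m + ∑ k, ω' i k * Γ' j k m = 0 := by
    ext x
    calc evalAt x (partialDeriv m (ω' i j) + ∑ k, ω' k j * Γ' i k m + ∑ k, ω' i k * Γ' j k m)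
        = pd m (ω i j) x + ∑ k, ω k j x * Γ i k m x + ∑ k, ω i k x * Γ j k m x := by
          simp only [map_add, map_sum, map_mul, ← hω, ← hΓ, ← pd_eq_partialDeriv (hω i j)]
      _ = 0 := h i j m x x.2
  rw [hm, zero_smul]

theorem represents_covExtDeriv_hForm (hω : ∀ i j (x : U), ω i j x = evalAt x (ω' i j))
    (hΓ : ∀ i j k (x : U), Γ i j k x = evalAt x (Γ' i j k)) (i j : Fin n) :
    Represents 3 (covExtDeriv partialDeriv Γ' (hForm partialDeriv Γ' ω') i j)
      (extd 2 (Hform ω Γ i j) + ∑ r, wedge 1 2 (GammaOne Γ i r) (Hform ω Γ r j)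
        + ∑ r, wedge 1 2 (GammaOne Γ j r) (Hform ω Γ i r)) := by
  have hH := represents_hform hω hΓ
  have hγ := represents_gammaOne hΓ
  have hd : Represents 3 (extDeriv partialDeriv (hForm partialDeriv Γ' ω' i j))
    (extd 2 (Hform ω Γ i j)) := (hH i j).extd
  have hleft (r : Fin n) : Represents (1 + 2) (connForm Γ' i r * hForm partialDeriv Γ' ω' r j)
    (wedge 1 2 (GammaOne Γ i r) (Hform ω Γ r j)) := (hγ i r).wedge (hH r j)
  have hright (r : Fin n) : Represents (1 + 2) (connForm Γ' j r * hForm partialDeriv Γ' ω' i r)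
    (wedge 1 2 (GammaOne Γ j r) (Hform ω Γ i r)) := (hγ j r).wedge (hH i r)
  exact (hd.add (.sum hleft)).add (.sum hright)

variable [Nonempty (Fin n)]

theorem leibnizRule_iff (hω : ∀ i j (x : U), ω i j x = evalAt x (ω' i j))
    (hΓ : ∀ i j k (x : U), Γ i j k x = evalAt x (Γ' i j k)) :
    LeibnizRule (U : Set (Pt n)) ω Γ ↔ GradedLeibniz partialDeriv Γ' ω' := by
  have heq {p q : ℕ} {X Y : SmoothForms U × SmoothForms U} {ξ η : FormL n}
      (hX : RepresentsL p X ξ) (hY : RepresentsL q Y η) :=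
    (hX.wedge1 hω hΓ hY).extdL.eq_iff
      ((add_right_comm p 1 q ▸ hX.extdL.wedge1 hω hΓ hY).add
        ((hX.wedge1 hω hΓ hY.extdL).smul ((-1) ^ p)))
  constructor
  · intro h p q X hX Y hY
    obtain ⟨ξ, hξ, hXξ⟩ := exists_isPFormL_representsL hX
    obtain ⟨η, hη, hYη⟩ := exists_isPFormL_representsL hY
    exact (heq hXξ hYη).2 (h p q ξ η hξ hη)
  · intro h p q ξ η hξ hη
    obtain ⟨X, hX⟩ := hξ.exists_representsL
    obtain ⟨Y, hY⟩ := hη.exists_representsL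
    exact (heq hX hY).1 (h p q X hX.mem_prod_homog Y hY.mem_prod_homog)

theorem hSymm_iff (hω : ∀ i j (x : U), ω i j x = evalAt x (ω' i j))
    (hΓ : ∀ i j k (x : U), Γ i j k x = evalAt x (Γ' i j k)) :
    HSymm (U : Set (Pt n)) ω Γ ↔
      ∀ i j, hForm partialDeriv Γ' ω' i j = hForm partialDeriv Γ' ω' j i :=
  forall₂_congr fun i j =>
    ((represents_hform hω hΓ i j).eq_iff (represents_hform hω hΓ j i)).symm

theorem hClosed_iff (hω : ∀ i j (x : U), ω i j x = evalAt x (ω' i j))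
    (hΓ : ∀ i j k (x : U), Γ i j k x = evalAt x (Γ' i j k)) :
    HClosed (U : Set (Pt n)) ω Γ ↔
      ∀ i j, covExtDeriv partialDeriv Γ' (hForm partialDeriv Γ' ω') i j = 0 :=
  forall₂_congr fun i j => ((represents_covExtDeriv_hForm hω hΓ i j).eq_iff (.zero 3)).symm

end Transfer

/-- for Poisson-compatible `(ω, ∇)`, the product `∧₁` is associative, and
the undeformed `d` satisfies the graded Leibniz rule for `∧₁` if and only if
`H^{ij} = H^{ji}` and `dH^{ij} + Γ^i_{rp} dx^p ∧ H^{rj} + Γ^j_{rp} dx^p ∧ H^{ir} = 0`. -/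
theorem statement_9 (U : Set (Pt n)) (hU : IsOpen U)
    (ω : Fin n → Fin n → Pt n → ℝ)
    (Γ : Fin n → Fin n → Fin n → Pt n → ℝ)
    (hωs : ∀ i j, ContDiffOn ℝ (⊤ : ℕ∞) (ω i j) U)
    (hΓs : ∀ i j k, ContDiffOn ℝ (⊤ : ℕ∞) (Γ i j k) U)
    (hanti : ∀ i j, ∀ x ∈ U, ω i j x = - ω j i x)
    (hpc : PoissonCompat U ω Γ) :
    WedgeAssoc U ω Γ ∧
    (LeibnizRule U ω Γ ↔ (HSymm U ω Γ ∧ HClosed U ω Γ)) := by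
  lift U to TopologicalSpace.Opens (Pt n) using hU
  let ω' (i j : Fin n) : SmoothFun U := restrictSmooth (ω i j) (hωs i j)
  let Γ' (i j k : Fin n) : SmoothFun U := restrictSmooth (Γ i j k) (hΓs i j k)
  have hω (i j : Fin n) (x : U) : ω i j x = evalAt x (ω' i j) := rfl
  have hΓ (i j k : Fin n) (x : U) : Γ i j k x = evalAt x (Γ' i j k) := rfl
  refine ⟨wedgeAssoc hω hΓ, ?_⟩
  rcases isEmpty_or_nonempty (Fin n) with _ | _
  · exact iff_of_true (fun _ _ _ _ _ _ a => isEmptyElim (a 0)) ⟨isEmptyElim, isEmptyElim⟩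
  have hω'anti (i j : Fin n) : ω' i j = -ω' j i := SmoothFun.ext fun x => by
    rw [map_neg, ← hω, ← hω, hanti i j x x.2]
  rw [leibnizRule_iff hω hΓ, hSymm_iff hω hΓ, hClosed_iff hω hΓ]
  exact FormAlgebra.gradedLeibniz_iff partialDeriv_comm hω'anti
    (covExtDeriv_eq_zero_of_poissonCompat hω hΓ hpc) partialDeriv_coordinate

end Stmt9
end
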